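/- For every R > 0 the function R ↦ λ_R := λ₁(Γ_R) is differentiable and its derivative is given by the Dauge–Helffer type formula ∂_R λ_R = ∫_{Σ_R} (|∂_τ v_R|² − λ_R |v_R|²) dτ, i.e. ∂_R λ_R = ∫_I (|∂₂ v_R(R,x₂)|² − λ_R |v_R(R,x₂)|²) dx₂ + ∫_I (|∂₁ v_R(x₁,R)|² − λ_R |v_R(x₁,R)|²) dx₁, where v_R is the positive normalized first eigenfunction on Γ_R. -/

import Mathlib

noncomputable section
open MeasureTheory Set Real

/-- The interval `I = (-1,0)`. -/
def II : Set ℝ := Set.Ioo (-1) 0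

/-- The broken guide `Γ = {x ∈ ℝ² : -1 < min(x₁,x₂) < 0}`. -/
def Gam : Set (ℝ × ℝ) := {p | -1 < min p.1 p.2 ∧ min p.1 p.2 < 0}

/-- The box `□_L = {x : max(|x₁+1|,|x₂+1|) < L}`. -/
def Box (L : ℝ) : Set (ℝ × ℝ) := {p | |p.1 + 1| < L ∧ |p.2 + 1| < L}

/-- The finite guide `Γ_R = Γ ∩ □_{R+1}`. -/
def GamR (R : ℝ) : Set (ℝ × ℝ) := Gam ∩ Box (R + 1)

/-- The Neumann part `Σ_R = ∂Γ_R ∩ ∂□_{R+1}` of the boundary. -/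
def Sig (R : ℝ) : Set (ℝ × ℝ) := frontier (GamR R) ∩ frontier (Box (R + 1))

/-- The Dirichlet part `∂Γ_R ∖ Σ_R` of the boundary. -/
def DirB (R : ℝ) : Set (ℝ × ℝ) := frontier (GamR R) \ Sig R

/-- Squared gradient `|∇u|² = (∂₁u)² + (∂₂u)²`. -/
def gradSq2 (u : ℝ × ℝ → ℝ) (p : ℝ × ℝ) : ℝ :=
  (fderiv ℝ u p (1, 0)) ^ 2 + (fderiv ℝ u p (0, 1)) ^ 2

/-- Admissible functions for the mixed problem on `Γ_R`: `C¹` up to the boundary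
(modelled by a globally `C¹` extension) vanishing on the Dirichlet part. -/
def AdmR (R : ℝ) (u : ℝ × ℝ → ℝ) : Prop :=
  ContDiff ℝ 1 u ∧ ∀ p ∈ DirB R, u p = 0

/-- First Rayleigh quotient `λ₁(Γ_R)` of the mixed Dirichlet–Neumann Laplacian on `Γ_R`. -/
def lamR (R : ℝ) : ℝ :=
  sInf {r | ∃ u : ℝ × ℝ → ℝ, AdmR R u ∧ (∫ p in GamR R, (u p) ^ 2) ≠ 0 ∧
    r = (∫ p in GamR R, gradSq2 u p) / ∫ p in GamR R, (u p) ^ 2}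

/-- First Rayleigh quotient `λ₁(Γ)` of the Dirichlet Laplacian on the broken guide `Γ`. -/
def lamG : ℝ :=
  sInf {r | ∃ u : ℝ × ℝ → ℝ, ContDiff ℝ 1 u ∧ HasCompactSupport u ∧ tsupport u ⊆ Gam ∧
    (∫ p in Gam, (u p) ^ 2) ≠ 0 ∧
    r = (∫ p in Gam, gradSq2 u p) / ∫ p in Gam, (u p) ^ 2}

/-- `ω = √(π² − λ₁(Γ))`. -/
def omega : ℝ := Real.sqrt (π ^ 2 - lamG)

/-- Partial derivative `∂₁`. -/
def pd1 (u : ℝ × ℝ → ℝ) : ℝ × ℝ → ℝ := fun p => fderiv ℝ u p (1, 0)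

/-- Partial derivative `∂₂`. -/
def pd2 (u : ℝ × ℝ → ℝ) : ℝ × ℝ → ℝ := fun p => fderiv ℝ u p (0, 1)

/-- Laplacian `Δ = ∂₁² + ∂₂²`. -/
def lap2 (u : ℝ × ℝ → ℝ) (p : ℝ × ℝ) : ℝ := pd1 (pd1 u) p + pd2 (pd2 u) p

/-- The open segments `Σ_R¹ = {R} × I` and `Σ_R² = I × {R}` (for `R ≥ 0`). -/
def SigSeg (R : ℝ) : Set (ℝ × ℝ) := ({R} ×ˢ II) ∪ (II ×ˢ {R})

/-- `v` is the positive normalized first eigenfunction of the mixed Dirichlet–Neumann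
Laplacian on `Γ_R`: smooth in `Γ_R` and up to the Neumann boundary, continuous up to the
closure, vanishing on the Dirichlet part, with vanishing normal derivative on `Σ_R`,
satisfying `-Δv = λ₁(Γ_R) v` in `Γ_R`, positive, and `L²`-normalized. -/
def IsFirstEF (R : ℝ) (v : ℝ × ℝ → ℝ) : Prop :=
  (∃ U : Set (ℝ × ℝ), IsOpen U ∧ GamR R ∪ SigSeg R ⊆ U ∧ ContDiffOn ℝ (⊤ : ℕ∞) v U) ∧
  ContinuousOn v (closure (GamR R)) ∧
  (∀ p ∈ DirB R, v p = 0) ∧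
  (∀ t ∈ II, pd1 v (R, t) = 0) ∧
  (∀ t ∈ II, pd2 v (t, R) = 0) ∧
  (∀ p ∈ GamR R, -(lap2 v p) = lamR R * v p) ∧
  (∀ p ∈ GamR R, 0 < v p) ∧
  (∫ p in GamR R, (v p) ^ 2) = 1

open Filter Topology

/-!
The derivative is obtained by comparing explicit competitors. Extending `v` by constants along the
arms gives a competitor on longer guides, `C¹` because of the Neumann condition, and restricting
`v` gives one on shorter guides. In both cases `λ_{R+h} ≤ λ_R + h E + o(|h|)`, where
`E = ∫_Σ (|∂_τ v|² - λ_R |v|²)`.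

For the lower bound, the diffeomorphism `φ × φ` with `φ(x) = x + h max(x, 0)² / R²` maps `Γ_R` onto
`Γ_{R+h}`. It pulls almost-minimisers on `Γ_{R+h}` back to almost-minimisers on `Γ_R`, which are
close to `v` or `-v` by Picone's inequality and a Poincaré inequality for their quotient by `v`.
Hence `λ_{R+h} ≥ λ_R + h D - o(|h|)`, where `D` is an integral over `Γ_R` that depends only on `v`.
Comparing the two bounds for `h > 0` gives `D ≤ E`, and for `h < 0` it gives `E ≤ D`, so `λ` is
differentiable with derivative `E`. The same comparison shows that `∫_Σ |∂_τ v|²` is finite, so no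
regularity of `v` at the corners of the guide is needed.
-/

/-! ### Geometry of the finite guide -/

section Geometry

variable {R S a b c : ℝ} {f : ℝ × ℝ → ℝ}

lemma gamR_eq_union (hR : 0 < R) :
    GamR R = Ioo (-1) 0 ×ˢ Ioo (-1) R ∪ Ioo (-1) R ×ˢ Ioo (-1) 0 := by
  ext ⟨a, b⟩
  simp only [GamR, Gam, Box, mem_inter_iff, mem_ofPred_eq, mem_union, mem_prod, mem_Ioo,
    lt_min_iff, min_lt_iff, abs_lt]
  grind

lemma isOpen_gamR (hR : 0 < R) : IsOpen (GamR R) := by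
  rw [gamR_eq_union hR]
  exact (isOpen_Ioo.prod isOpen_Ioo).union (isOpen_Ioo.prod isOpen_Ioo)

lemma measurableSet_gamR (hR : 0 < R) : MeasurableSet (GamR R) :=
  (isOpen_gamR hR).measurableSet

lemma closure_gamR (hR : 0 < R) :
    closure (GamR R) = Icc (-1) 0 ×ˢ Icc (-1) R ∪ Icc (-1) R ×ˢ Icc (-1) 0 := by
  rw [gamR_eq_union hR, closure_union, closure_prod_eq, closure_prod_eq,
    closure_Ioo (by norm_num), closure_Ioo (by linarith)]

lemma isCompact_closure_gamR (hR : 0 < R) : IsCompact (closure (GamR R)) := by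
  rw [closure_gamR hR]
  exact (isCompact_Icc.prod isCompact_Icc).union (isCompact_Icc.prod isCompact_Icc)

lemma gamR_subset_gamR (hR : 0 < R) (h : R ≤ S) : GamR R ⊆ GamR S := by
  rw [gamR_eq_union hR, gamR_eq_union (hR.trans_le h)]
  gcongr

lemma fst_lt_and_snd_lt_of_mem_gamR (hR : 0 < R) {p : ℝ × ℝ} (hp : p ∈ GamR R) :
    p.1 < R ∧ p.2 < R := by
  rw [gamR_eq_union hR] at hp
  rcases hp with ⟨h1, h2⟩ | ⟨h1, h2⟩
  · exact ⟨h1.2.trans hR, h2.2⟩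
  · exact ⟨h1.2, h2.2.trans hR⟩

lemma frontier_box {L : ℝ} (hL : 0 < L) : frontier (Box L) =
    (Icc (-1 - L) (L - 1) ×ˢ Icc (-1 - L) (L - 1)) \
      (Ioo (-1 - L) (L - 1) ×ˢ Ioo (-1 - L) (L - 1)) := by
  have hBox : Box L = Ioo (-1 - L) (L - 1) ×ˢ Ioo (-1 - L) (L - 1) := by
    ext ⟨a, b⟩
    simp only [Box, mem_ofPred_eq, mem_prod, mem_Ioo, abs_lt]
    grind
  rw [hBox, (isOpen_Ioo.prod isOpen_Ioo).frontier_eq, closure_prod_eq, closure_Ioo (by linarith)]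

lemma mk_mem_dirB_iff (hR : 0 < R) :
    (a, b) ∈ DirB R ↔ (min a b = -1 ∨ min a b = 0) ∧ a < R ∧ b < R := by
  rw [DirB, Sig, frontier_box (by linarith), (isOpen_gamR hR).frontier_eq, closure_gamR hR,
    gamR_eq_union hR]
  simp only [Set.mem_sdiff, mem_inter_iff, mem_union, mem_prod, mem_Icc, mem_Ioo]
  rcases le_total a b with h | h
  · rw [min_eq_left h]; grind (splits := 40)
  · rw [min_eq_right h]; grind (splits := 40)

lemma mk_mem_sigSeg_iff :
    (a, b) ∈ SigSeg R ↔ (a = R ∧ -1 < b ∧ b < 0) ∨ (b = R ∧ -1 < a ∧ a < 0) := by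
  simp only [SigSeg, II, mem_union, mem_prod, mem_singleton_iff, mem_Ioo]
  tauto

lemma gamR_union_sigSeg_subset_closure (hR : 0 < R) : GamR R ∪ SigSeg R ⊆ closure (GamR R) := by
  refine union_subset subset_closure ?_
  rintro ⟨a, b⟩ h
  rw [mk_mem_sigSeg_iff] at h
  simp only [closure_gamR hR, mem_union, mem_prod, mem_Icc]
  grind

lemma dirB_subset_closure_gamR : DirB R ⊆ closure (GamR R) :=
  fun _ h => frontier_subset_closure h.1

lemma disjoint_dirB_gamR_union_sigSeg (hR : 0 < R) : Disjoint (DirB R) (GamR R ∪ SigSeg R) := by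
  refine disjoint_left.2 ?_
  rintro ⟨a, b⟩ hD (hG | hS)
  · rw [DirB, (isOpen_gamR hR).frontier_eq] at hD
    exact hD.1.2 hG
  · rw [mk_mem_dirB_iff hR] at hD
    rw [mk_mem_sigSeg_iff] at hS
    grind

lemma mk_right_mem_closure_dirB (hR : 0 < R) (hc : c = -1 ∨ c = 0) :
    (R, c) ∈ closure (DirB R) := by
  have hmem : (R, c) ∈ closure (Ioo 0 R ×ˢ {c}) := by
    rw [closure_prod_eq, closure_Ioo hR.ne, closure_singleton]
    exact ⟨right_mem_Icc.2 hR.le, rfl⟩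
  refine closure_mono ?_ hmem
  rintro ⟨a, b⟩ ⟨⟨ha, haR⟩, rfl : b = c⟩
  rw [mk_mem_dirB_iff hR, min_eq_right (by grind)]
  grind

lemma mk_left_mem_closure_dirB (hR : 0 < R) (hc : c = -1 ∨ c = 0) :
    (c, R) ∈ closure (DirB R) := by
  have hmem : (c, R) ∈ closure ({c} ×ˢ Ioo 0 R) := by
    rw [closure_prod_eq, closure_Ioo hR.ne, closure_singleton]
    exact ⟨rfl, right_mem_Icc.2 hR.le⟩
  refine closure_mono ?_ hmem
  rintro ⟨a, b⟩ ⟨rfl : a = c, hb, hbR⟩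
  rw [mk_mem_dirB_iff hR, min_eq_left (by grind)]
  grind

lemma closure_gamR_diff_subset_closure_dirB (hR : 0 < R) :
    closure (GamR R) \ (GamR R ∪ SigSeg R) ⊆ closure (DirB R) := by
  rintro ⟨a, b⟩ ⟨hcl, hn⟩
  by_cases hD : (a, b) ∈ DirB R
  · exact subset_closure hD
  rw [mk_mem_dirB_iff hR] at hD
  simp only [mem_union, mk_mem_sigSeg_iff, gamR_eq_union hR, mem_prod, mem_Ioo] at hn
  simp only [closure_gamR hR, mem_union, mem_prod, mem_Icc] at hcl
  by_cases ha : a = R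
  · rw [ha]
    exact mk_right_mem_closure_dirB hR (by grind)
  by_cases hb : b = R
  · rw [hb]
    exact mk_left_mem_closure_dirB hR (by grind)
  exfalso
  rcases le_total a b with h | h
  · rw [min_eq_left h] at hD; grind
  · rw [min_eq_right h] at hD; grind

lemma eq_zero_of_mem_closure_gamR (hR : 0 < R) (hf : ContinuousOn f (closure (GamR R)))
    (hf0 : ∀ p ∈ DirB R, f p = 0) {p : ℝ × ℝ} (hp : p ∈ closure (GamR R))
    (hn : p ∉ GamR R ∪ SigSeg R) : f p = 0 := by
  have hcl : p ∈ closure (DirB R) := closure_gamR_diff_subset_closure_dirB hR ⟨hp, hn⟩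
  have hcont : ContinuousOn f (closure (DirB R)) :=
    hf.mono (closure_minimal dirB_subset_closure_gamR isClosed_closure)
  have hsub : f '' DirB R ⊆ {0} := by
    rintro _ ⟨q, hq, rfl⟩
    exact hf0 q hq
  exact closure_minimal hsub isClosed_singleton (hcont.image_closure ⟨p, hcl, rfl⟩)

lemma integrableOn_gamR_of_continuousOn (hR : 0 < R) (hf : ContinuousOn f (closure (GamR R))) :
    IntegrableOn f (GamR R) :=
  (hf.integrableOn_compact (isCompact_closure_gamR hR)).mono_set subset_closure

end Geometry

/-! ### Calculus in the plane -/

section Plane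

lemma setIntegral_prod_symm {α β E : Type*} [MeasurableSpace α] [MeasurableSpace β]
    [NormedAddCommGroup E] [NormedSpace ℝ E] {μ : Measure α} {ν : Measure β} [SFinite μ]
    [SFinite ν] (f : α × β → E) {s : Set α} {t : Set β} (hf : IntegrableOn f (s ×ˢ t) (μ.prod ν)) :
    ∫ z in s ×ˢ t, f z ∂μ.prod ν = ∫ y in t, ∫ x in s, f (x, y) ∂μ ∂ν := by
  simp only [← Measure.prod_restrict s t, IntegrableOn] at hf ⊢
  exact integral_prod_symm f hf

variable {f g : ℝ × ℝ → ℝ} {p : ℝ × ℝ} {a b x y : ℝ}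

lemma gradSq2_eq_add (f : ℝ × ℝ → ℝ) (p : ℝ × ℝ) : gradSq2 f p = pd1 f p ^ 2 + pd2 f p ^ 2 := rfl

lemma gradSq2_nonneg (f : ℝ × ℝ → ℝ) (p : ℝ × ℝ) : 0 ≤ gradSq2 f p := by
  unfold gradSq2
  positivity

lemma pd1_congr_of_eventuallyEq (h : f =ᶠ[𝓝 p] g) : pd1 f p = pd1 g p := by
  simp only [pd1, h.fderiv_eq]

lemma pd2_congr_of_eventuallyEq (h : f =ᶠ[𝓝 p] g) : pd2 f p = pd2 g p := by
  simp only [pd2, h.fderiv_eq]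

lemma pd1_mul (hf : DifferentiableAt ℝ f p) (hg : DifferentiableAt ℝ g p) :
    pd1 (fun q => f q * g q) p = pd1 f p * g p + f p * pd1 g p := by
  simp only [pd1, fderiv_fun_mul hf hg, add_apply,
    smul_apply, smul_eq_mul]
  ring

lemma pd2_mul (hf : DifferentiableAt ℝ f p) (hg : DifferentiableAt ℝ g p) :
    pd2 (fun q => f q * g q) p = pd2 f p * g p + f p * pd2 g p := by
  simp only [pd2, fderiv_fun_mul hf hg, add_apply,
    smul_apply, smul_eq_mul]
  ring

lemma continuousAt_pd1 (hf : ContDiffAt ℝ 1 f p) : ContinuousAt (pd1 f) p :=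
  (hf.fderiv_right (m := 0) (by norm_num)).continuousAt.clm_apply continuousAt_const

lemma continuousAt_pd2 (hf : ContDiffAt ℝ 1 f p) : ContinuousAt (pd2 f) p :=
  (hf.fderiv_right (m := 0) (by norm_num)).continuousAt.clm_apply continuousAt_const

lemma continuous_pd1 (hf : ContDiff ℝ 1 f) : Continuous (pd1 f) :=
  continuous_iff_continuousAt.2 fun _ => continuousAt_pd1 hf.contDiffAt

lemma continuous_pd2 (hf : ContDiff ℝ 1 f) : Continuous (pd2 f) :=
  continuous_iff_continuousAt.2 fun _ => continuousAt_pd2 hf.contDiffAt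

lemma continuous_gradSq2 (hf : ContDiff ℝ 1 f) : Continuous (gradSq2 f) :=
  ((continuous_pd1 hf).pow 2).add ((continuous_pd2 hf).pow 2)

lemma contDiffAt_pd1 (hf : ContDiffAt ℝ 2 f p) : ContDiffAt ℝ 1 (pd1 f) p :=
  (hf.fderiv_right (m := 1) (by norm_num)).clm_apply contDiffAt_const

lemma contDiffAt_pd2 (hf : ContDiffAt ℝ 2 f p) : ContDiffAt ℝ 1 (pd2 f) p :=
  (hf.fderiv_right (m := 1) (by norm_num)).clm_apply contDiffAt_const

lemma hasDerivAt_pd1 (hf : DifferentiableAt ℝ f (x, y)) :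
    HasDerivAt (fun s => f (s, y)) (pd1 f (x, y)) x :=
  hf.hasFDerivAt.comp_hasDerivAt x ((hasDerivAt_id x).prodMk (hasDerivAt_const x y))

lemma hasDerivAt_pd2 (hf : DifferentiableAt ℝ f (x, y)) :
    HasDerivAt (fun s => f (x, s)) (pd2 f (x, y)) y :=
  hf.hasFDerivAt.comp_hasDerivAt y ((hasDerivAt_const y x).prodMk (hasDerivAt_id y))

lemma setIntegral_Ioo_pd1 (hf : ContDiff ℝ 1 f) (hab : a ≤ b) :
    ∫ x in Ioo a b, pd1 f (x, y) = f (b, y) - f (a, y) := by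
  rw [← integral_Ioc_eq_integral_Ioo, ← intervalIntegral.integral_of_le hab]
  refine intervalIntegral.integral_eq_sub_of_hasDerivAt
    (fun x _ => hasDerivAt_pd1 (hf.differentiable one_ne_zero _)) ?_
  exact ((continuous_pd1 hf).comp (by fun_prop)).intervalIntegrable _ _

lemma differentiableAt_comp_swap (hf : DifferentiableAt ℝ f p.swap) :
    DifferentiableAt ℝ (fun q : ℝ × ℝ => f q.swap) p :=
  hf.comp p (differentiableAt_snd.prodMk differentiableAt_fst)

lemma pd1_comp_swap (hf : DifferentiableAt ℝ f p.swap) :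
    pd1 (fun q => f q.swap) p = pd2 f p.swap :=
  (hasDerivAt_pd1 (differentiableAt_comp_swap hf)).unique (hasDerivAt_pd2 hf)

lemma pd2_comp_swap (hf : DifferentiableAt ℝ f p.swap) :
    pd2 (fun q => f q.swap) p = pd1 f p.swap :=
  (hasDerivAt_pd2 (differentiableAt_comp_swap hf)).unique (hasDerivAt_pd1 hf)

lemma gradSq2_comp_swap (hf : DifferentiableAt ℝ f p.swap) :
    gradSq2 (fun q => f q.swap) p = gradSq2 f p.swap := by
  rw [gradSq2_eq_add, gradSq2_eq_add, pd1_comp_swap hf, pd2_comp_swap hf, add_comm]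

-- Multiply `f` by a cut-off function supported where `f` is `C^n` and equal to `1` near `K`.
lemma exists_contDiff_eqOn_of_isCompact {E F : Type*} [NormedAddCommGroup E] [NormedSpace ℝ E]
    [FiniteDimensional ℝ E] [NormedAddCommGroup F] [NormedSpace ℝ F] {n : ℕ} {K T : Set E}
    (hK : IsCompact K) {f : E → F} (hf : ∀ x ∈ K, ContDiffAt ℝ n f x)
    (hfT : ∀ x ∈ T, x ∉ K → f x = 0) :
    ∃ g : E → F, ContDiff ℝ n g ∧ EqOn g f T := by
  have hU : IsOpen {x | ContDiffAt ℝ n f x} :=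
    isOpen_iff_mem_nhds.2 fun x (hx : ContDiffAt ℝ n f x) => hx.eventually (by simp)
  obtain ⟨χ, hχU, hχK, -⟩ := exists_contMDiffMap_zero_one_nhds_of_isClosed
    (modelWithCornersSelf ℝ E) (n := n) hU.isClosed_compl hK.isClosed
    (disjoint_left.2 fun x hx hxK => hx (hf x hxK))
  have hχ : ContDiff ℝ n (χ : E → ℝ) := χ.contMDiff.contDiff
  refine ⟨fun x => χ x • f x, contDiff_iff_contDiffAt.2 fun x => ?_, fun x hxT => ?_⟩
  · by_cases hx : ContDiffAt ℝ n f x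
    · exact hχ.contDiffAt.smul hx
    · have h0 : ∀ᶠ y in 𝓝 x, χ y = 0 := eventually_nhdsSet_iff_forall.1 hχU x hx
      refine (contDiffAt_const (c := (0 : F))).congr_of_eventuallyEq ?_
      filter_upwards [h0] with y hy
      simp only [hy, zero_smul]
  · by_cases hxK : x ∈ K
    · simp only [hχK.self_of_nhdsSet x hxK, one_smul]
    · simp only [hfT x hxT hxK, smul_zero]

end Plane

/-! ### A `C¹` soft threshold -/

section SoftThreshold

/-- The derivative of `softThreshold ε`: the continuous function equal to `0` on `[-ε, ε]`, to `1`
where `2 * ε ≤ |t|`, and interpolating linearly in between. -/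
def softSlope (ε t : ℝ) : ℝ := max 0 (min 1 (|t| / ε - 1))

/-- A `C¹` version of the soft thresholding `s ↦ sign s * max (|s| - ε) 0`: it vanishes on
`[-ε, ε]`, is `1`-Lipschitz, and stays within `2 * ε` of the identity. -/
def softThreshold (ε s : ℝ) : ℝ := ∫ t in (0 : ℝ)..s, softSlope ε t

variable {ε s t : ℝ}

lemma continuous_softSlope (ε : ℝ) : Continuous (softSlope ε) := by
  unfold softSlope
  fun_prop

lemma softSlope_nonneg (ε t : ℝ) : 0 ≤ softSlope ε t := le_max_left _ _

lemma softSlope_le_one (ε t : ℝ) : softSlope ε t ≤ 1 := max_le zero_le_one (min_le_left _ _)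

lemma softSlope_sq_le_one (ε t : ℝ) : softSlope ε t ^ 2 ≤ 1 :=
  pow_le_one₀ (softSlope_nonneg ε t) (softSlope_le_one ε t)

lemma softSlope_eq_zero (hε : 0 < ε) (h : |t| ≤ ε) : softSlope ε t = 0 := by
  have : |t| / ε ≤ 1 := (div_le_one hε).2 h
  exact max_eq_left ((min_le_right _ _).trans (by linarith))

lemma softSlope_eq_one (hε : 0 < ε) (h : 2 * ε ≤ |t|) : softSlope ε t = 1 := by
  have : 2 ≤ |t| / ε := (le_div_iff₀ hε).2 h
  rw [softSlope, min_eq_left (by linarith), max_eq_right zero_le_one]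

lemma intervalIntegrable_softSlope (ε a b : ℝ) : IntervalIntegrable (softSlope ε) volume a b :=
  (continuous_softSlope ε).intervalIntegrable _ _

lemma hasDerivAt_softThreshold (ε s : ℝ) : HasDerivAt (softThreshold ε) (softSlope ε s) s :=
  ((continuous_softSlope ε).integral_hasStrictDerivAt 0 s).hasDerivAt

lemma contDiff_softThreshold (ε : ℝ) : ContDiff ℝ 1 (softThreshold ε) := by
  have hderiv : deriv (softThreshold ε) = softSlope ε :=
    funext fun s => (hasDerivAt_softThreshold ε s).deriv
  exact contDiff_one_iff_deriv.2
    ⟨fun s => (hasDerivAt_softThreshold ε s).differentiableAt, hderiv ▸ continuous_softSlope ε⟩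

lemma softThreshold_neg (ε s : ℝ) : softThreshold ε (-s) = -softThreshold ε s := by
  have heven : ∀ t, softSlope ε (-t) = softSlope ε t := fun t => by simp only [softSlope, abs_neg]
  have h := intervalIntegral.integral_comp_neg (a := 0) (b := s) (softSlope ε)
  simp only [heven, neg_zero] at h
  rw [softThreshold, softThreshold, h, intervalIntegral.integral_symm]

lemma softThreshold_nonneg (hs : 0 ≤ s) : 0 ≤ softThreshold ε s :=
  intervalIntegral.integral_nonneg hs fun t _ => softSlope_nonneg ε t

lemma abs_softThreshold (ε s : ℝ) : |softThreshold ε s| = softThreshold ε |s| := by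
  rcases abs_cases s with ⟨h, hs⟩ | ⟨h, hs⟩
  · rw [h, abs_of_nonneg (softThreshold_nonneg hs)]
  · rw [h, ← abs_neg, ← softThreshold_neg, abs_of_nonneg (softThreshold_nonneg (by linarith))]

lemma softThreshold_eq_zero (hε : 0 < ε) (h : |s| ≤ ε) : softThreshold ε s = 0 := by
  rw [← abs_eq_zero, abs_softThreshold, softThreshold,
    intervalIntegral.integral_congr (g := fun _ => (0 : ℝ)), intervalIntegral.integral_zero]
  intro t ht
  rw [uIcc_of_le (abs_nonneg s)] at ht
  exact softSlope_eq_zero hε ((abs_of_nonneg ht.1).trans_le (ht.2.trans h))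

lemma abs_softThreshold_le (ε s : ℝ) : |softThreshold ε s| ≤ |s| := by
  rw [abs_softThreshold]
  calc softThreshold ε |s| ≤ ∫ _ in (0 : ℝ)..|s|, (1 : ℝ) :=
        intervalIntegral.integral_mono_on (abs_nonneg s) (intervalIntegrable_softSlope _ _ _)
          intervalIntegrable_const fun t _ => softSlope_le_one ε t
    _ = |s| := by simp only [intervalIntegral.integral_const, sub_zero, smul_eq_mul, mul_one]

lemma abs_sub_le_abs_softThreshold (hε : 0 < ε) (s : ℝ) :
    |s| - 2 * ε ≤ |softThreshold ε s| := by
  rcases le_total |s| (2 * ε) with h | h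
  · linarith [abs_nonneg (softThreshold ε s)]
  have htail : ∫ t in (2 * ε)..|s|, softSlope ε t = |s| - 2 * ε := by
    rw [intervalIntegral.integral_congr (g := fun _ => (1 : ℝ)), integral_one]
    intro t ht
    rw [uIcc_of_le h] at ht
    exact softSlope_eq_one hε (ht.1.trans (le_abs_self t))
  calc |s| - 2 * ε ≤ softThreshold ε (2 * ε) + ∫ t in (2 * ε)..|s|, softSlope ε t := by
        linarith [softThreshold_nonneg (ε := ε) (s := 2 * ε) (by linarith)]
    _ = |softThreshold ε s| := by
        rw [abs_softThreshold]
        exact intervalIntegral.integral_add_adjacent_intervals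
          (intervalIntegrable_softSlope _ _ _) (intervalIntegrable_softSlope _ _ _)

lemma sq_sub_le_softThreshold_sq (hε : 0 < ε) (s : ℝ) :
    s ^ 2 - 4 * ε * |s| ≤ softThreshold ε s ^ 2 := by
  have hle := abs_softThreshold_le ε s
  have hge := abs_sub_le_abs_softThreshold hε s
  rw [← sq_abs s, ← sq_abs (softThreshold ε s)]
  nlinarith [abs_nonneg s, abs_nonneg (softThreshold ε s)]

variable {f : ℝ × ℝ → ℝ} {p : ℝ × ℝ}

lemma pd1_softThreshold_comp (ε : ℝ) (hf : DifferentiableAt ℝ f p) :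
    pd1 (fun q => softThreshold ε (f q)) p = softSlope ε (f p) * pd1 f p := by
  have h := ((hasDerivAt_softThreshold ε (f p)).comp_hasFDerivAt p hf.hasFDerivAt).fderiv
  exact congrArg (fun L : ℝ × ℝ →L[ℝ] ℝ => L (1, 0)) h

lemma pd2_softThreshold_comp (ε : ℝ) (hf : DifferentiableAt ℝ f p) :
    pd2 (fun q => softThreshold ε (f q)) p = softSlope ε (f p) * pd2 f p := by
  have h := ((hasDerivAt_softThreshold ε (f p)).comp_hasFDerivAt p hf.hasFDerivAt).fderiv
  exact congrArg (fun L : ℝ × ℝ →L[ℝ] ℝ => L (0, 1)) h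

lemma gradSq2_softThreshold_comp (ε : ℝ) (hf : DifferentiableAt ℝ f p) :
    gradSq2 (fun q => softThreshold ε (f q)) p = softSlope ε (f p) ^ 2 * gradSq2 f p := by
  rw [gradSq2_eq_add, pd1_softThreshold_comp ε hf, pd2_softThreshold_comp ε hf, gradSq2_eq_add]
  ring

end SoftThreshold

/-! ### Integration over the guide -/

section Integration

variable {R : ℝ} {f g : ℝ × ℝ → ℝ}

lemma gamR_eq_disjoint_union (hR : 0 < R) :
    GamR R = Ioo (-1) R ×ˢ Ioo (-1) 0 ∪ Ioo (-1) 0 ×ˢ Ico 0 R := by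
  rw [gamR_eq_union hR]
  ext ⟨a, b⟩
  simp only [mem_union, mem_prod, mem_Ioo, mem_Ico]
  grind

lemma setIntegral_gamR_eq_add (hR : 0 < R) (hf : IntegrableOn f (GamR R)) :
    ∫ p in GamR R, f p = (∫ p in Ioo (-1) R ×ˢ Ioo (-1) 0, f p)
      + ∫ p in Ioo (-1) 0 ×ˢ Ico 0 R, f p := by
  rw [gamR_eq_disjoint_union hR] at hf ⊢
  refine setIntegral_union (disjoint_prod.2 (.inr ?_)) (measurableSet_Ioo.prod measurableSet_Ico)
    (hf.mono_set subset_union_left) (hf.mono_set subset_union_right)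
  exact disjoint_left.2 fun b h h' => h.2.not_ge h'.1

lemma preimage_swap_gamR (R : ℝ) : Prod.swap ⁻¹' GamR R = GamR R := by
  ext ⟨a, b⟩
  simp only [GamR, Gam, Box, mem_preimage, Prod.swap_prod_mk, mem_inter_iff, mem_ofPred_eq,
    min_comm a b]
  tauto

lemma setIntegral_preimage_swap (f : ℝ × ℝ → ℝ) (s : Set (ℝ × ℝ)) :
    ∫ p in Prod.swap ⁻¹' s, f p.swap = ∫ p in s, f p :=
  Measure.measurePreserving_swap (μ := (volume : Measure ℝ)) (ν := (volume : Measure ℝ))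
    |>.setIntegral_preimage_emb MeasurableEquiv.prodComm.measurableEmbedding f s

lemma setIntegral_gamR_comp_swap (f : ℝ × ℝ → ℝ) :
    ∫ p in GamR R, f p.swap = ∫ p in GamR R, f p := by
  rw [← setIntegral_preimage_swap f, preimage_swap_gamR]

lemma integrableOn_preimage_swap_iff {s : Set (ℝ × ℝ)} :
    IntegrableOn (fun p => f p.swap) (Prod.swap ⁻¹' s) ↔ IntegrableOn f s :=
  Measure.measurePreserving_swap (μ := (volume : Measure ℝ)) (ν := (volume : Measure ℝ))
    |>.integrableOn_comp_preimage MeasurableEquiv.prodComm.measurableEmbedding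

lemma swap_mem_dirB (hR : 0 < R) {p : ℝ × ℝ} (hp : p ∈ DirB R) : p.swap ∈ DirB R := by
  rw [← Prod.mk.eta (p := p), mk_mem_dirB_iff hR] at hp
  rw [Prod.swap, mk_mem_dirB_iff hR, min_comm]
  tauto

lemma setIntegral_gamR_pd1_eq_zero (hR : 0 < R) (hg : ContDiff ℝ 1 g) (hD : ∀ p ∈ DirB R, g p = 0)
    (hN : ∀ t ∈ II, g (R, t) = 0) : ∫ p in GamR R, pd1 g p = 0 := by
  have hi : IntegrableOn (pd1 g) (GamR R) :=
    integrableOn_gamR_of_continuousOn hR (continuous_pd1 hg).continuousOn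
  have hleft : ∀ t ∈ Ioo (-1) R, g (-1, t) = 0 := fun t ht =>
    hD _ ((mk_mem_dirB_iff hR).2 ⟨.inl (min_eq_left ht.1.le), by linarith, ht.2⟩)
  have hcorner : ∀ t ∈ Ico 0 R, g (0, t) = 0 := fun t ht =>
    hD _ ((mk_mem_dirB_iff hR).2 ⟨.inr (min_eq_left ht.1), hR, ht.2⟩)
  rw [setIntegral_gamR_eq_add hR hi]
  rw [gamR_eq_disjoint_union hR] at hi
  rw [Measure.volume_eq_prod, setIntegral_prod_symm _ (hi.mono_set subset_union_left),
    setIntegral_prod_symm _ (hi.mono_set subset_union_right),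
    setIntegral_eq_zero_of_forall_eq_zero, setIntegral_eq_zero_of_forall_eq_zero, add_zero]
  · intro t ht
    rw [setIntegral_Ioo_pd1 hg (by norm_num), hcorner t ht, hleft t ⟨by linarith [ht.1], ht.2⟩,
      sub_zero]
  · intro t ht
    rw [setIntegral_Ioo_pd1 hg (by linarith), hN t ht, hleft t ⟨ht.1, by linarith [ht.2]⟩, sub_zero]

lemma setIntegral_gamR_pd2_eq_zero (hR : 0 < R) (hg : ContDiff ℝ 1 g) (hD : ∀ p ∈ DirB R, g p = 0)
    (hN : ∀ t ∈ II, g (t, R) = 0) : ∫ p in GamR R, pd2 g p = 0 := by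
  have hswap : ContDiff ℝ 1 fun p : ℝ × ℝ => g p.swap := hg.comp (contDiff_snd.prodMk contDiff_fst)
  rw [← setIntegral_gamR_comp_swap, ← setIntegral_gamR_pd1_eq_zero hR hswap
    (fun p hp => hD _ (swap_mem_dirB hR hp)) hN]
  exact integral_congr_ae (.of_forall fun p =>
    (pd1_comp_swap (hg.differentiable one_ne_zero _)).symm)

end Integration

/-! ### Functions vanishing near the Dirichlet boundary -/

section VanishesNearDirB

/-- The function `ψ` is supported, within the closed guide, on a compact subset of
`Γ_R ∪ Σ_R`, that is, away from the Dirichlet boundary. -/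
def VanishesNearDirB (R : ℝ) (ψ : ℝ × ℝ → ℝ) : Prop :=
  ∃ K, IsCompact K ∧ K ⊆ GamR R ∪ SigSeg R ∧ ∀ p ∈ closure (GamR R), p ∉ K → ψ p = 0

namespace VanishesNearDirB

variable {R : ℝ} {ψ f : ℝ × ℝ → ℝ}

lemma mul_right (hψ : VanishesNearDirB R ψ) (f : ℝ × ℝ → ℝ) :
    VanishesNearDirB R fun p => ψ p * f p := by
  obtain ⟨K, hK, hKs, hz⟩ := hψ
  exact ⟨K, hK, hKs, fun p hp hpK => mul_eq_zero_of_left (hz p hp hpK) _⟩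

lemma eq_zero_of_mem_dirB (hR : 0 < R) (hψ : VanishesNearDirB R ψ) {p : ℝ × ℝ} (hp : p ∈ DirB R) :
    ψ p = 0 := by
  obtain ⟨K, -, hKs, hz⟩ := hψ
  exact hz p (dirB_subset_closure_gamR hp) fun h =>
    disjoint_left.1 (disjoint_dirB_gamR_union_sigSeg hR) hp (hKs h)

lemma exists_contDiff_eqOn (hψ : VanishesNearDirB R ψ)
    (hC : ∀ p ∈ GamR R ∪ SigSeg R, ContDiffAt ℝ 1 ψ p) :
    ∃ g : ℝ × ℝ → ℝ, ContDiff ℝ 1 g ∧ EqOn g ψ (closure (GamR R)) := by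
  obtain ⟨K, hK, hKs, hz⟩ := hψ
  exact exists_contDiff_eqOn_of_isCompact (n := 1) hK (fun p hp => hC p (hKs hp)) hz

lemma continuousOn (hψ : VanishesNearDirB R ψ)
    (hC : ∀ p ∈ GamR R ∪ SigSeg R, ContDiffAt ℝ 1 ψ p) : ContinuousOn ψ (closure (GamR R)) := by
  obtain ⟨g, hg, hgψ⟩ := hψ.exists_contDiff_eqOn hC
  exact hg.continuous.continuousOn.congr hgψ.symm

lemma setIntegral_pd1_eq_zero (hR : 0 < R) (hψ : VanishesNearDirB R ψ)
    (hC : ∀ p ∈ GamR R ∪ SigSeg R, ContDiffAt ℝ 1 ψ p) (hN : ∀ t ∈ II, ψ (R, t) = 0) :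
    IntegrableOn (pd1 ψ) (GamR R) ∧ ∫ p in GamR R, pd1 ψ p = 0 := by
  obtain ⟨g, hg, hgψ⟩ := hψ.exists_contDiff_eqOn hC
  have hpd : EqOn (pd1 g) (pd1 ψ) (GamR R) := fun p hp => pd1_congr_of_eventuallyEq
    ((hgψ.mono subset_closure).eventuallyEq_of_mem ((isOpen_gamR hR).mem_nhds hp))
  refine ⟨(integrableOn_gamR_of_continuousOn hR (continuous_pd1 hg).continuousOn).congr_fun hpd
    (measurableSet_gamR hR), ?_⟩
  rw [← setIntegral_congr_fun (measurableSet_gamR hR) hpd]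
  refine setIntegral_gamR_pd1_eq_zero hR hg (fun p hp => ?_) fun t ht => ?_
  · rw [hgψ (dirB_subset_closure_gamR hp), hψ.eq_zero_of_mem_dirB hR hp]
  · have hmem : (R, t) ∈ SigSeg R := mk_mem_sigSeg_iff.2 (.inl ⟨rfl, ht⟩)
    rw [hgψ (gamR_union_sigSeg_subset_closure hR (.inr hmem)), hN t ht]

lemma setIntegral_pd2_eq_zero (hR : 0 < R) (hψ : VanishesNearDirB R ψ)
    (hC : ∀ p ∈ GamR R ∪ SigSeg R, ContDiffAt ℝ 1 ψ p) (hN : ∀ t ∈ II, ψ (t, R) = 0) :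
    IntegrableOn (pd2 ψ) (GamR R) ∧ ∫ p in GamR R, pd2 ψ p = 0 := by
  obtain ⟨g, hg, hgψ⟩ := hψ.exists_contDiff_eqOn hC
  have hpd : EqOn (pd2 g) (pd2 ψ) (GamR R) := fun p hp => pd2_congr_of_eventuallyEq
    ((hgψ.mono subset_closure).eventuallyEq_of_mem ((isOpen_gamR hR).mem_nhds hp))
  refine ⟨(integrableOn_gamR_of_continuousOn hR (continuous_pd2 hg).continuousOn).congr_fun hpd
    (measurableSet_gamR hR), ?_⟩
  rw [← setIntegral_congr_fun (measurableSet_gamR hR) hpd]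
  refine setIntegral_gamR_pd2_eq_zero hR hg (fun p hp => ?_) fun t ht => ?_
  · rw [hgψ (dirB_subset_closure_gamR hp), hψ.eq_zero_of_mem_dirB hR hp]
  · have hmem : (t, R) ∈ SigSeg R := mk_mem_sigSeg_iff.2 (.inr ⟨rfl, ht⟩)
    rw [hgψ (gamR_union_sigSeg_subset_closure hR (.inr hmem)), hN t ht]

end VanishesNearDirB

lemma vanishesNearDirB_softThreshold {R ε : ℝ} {w : ℝ × ℝ → ℝ} (hR : 0 < R) (hε : 0 < ε)
    (hw : ContinuousOn w (closure (GamR R))) (hw0 : ∀ p ∈ DirB R, w p = 0) :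
    VanishesNearDirB R fun p => softThreshold ε (w p) := by
  refine ⟨closure (GamR R) ∩ (fun p => |w p|) ⁻¹' Ici ε, ?_, ?_, fun p hp hpK => ?_⟩
  · exact (isCompact_closure_gamR hR).of_isClosed_subset
      (hw.abs.preimage_isClosed_of_isClosed isClosed_closure isClosed_Ici) inter_subset_left
  · rintro p ⟨hp, hpε⟩
    by_contra hn
    rw [mem_preimage, eq_zero_of_mem_closure_gamR hR hw hw0 hp hn, abs_zero] at hpε
    exact hε.not_ge hpε
  · exact softThreshold_eq_zero hε (le_of_not_ge fun h => hpK ⟨hp, h⟩)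

end VanishesNearDirB

/-! ### The first Rayleigh quotient -/

section Rayleigh

variable {R : ℝ} {u w : ℝ × ℝ → ℝ}

lemma setIntegral_gradSq2_nonneg (u : ℝ × ℝ → ℝ) (s : Set (ℝ × ℝ)) :
    0 ≤ ∫ p in s, gradSq2 u p :=
  integral_nonneg fun p => gradSq2_nonneg u p

lemma setIntegral_sq_nonneg (u : ℝ × ℝ → ℝ) (s : Set (ℝ × ℝ)) : 0 ≤ ∫ p in s, u p ^ 2 :=
  integral_nonneg fun p => sq_nonneg (u p)

lemma lamR_nonneg (R : ℝ) : 0 ≤ lamR R := by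
  refine Real.sInf_nonneg ?_
  rintro r ⟨u, -, -, rfl⟩
  exact div_nonneg (setIntegral_gradSq2_nonneg u _) (setIntegral_sq_nonneg u _)

lemma AdmR.lamR_mul_le (hu : AdmR R u) :
    lamR R * ∫ p in GamR R, u p ^ 2 ≤ ∫ p in GamR R, gradSq2 u p := by
  rcases (setIntegral_sq_nonneg u (GamR R)).eq_or_lt with h | hpos
  · rw [← h, mul_zero]
    exact setIntegral_gradSq2_nonneg u _
  · rw [← le_div_iff₀ hpos]
    refine csInf_le ⟨0, ?_⟩ ⟨u, hu, hpos.ne', rfl⟩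
    rintro r ⟨u, -, -, rfl⟩
    exact div_nonneg (setIntegral_gradSq2_nonneg u _) (setIntegral_sq_nonneg u _)

lemma VanishesNearDirB.admR (hR : 0 < R) (hu0 : VanishesNearDirB R u) (hu : ContDiff ℝ 1 u) :
    AdmR R u :=
  ⟨hu, fun _ hp => hu0.eq_zero_of_mem_dirB hR hp⟩

lemma exists_admR_setIntegral_sq_ne_zero (hR : 0 < R) :
    ∃ u, AdmR R u ∧ (∫ p in GamR R, u p ^ 2) ≠ 0 := by
  have hx : ((-1 / 2, -1 / 2) : ℝ × ℝ) ∈ GamR R := by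
    rw [gamR_eq_union hR]
    left
    refine ⟨by norm_num, by norm_num, ?_⟩
    linarith
  obtain ⟨f, hts, -, hf, -, hfx⟩ := exists_contDiff_tsupport_subset (n := 1)
    ((isOpen_gamR hR).mem_nhds hx)
  have hfc : Continuous fun p => f p ^ 2 := hf.continuous.pow 2
  refine ⟨f, ⟨hf, fun p hp => ?_⟩, ne_of_gt ?_⟩
  · refine image_eq_zero_of_notMem_tsupport fun h => ?_
    exact disjoint_left.1 (disjoint_dirB_gamR_union_sigSeg hR) hp (.inl (hts h))
  · rw [setIntegral_pos_iff_support_of_nonneg_ae (ae_of_all _ fun p => sq_nonneg (f p))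
      (integrableOn_gamR_of_continuousOn hR hfc.continuousOn)]
    refine (hfc.isOpen_support.inter (isOpen_gamR hR)).measure_pos volume ⟨_, ?_, hx⟩
    simp [hfx]

lemma exists_admR_gradSq2_le (hR : 0 < R) {η : ℝ} (hη : 0 < η) :
    ∃ u, AdmR R u ∧ 0 < (∫ p in GamR R, u p ^ 2) ∧
      ∫ p in GamR R, gradSq2 u p ≤ (lamR R + η) * ∫ p in GamR R, u p ^ 2 := by
  obtain ⟨u₀, hu₀, hne⟩ := exists_admR_setIntegral_sq_ne_zero hR
  have hlt : lamR R < lamR R + η := lt_add_of_pos_right _ hη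
  obtain ⟨r, ⟨u, hu, hu0, rfl⟩, hr⟩ :=
    exists_lt_of_csInf_lt (by exact ⟨_, u₀, hu₀, hne, rfl⟩) hlt
  have hpos : 0 < ∫ p in GamR R, u p ^ 2 := (setIntegral_sq_nonneg u _).lt_of_ne' hu0
  exact ⟨u, hu, hpos, ((div_lt_iff₀ hpos).1 hr).le⟩

lemma exists_admR_eqOn_softThreshold (hR : 0 < R) {ε : ℝ} (hε : 0 < ε)
    (hC : ∀ p ∈ GamR R ∪ SigSeg R, ContDiffAt ℝ 1 w p)
    (hw : ContinuousOn w (closure (GamR R))) (hw0 : ∀ p ∈ DirB R, w p = 0) :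
    ∃ g, AdmR R g ∧ EqOn g (fun p => softThreshold ε (w p)) (closure (GamR R)) := by
  have hvan := vanishesNearDirB_softThreshold hR hε hw hw0
  obtain ⟨g, hg, hgw⟩ := hvan.exists_contDiff_eqOn
    fun p hp => (contDiff_softThreshold ε).contDiffAt.comp p (hC p hp)
  refine ⟨g, ⟨hg, fun p hp => ?_⟩, hgw⟩
  exact (hgw (dirB_subset_closure_gamR hp)).trans (hvan.eq_zero_of_mem_dirB hR hp)

lemma setIntegral_sq_sub_le_softThreshold_sq (hR : 0 < R) {ε : ℝ} (hε : 0 < ε)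
    (hw : ContinuousOn w (closure (GamR R))) :
    (∫ p in GamR R, w p ^ 2) - 4 * ε * ∫ p in GamR R, |w p| ≤
      ∫ p in GamR R, softThreshold ε (w p) ^ 2 := by
  have hi2 : IntegrableOn (fun p => w p ^ 2) (GamR R) :=
    integrableOn_gamR_of_continuousOn hR (hw.pow 2)
  have hi1 := (integrableOn_gamR_of_continuousOn hR hw.abs).const_mul (4 * ε)
  rw [← integral_const_mul, ← integral_sub hi2 hi1]
  exact setIntegral_mono_on (hi2.sub hi1) (integrableOn_gamR_of_continuousOn hR
    (((contDiff_softThreshold ε).continuous.comp_continuousOn hw).pow 2))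
    (measurableSet_gamR hR) fun p _ => sq_sub_le_softThreshold_sq hε (w p)

lemma lamR_mul_sub_le_of_contDiffAt (hR : 0 < R) {ε : ℝ} (hε : 0 < ε)
    (hC : ∀ p ∈ GamR R ∪ SigSeg R, ContDiffAt ℝ 1 w p)
    (hw : ContinuousOn w (closure (GamR R))) (hw0 : ∀ p ∈ DirB R, w p = 0)
    (hi : IntegrableOn (gradSq2 w) (GamR R)) :
    lamR R * ((∫ p in GamR R, w p ^ 2) - 4 * ε * ∫ p in GamR R, |w p|) ≤
      ∫ p in GamR R, gradSq2 w p := by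
  obtain ⟨g, hg, hgw⟩ := exists_admR_eqOn_softThreshold hR hε hC hw hw0
  have henergy : ∫ p in GamR R, gradSq2 g p ≤ ∫ p in GamR R, gradSq2 w p := by
    refine integral_mono_of_nonneg (ae_of_all _ fun p => gradSq2_nonneg g p) hi ?_
    filter_upwards [ae_restrict_mem (measurableSet_gamR hR)] with p hp
    have heq : g =ᶠ[𝓝 p] fun q => softThreshold ε (w q) :=
      (hgw.mono subset_closure).eventuallyEq_of_mem ((isOpen_gamR hR).mem_nhds hp)
    rw [gradSq2_eq_add, pd1_congr_of_eventuallyEq heq, pd2_congr_of_eventuallyEq heq,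
      ← gradSq2_eq_add,
      gradSq2_softThreshold_comp ε ((hC p (.inl hp)).differentiableAt one_ne_zero)]
    exact mul_le_of_le_one_left (gradSq2_nonneg w p) (softSlope_sq_le_one ε _)
  have hmass : (∫ p in GamR R, w p ^ 2) - 4 * ε * ∫ p in GamR R, |w p| ≤
      ∫ p in GamR R, g p ^ 2 := by
    rw [setIntegral_congr_fun (measurableSet_gamR hR)
      fun p hp => congrArg (· ^ 2) (hgw (subset_closure hp))]
    exact setIntegral_sq_sub_le_softThreshold_sq hR hε hw
  calc _ ≤ lamR R * ∫ p in GamR R, g p ^ 2 := mul_le_mul_of_nonneg_left hmass (lamR_nonneg R)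
    _ ≤ ∫ p in GamR R, gradSq2 g p := hg.lamR_mul_le
    _ ≤ _ := henergy

lemma lamR_mul_le_of_contDiffAt (hR : 0 < R) (hC : ∀ p ∈ GamR R ∪ SigSeg R, ContDiffAt ℝ 1 w p)
    (hw : ContinuousOn w (closure (GamR R))) (hw0 : ∀ p ∈ DirB R, w p = 0)
    (hi : IntegrableOn (gradSq2 w) (GamR R)) :
    lamR R * ∫ p in GamR R, w p ^ 2 ≤ ∫ p in GamR R, gradSq2 w p := by
  have hlim : Tendsto (fun ε : ℝ => lamR R * ((∫ p in GamR R, w p ^ 2) -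
      4 * ε * ∫ p in GamR R, |w p|)) (𝓝[>] 0) (𝓝 (lamR R * ∫ p in GamR R, w p ^ 2)) := by
    refine tendsto_nhdsWithin_of_tendsto_nhds (Continuous.tendsto' (by fun_prop) _ _ ?_)
    rw [mul_zero, zero_mul, sub_zero]
  exact le_of_tendsto hlim (eventually_nhdsWithin_of_forall fun ε hε =>
    lamR_mul_sub_le_of_contDiffAt hR hε hC hw hw0 hi)

end Rayleigh

/-! ### The eigenfunction and the weak eigenvalue equation -/

lemma integrable_and_integral_le_of_tendsto_ae {α : Type*} [MeasurableSpace α] {μ : Measure α}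
    {f : ℕ → α → ℝ} {g : α → ℝ} {c : ℕ → ℝ} {L : ℝ} (hf : ∀ n, Integrable (f n) μ)
    (h0 : ∀ n, 0 ≤ᵐ[μ] f n) (hlim : ∀ᵐ x ∂μ, Tendsto (fun n => f n x) atTop (𝓝 (g x)))
    (hc : ∀ n, ∫ x, f n x ∂μ ≤ c n) (hcL : Tendsto c atTop (𝓝 L)) :
    Integrable g μ ∧ ∫ x, g x ∂μ ≤ L := by
  have hg : AEStronglyMeasurable g μ :=
    aestronglyMeasurable_of_tendsto_ae atTop (fun n => (hf n).aestronglyMeasurable) hlim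
  have hg0 : 0 ≤ᵐ[μ] g := by
    filter_upwards [hlim, ae_all_iff.2 h0] with x hx hx0
    exact ge_of_tendsto' hx hx0
  have hL0 : 0 ≤ L := ge_of_tendsto' hcL fun n => (integral_nonneg_of_ae (h0 n)).trans (hc n)
  have hfatou : ∫⁻ x, ENNReal.ofReal (g x) ∂μ ≤ ENNReal.ofReal L := calc
    ∫⁻ x, ENNReal.ofReal (g x) ∂μ = ∫⁻ x, liminf (fun n => ENNReal.ofReal (f n x)) atTop ∂μ := by
        refine lintegral_congr_ae ?_
        filter_upwards [hlim] with x hx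
        exact (ENNReal.tendsto_ofReal hx).liminf_eq.symm
    _ ≤ liminf (fun n => ∫⁻ x, ENNReal.ofReal (f n x) ∂μ) atTop :=
        lintegral_liminf_le' fun n => (hf n).aemeasurable.ennreal_ofReal
    _ ≤ liminf (fun n => ENNReal.ofReal (c n)) atTop := liminf_le_liminf <| .of_forall fun n => by
        rw [← ofReal_integral_eq_lintegral_ofReal (hf n) (h0 n)]
        exact ENNReal.ofReal_le_ofReal (hc n)
    _ = ENNReal.ofReal L := (ENNReal.tendsto_ofReal hcL).liminf_eq
  have hi : Integrable g μ := ⟨hg, by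
    rw [hasFiniteIntegral_iff_ofReal hg0]
    exact hfatou.trans_lt ENNReal.ofReal_lt_top⟩
  refine ⟨hi, (ENNReal.ofReal_le_ofReal_iff hL0).1 ?_⟩
  rwa [ofReal_integral_eq_lintegral_ofReal hi hg0]

namespace IsFirstEF

variable {R : ℝ} {v ψ : ℝ × ℝ → ℝ} {p : ℝ × ℝ}

lemma contDiffAt (hv : IsFirstEF R v) (hp : p ∈ GamR R ∪ SigSeg R) : ContDiffAt ℝ 2 v p := by
  obtain ⟨⟨U, hU, hsub, hvU⟩, -⟩ := hv
  exact (hvU.contDiffAt (hU.mem_nhds (hsub hp))).of_le (by norm_cast)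

lemma contDiffAt_one (hv : IsFirstEF R v) (hp : p ∈ GamR R ∪ SigSeg R) : ContDiffAt ℝ 1 v p :=
  (hv.contDiffAt hp).of_le (by norm_num)

lemma differentiableAt (hv : IsFirstEF R v) (hp : p ∈ GamR R ∪ SigSeg R) :
    DifferentiableAt ℝ v p :=
  (hv.contDiffAt hp).differentiableAt two_ne_zero

lemma continuousOn (hv : IsFirstEF R v) : ContinuousOn v (closure (GamR R)) := hv.2.1

lemma eq_zero (hv : IsFirstEF R v) : ∀ p ∈ DirB R, v p = 0 := hv.2.2.1

lemma pd1_eq_zero (hv : IsFirstEF R v) : ∀ t ∈ II, pd1 v (R, t) = 0 := hv.2.2.2.1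

lemma pd2_eq_zero (hv : IsFirstEF R v) : ∀ t ∈ II, pd2 v (t, R) = 0 := hv.2.2.2.2.1

lemma neg_lap2_eq (hv : IsFirstEF R v) (hp : p ∈ GamR R) : -(lap2 v p) = lamR R * v p :=
  hv.2.2.2.2.2.1 p hp

lemma pos (hv : IsFirstEF R v) (hp : p ∈ GamR R) : 0 < v p := hv.2.2.2.2.2.2.1 p hp

lemma setIntegral_sq (hv : IsFirstEF R v) : ∫ p in GamR R, v p ^ 2 = 1 := hv.2.2.2.2.2.2.2

lemma nonneg (hv : IsFirstEF R v) (hp : p ∈ closure (GamR R)) : 0 ≤ v p :=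
  le_on_closure (f := fun _ => (0 : ℝ)) (fun _ hx => (hv.pos hx).le) continuousOn_const
    hv.continuousOn hp

lemma continuousOn_pd1 (hv : IsFirstEF R v) : ContinuousOn (pd1 v) (GamR R ∪ SigSeg R) :=
  fun _ hp => (contDiffAt_pd1 (hv.contDiffAt hp)).continuousAt.continuousWithinAt

lemma continuousOn_pd2 (hv : IsFirstEF R v) : ContinuousOn (pd2 v) (GamR R ∪ SigSeg R) :=
  fun _ hp => (contDiffAt_pd2 (hv.contDiffAt hp)).continuousAt.continuousWithinAt

lemma integrableOn_sq (hv : IsFirstEF R v) (hR : 0 < R) :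
    IntegrableOn (fun p => v p ^ 2) (GamR R) :=
  integrableOn_gamR_of_continuousOn hR (hv.continuousOn.pow 2)

lemma weak_formulation (hv : IsFirstEF R v) (hR : 0 < R) (hψ : VanishesNearDirB R ψ)
    (hC : ∀ p ∈ GamR R ∪ SigSeg R, ContDiffAt ℝ 1 ψ p) :
    IntegrableOn (fun p => pd1 ψ p * pd1 v p + pd2 ψ p * pd2 v p) (GamR R) ∧
    ∫ p in GamR R, (pd1 ψ p * pd1 v p + pd2 ψ p * pd2 v p) =
      lamR R * ∫ p in GamR R, ψ p * v p := by
  obtain ⟨hi1, h1⟩ := (hψ.mul_right (pd1 v)).setIntegral_pd1_eq_zero hR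
    (fun p hp => (hC p hp).mul (contDiffAt_pd1 (hv.contDiffAt hp)))
    fun t ht => mul_eq_zero_of_right _ (hv.pd1_eq_zero t ht)
  obtain ⟨hi2, h2⟩ := (hψ.mul_right (pd2 v)).setIntegral_pd2_eq_zero hR
    (fun p hp => (hC p hp).mul (contDiffAt_pd2 (hv.contDiffAt hp)))
    fun t ht => mul_eq_zero_of_right _ (hv.pd2_eq_zero t ht)
  have hi3 : IntegrableOn (fun p => lamR R * (ψ p * v p)) (GamR R) :=
    integrableOn_gamR_of_continuousOn hR
      (continuousOn_const.mul ((hψ.continuousOn hC).mul hv.continuousOn))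
  have hdiv : EqOn (fun p => pd1 (fun q => ψ q * pd1 v q) p + pd2 (fun q => ψ q * pd2 v q) p +
      lamR R * (ψ p * v p)) (fun p => pd1 ψ p * pd1 v p + pd2 ψ p * pd2 v p) (GamR R) := by
    intro p hp
    have hψd := (hC p (.inl hp)).differentiableAt one_ne_zero
    have hlap := hv.neg_lap2_eq hp
    rw [lap2] at hlap
    beta_reduce
    rw [pd1_mul hψd ((contDiffAt_pd1 (hv.contDiffAt (.inl hp))).differentiableAt one_ne_zero),
      pd2_mul hψd ((contDiffAt_pd2 (hv.contDiffAt (.inl hp))).differentiableAt one_ne_zero)]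
    linear_combination (-ψ p) * hlap
  have hi12 : IntegrableOn (fun p => pd1 (fun q => ψ q * pd1 v q) p +
      pd2 (fun q => ψ q * pd2 v q) p) (GamR R) := hi1.add hi2
  refine ⟨(hi12.add hi3).congr_fun hdiv (measurableSet_gamR hR), ?_⟩
  rw [← setIntegral_congr_fun (measurableSet_gamR hR) hdiv, integral_add hi12 hi3,
    integral_add hi1 hi2, h1, h2, integral_const_mul, add_zero, zero_add]

/-! ### Finiteness of the energy -/

lemma integrableOn_softSlope_mul_gradSq2 (hv : IsFirstEF R v) (hR : 0 < R) {ε : ℝ} (hε : 0 < ε) :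
    IntegrableOn (fun p => softSlope ε (v p) * gradSq2 v p) (GamR R) ∧
      ∫ p in GamR R, softSlope ε (v p) * gradSq2 v p ≤ lamR R := by
  obtain ⟨hi, he⟩ := hv.weak_formulation hR
    (vanishesNearDirB_softThreshold hR hε hv.continuousOn hv.eq_zero)
    fun p hp => (contDiff_softThreshold ε).contDiffAt.comp p (hv.contDiffAt_one hp)
  have hgrad : EqOn (fun p => pd1 (fun q => softThreshold ε (v q)) p * pd1 v p +
      pd2 (fun q => softThreshold ε (v q)) p * pd2 v p)
      (fun p => softSlope ε (v p) * gradSq2 v p) (GamR R) := by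
    intro p hp
    have hvd := hv.differentiableAt (.inl hp)
    beta_reduce
    rw [pd1_softThreshold_comp ε hvd, pd2_softThreshold_comp ε hvd, gradSq2_eq_add]
    ring
  refine ⟨hi.congr_fun hgrad (measurableSet_gamR hR), ?_⟩
  rw [← setIntegral_congr_fun (measurableSet_gamR hR) hgrad, he]
  suffices h : ∫ p in GamR R, softThreshold ε (v p) * v p ≤ ∫ p in GamR R, v p ^ 2 by
    rw [hv.setIntegral_sq] at h
    exact mul_le_of_le_one_right (lamR_nonneg R) h
  refine setIntegral_mono_on (integrableOn_gamR_of_continuousOn hR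
    (((contDiff_softThreshold ε).continuous.comp_continuousOn hv.continuousOn).mul
      hv.continuousOn)) (hv.integrableOn_sq hR) (measurableSet_gamR hR) fun p hp => ?_
  have hle := (le_abs_self _).trans (abs_softThreshold_le ε (v p))
  rw [abs_of_pos (hv.pos hp)] at hle
  rw [sq]
  exact mul_le_mul_of_nonneg_right hle (hv.pos hp).le

lemma integrableOn_gradSq2_and_le (hv : IsFirstEF R v) (hR : 0 < R) :
    IntegrableOn (gradSq2 v) (GamR R) ∧ ∫ p in GamR R, gradSq2 v p ≤ lamR R := by
  have hpos (n : ℕ) : (0 : ℝ) < 1 / (n + 1) := Nat.one_div_pos_of_nat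
  refine integrable_and_integral_le_of_tendsto_ae
    (fun n => (hv.integrableOn_softSlope_mul_gradSq2 hR (hpos n)).1)
    (fun n => ae_of_all _ fun p => mul_nonneg (softSlope_nonneg _ _) (gradSq2_nonneg v p)) ?_
    (fun n => (hv.integrableOn_softSlope_mul_gradSq2 hR (hpos n)).2) tendsto_const_nhds
  filter_upwards [ae_restrict_mem (measurableSet_gamR hR)] with p hp
  have hlim : Tendsto (fun n : ℕ => 2 * (1 / ((n : ℝ) + 1))) atTop (𝓝 (2 * 0)) :=
    tendsto_one_div_add_atTop_nhds_zero_nat.const_mul 2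
  rw [mul_zero] at hlim
  refine tendsto_const_nhds.congr' ?_
  filter_upwards [hlim.eventually_lt_const (hv.pos hp)] with n hn
  rw [softSlope_eq_one (hpos n) (hn.le.trans (le_abs_self _)), one_mul]

end IsFirstEF

/-! ### Picone's inequality -/

section Picone

variable {f g u w : ℝ × ℝ → ℝ} {p : ℝ × ℝ}

lemma differentiableAt_div (hf : DifferentiableAt ℝ f p) (hg : DifferentiableAt ℝ g p)
    (h0 : g p ≠ 0) : DifferentiableAt ℝ (fun q => f q / g q) p := by
  simpa only [div_eq_mul_inv] using hf.fun_mul (hg.fun_inv h0)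

lemma pd1_div (hf : DifferentiableAt ℝ f p) (hg : DifferentiableAt ℝ g p) (h0 : g p ≠ 0) :
    pd1 (fun q => f q / g q) p = (pd1 f p * g p - f p * pd1 g p) / g p ^ 2 :=
  (hasDerivAt_pd1 (differentiableAt_div hf hg h0)).unique
    ((hasDerivAt_pd1 hf).fun_div (hasDerivAt_pd1 hg) h0)

lemma pd2_div (hf : DifferentiableAt ℝ f p) (hg : DifferentiableAt ℝ g p) (h0 : g p ≠ 0) :
    pd2 (fun q => f q / g q) p = (pd2 f p * g p - f p * pd2 g p) / g p ^ 2 :=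
  (hasDerivAt_pd2 (differentiableAt_div hf hg h0)).unique
    ((hasDerivAt_pd2 hf).fun_div (hasDerivAt_pd2 hg) h0)

lemma sq_mul_gradSq2_div (hw : DifferentiableAt ℝ w p) (hu : DifferentiableAt ℝ u p)
    (h0 : u p ≠ 0) :
    u p ^ 2 * gradSq2 (fun q => w q / u q) p =
      (pd1 w p - w p * pd1 u p / u p) ^ 2 + (pd2 w p - w p * pd2 u p / u p) ^ 2 := by
  rw [gradSq2_eq_add, pd1_div hw hu h0, pd2_div hw hu h0]
  field_simp

lemma picone_identity (hw : DifferentiableAt ℝ w p) (hu : DifferentiableAt ℝ u p) (h0 : u p ≠ 0) :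
    gradSq2 w p - (pd1 (fun q => w q * w q / u q) p * pd1 u p +
      pd2 (fun q => w q * w q / u q) p * pd2 u p) =
        u p ^ 2 * gradSq2 (fun q => w q / u q) p := by
  rw [sq_mul_gradSq2_div hw hu h0, gradSq2_eq_add, pd1_div (hw.fun_mul hw) hu h0,
    pd2_div (hw.fun_mul hw) hu h0, pd1_mul hw hw, pd2_mul hw hw]
  field_simp
  ring

lemma pd1_add_const (f : ℝ × ℝ → ℝ) (c : ℝ) : pd1 (fun q => f q + c) = pd1 f := by
  ext p
  simp only [pd1, fderiv_add_const]

lemma pd2_add_const (f : ℝ × ℝ → ℝ) (c : ℝ) : pd2 (fun q => f q + c) = pd2 f := by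
  ext p
  simp only [pd2, fderiv_add_const]

lemma tendsto_sq_mul_gradSq2_div_add_const (hw : DifferentiableAt ℝ w p)
    (hu : DifferentiableAt ℝ u p) (h0 : 0 < u p) :
    Tendsto (fun δ => (u p + δ) ^ 2 * gradSq2 (fun q => w q / (u q + δ)) p) (𝓝[>] 0)
      (𝓝 (u p ^ 2 * gradSq2 (fun q => w q / u q) p)) := by
  have hlim : Tendsto (fun δ => (pd1 w p - w p * pd1 u p / (u p + δ)) ^ 2 +
      (pd2 w p - w p * pd2 u p / (u p + δ)) ^ 2) (𝓝[>] 0)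
      (𝓝 (u p ^ 2 * gradSq2 (fun q => w q / u q) p)) := by
    have hden : Tendsto (fun δ => u p + δ) (𝓝 0) (𝓝 (u p)) :=
      Continuous.tendsto' (by fun_prop) _ _ (add_zero _)
    rw [sq_mul_gradSq2_div hw hu h0.ne']
    refine tendsto_nhdsWithin_of_tendsto_nhds (.add (.pow ?_ 2) (.pow ?_ 2)) <;>
    exact tendsto_const_nhds.sub (tendsto_const_nhds.div hden h0.ne')
  refine hlim.congr' (eventually_nhdsWithin_of_forall fun δ hδ => ?_)
  beta_reduce
  rw [← pd1_add_const u δ, ← pd2_add_const u δ,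
    ← sq_mul_gradSq2_div (u := fun q => u q + δ) hw (hu.add_const δ) (add_pos h0 hδ).ne']

lemma integrableOn_gradSq2 {R : ℝ} (hR : 0 < R) (hw : ContDiff ℝ 1 w) :
    IntegrableOn (gradSq2 w) (GamR R) :=
  integrableOn_gamR_of_continuousOn hR (continuous_gradSq2 hw).continuousOn

end Picone

namespace IsFirstEF

variable {R δ : ℝ} {v w : ℝ × ℝ → ℝ}

lemma picone_add_const (hv : IsFirstEF R v) (hR : 0 < R) (hw : ContDiff ℝ 1 w)
    (hw0 : VanishesNearDirB R w) (hδ : 0 < δ) :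
    IntegrableOn (fun p => (v p + δ) ^ 2 * gradSq2 (fun q => w q / (v q + δ)) p) (GamR R) ∧
    ∫ p in GamR R, (v p + δ) ^ 2 * gradSq2 (fun q => w q / (v q + δ)) p =
      (∫ p in GamR R, gradSq2 w p) - lamR R * ∫ p in GamR R, w p * w p / (v p + δ) * v p := by
  have hpos : ∀ p ∈ GamR R ∪ SigSeg R, 0 < v p + δ := fun p hp =>
    add_pos_of_nonneg_of_pos (hv.nonneg (gamR_union_sigSeg_subset_closure hR hp)) hδ
  have hψ0 : VanishesNearDirB R fun p => w p * w p / (v p + δ) := by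
    simp only [mul_div_assoc]
    exact hw0.mul_right _
  obtain ⟨hi, he⟩ := hv.weak_formulation hR hψ0 fun p hp =>
    (hw.contDiffAt.mul hw.contDiffAt).div ((hv.contDiffAt_one hp).add contDiffAt_const)
      (hpos p hp).ne'
  have hid : EqOn (fun p => gradSq2 w p - (pd1 (fun q => w q * w q / (v q + δ)) p * pd1 v p +
      pd2 (fun q => w q * w q / (v q + δ)) p * pd2 v p))
      (fun p => (v p + δ) ^ 2 * gradSq2 (fun q => w q / (v q + δ)) p) (GamR R) := fun p hp => by
    beta_reduce
    rw [← picone_identity (u := fun q => v q + δ) (hw.differentiable one_ne_zero p)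
      ((hv.differentiableAt (.inl hp)).add_const δ) (hpos p (.inl hp)).ne', pd1_add_const,
      pd2_add_const]
  have hiw := integrableOn_gradSq2 hR hw
  refine ⟨(hiw.sub hi).congr_fun hid (measurableSet_gamR hR), ?_⟩
  rw [← setIntegral_congr_fun (measurableSet_gamR hR) hid, integral_sub hiw hi, he]

lemma tendsto_setIntegral_div_add_mul (hv : IsFirstEF R v) (hR : 0 < R)
    (hw : ContinuousOn w (closure (GamR R))) :
    Tendsto (fun δ => ∫ p in GamR R, w p * w p / (v p + δ) * v p) (𝓝[>] 0)
      (𝓝 (∫ p in GamR R, w p ^ 2)) := by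
  refine tendsto_integral_filter_of_dominated_convergence (fun p => w p ^ 2) ?_ ?_
    (integrableOn_gamR_of_continuousOn hR (hw.pow 2)) ?_
  · filter_upwards [self_mem_nhdsWithin] with δ (hδ : 0 < δ)
    refine (integrableOn_gamR_of_continuousOn hR (((hw.mul hw).div
      (hv.continuousOn.add continuousOn_const) fun p hp => ?_).mul
      hv.continuousOn)).aestronglyMeasurable
    exact (add_pos_of_nonneg_of_pos (hv.nonneg hp) hδ).ne'
  · filter_upwards [self_mem_nhdsWithin] with δ (hδ : 0 < δ)
    filter_upwards [ae_restrict_mem (measurableSet_gamR hR)] with p hp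
    have hvp := hv.pos hp
    rw [← sq, Real.norm_of_nonneg (by positivity), div_mul_eq_mul_div,
      div_le_iff₀ (by positivity)]
    exact mul_le_mul_of_nonneg_left (by linarith) (sq_nonneg _)
  · filter_upwards [ae_restrict_mem (measurableSet_gamR hR)] with p hp
    have hvp := (hv.pos hp).ne'
    have hval : w p * w p / (v p + 0) * v p = w p ^ 2 := by
      rw [add_zero, div_mul_cancel₀ _ hvp, sq]
    rw [← hval]
    refine tendsto_nhdsWithin_of_tendsto_nhds (.mul (.div tendsto_const_nhds ?_ ?_)
      tendsto_const_nhds)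
    · exact Continuous.tendsto (by fun_prop) 0
    · rwa [add_zero]

lemma picone (hv : IsFirstEF R v) (hR : 0 < R) (hw : ContDiff ℝ 1 w)
    (hw0 : VanishesNearDirB R w) :
    IntegrableOn (fun p => v p ^ 2 * gradSq2 (fun q => w q / v q) p) (GamR R) ∧
    ∫ p in GamR R, v p ^ 2 * gradSq2 (fun q => w q / v q) p ≤
      (∫ p in GamR R, gradSq2 w p) - lamR R * ∫ p in GamR R, w p ^ 2 := by
  have hpos (n : ℕ) : (0 : ℝ) < 1 / (n + 1) := Nat.one_div_pos_of_nat
  have hseq : Tendsto (fun n : ℕ => 1 / ((n : ℝ) + 1)) atTop (𝓝[>] 0) :=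
    tendsto_nhdsWithin_iff.2 ⟨tendsto_one_div_add_atTop_nhds_zero_nat, .of_forall hpos⟩
  refine integrable_and_integral_le_of_tendsto_ae
    (fun n => (hv.picone_add_const hR hw hw0 (hpos n)).1)
    (fun n => ae_of_all _ fun p => mul_nonneg (sq_nonneg _) (gradSq2_nonneg _ p)) ?_
    (fun n => (hv.picone_add_const hR hw hw0 (hpos n)).2.le)
    (tendsto_const_nhds.sub (((hv.tendsto_setIntegral_div_add_mul hR
      hw.continuous.continuousOn).comp hseq).const_mul _))
  filter_upwards [ae_restrict_mem (measurableSet_gamR hR)] with p hp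
  exact (tendsto_sq_mul_gradSq2_div_add_const (hw.differentiable one_ne_zero p)
    (hv.differentiableAt (.inl hp)) (hv.pos hp)).comp hseq

end IsFirstEF

/-! ### A Poincaré inequality on L-shaped domains -/

section Poincare

lemma sq_integral_le {α : Type*} [MeasurableSpace α] {μ : Measure α} [IsFiniteMeasure μ]
    {f : α → ℝ} (hf : Integrable f μ) (hf2 : Integrable (fun x => f x ^ 2) μ) :
    (∫ x, f x ∂μ) ^ 2 ≤ μ.real univ * ∫ x, f x ^ 2 ∂μ := by
  rcases eq_or_ne μ 0 with rfl | hμ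
  · simp only [integral_zero_measure, mul_zero, ne_eq, OfNat.ofNat_ne_zero, not_false_eq_true,
      zero_pow, le_refl]
  have : NeZero μ := ⟨hμ⟩
  have hpos : 0 < μ.real univ := measureReal_univ_pos
  have hjensen := (even_two.convexOn_pow (𝕜 := ℝ)).map_average_le
    (continuous_pow 2).continuousOn isClosed_univ (ae_of_all _ fun _ => mem_univ _) hf hf2
  simp only [average_eq, smul_eq_mul, mul_pow] at hjensen
  calc (∫ x, f x ∂μ) ^ 2 = μ.real univ ^ 2 * ((μ.real univ)⁻¹ ^ 2 * (∫ x, f x ∂μ) ^ 2) := by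
        field_simp
    _ ≤ μ.real univ ^ 2 * ((μ.real univ)⁻¹ * ∫ x, f x ^ 2 ∂μ) := by gcongr
    _ = μ.real univ * ∫ x, f x ^ 2 ∂μ := by field_simp

lemma sq_sub_le_mul_setIntegral_sq {g g' : ℝ → ℝ} {a b x y : ℝ}
    (hg : ∀ x ∈ Icc a b, HasDerivAt g (g' x) x) (hg' : ContinuousOn g' (Icc a b))
    (hx : x ∈ Icc a b) (hy : y ∈ Icc a b) :
    (g x - g y) ^ 2 ≤ (b - a) * ∫ t in Icc a b, g' t ^ 2 := by
  wlog h : y ≤ x generalizing x y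
  · rw [sub_sq_comm]
    exact this hy hx (le_of_not_ge h)
  have hsub : Icc y x ⊆ Icc a b := Icc_subset_Icc hy.1 hx.2
  have hcont := hg'.mono hsub
  have hftc : g x - g y = ∫ t in Icc y x, g' t := by
    rw [integral_Icc_eq_integral_Ioc, ← intervalIntegral.integral_of_le h,
      intervalIntegral.integral_eq_sub_of_hasDerivAt]
    · intro t ht
      exact hg t (hsub (uIcc_of_le h ▸ ht))
    · exact (hcont.mono (uIcc_of_le h).subset).intervalIntegrable (μ := volume)
  calc (g x - g y) ^ 2 ≤ (x - y) * ∫ t in Icc y x, g' t ^ 2 := by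
        have hcs := sq_integral_le (μ := volume.restrict (Icc y x))
          (hcont.integrableOn_compact isCompact_Icc)
          ((hcont.pow 2).integrableOn_compact isCompact_Icc)
        rwa [← hftc, measureReal_restrict_apply_univ, volume_real_Icc_of_le h] at hcs
    _ ≤ (b - a) * ∫ t in Icc a b, g' t ^ 2 := by
        refine mul_le_mul (by linarith [hx.2, hy.1]) ?_
          (integral_nonneg fun t => sq_nonneg (g' t)) (by linarith [hx.1, hx.2])
        exact setIntegral_mono_set ((hg'.pow 2).integrableOn_compact isCompact_Icc)
          (ae_of_all _ fun t => sq_nonneg (g' t)) hsub.eventuallyLE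

section Prod

variable {α β : Type*} [MeasurableSpace α] [MeasurableSpace β] {μ : Measure α} {ν : Measure β}
  [SFinite μ] [SFinite ν] {f : α × β → ℝ} {s : Set α} {t : Set β}

lemma integrableOn_setIntegral_fst (hf : IntegrableOn f (s ×ˢ t) (μ.prod ν)) :
    IntegrableOn (fun y => ∫ x in s, f (x, y) ∂μ) t ν := by
  simp only [← Measure.prod_restrict s t, IntegrableOn] at hf ⊢
  exact hf.integral_prod_right

lemma integrableOn_setIntegral_snd (hf : IntegrableOn f (s ×ˢ t) (μ.prod ν)) :
    IntegrableOn (fun x => ∫ y in t, f (x, y) ∂ν) s μ := by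
  simp only [← Measure.prod_restrict s t, IntegrableOn] at hf ⊢
  exact hf.integral_prod_left

lemma setIntegral_prod_le_of_le_snd {F : β → ℝ} (hs : MeasurableSet s) (ht : MeasurableSet t)
    (hsμ : μ s ≠ ⊤) (hf : IntegrableOn f (s ×ˢ t) (μ.prod ν)) (hF : IntegrableOn F t ν)
    (h : ∀ x ∈ s, ∀ y ∈ t, f (x, y) ≤ F y) :
    ∫ z in s ×ˢ t, f z ∂μ.prod ν ≤ μ.real s * ∫ y in t, F y ∂ν := by
  have : Fact (μ s < ⊤) := ⟨hsμ.lt_top⟩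
  have hF' : IntegrableOn (fun z : α × β => F z.2) (s ×ˢ t) (μ.prod ν) := by
    rw [IntegrableOn, ← Measure.prod_restrict s t]
    exact hF.comp_snd (μ.restrict s)
  calc ∫ z in s ×ˢ t, f z ∂μ.prod ν ≤ ∫ z in s ×ˢ t, F z.2 ∂μ.prod ν :=
        setIntegral_mono_on hf hF' (hs.prod ht) fun z hz => h z.1 hz.1 z.2 hz.2
    _ = μ.real s * ∫ y in t, F y ∂ν := by
        have hmul := setIntegral_prod_mul (μ := μ) (ν := ν) (fun _ => (1 : ℝ)) F s t
        simpa only [one_mul, setIntegral_const, smul_eq_mul, mul_one] using hmul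

end Prod

/-- The L-shaped union of the rectangle `[a, b] × [a, c]` and its mirror image in the diagonal. -/
def lShape (a b c : ℝ) : Set (ℝ × ℝ) := Icc a b ×ˢ Icc a c ∪ Icc a c ×ˢ Icc a b

variable {f : ℝ × ℝ → ℝ} {a b c s t : ℝ}

lemma isCompact_lShape (a b c : ℝ) : IsCompact (lShape a b c) :=
  (isCompact_Icc.prod isCompact_Icc).union (isCompact_Icc.prod isCompact_Icc)

lemma integrableOn_pd_sq {K : Set (ℝ × ℝ)} (hK : IsCompact K)
    (hf : ∀ p ∈ K, ContDiffAt ℝ 1 f p) :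
    IntegrableOn (fun p => pd1 f p ^ 2) K ∧ IntegrableOn (fun p => pd2 f p ^ 2) K := by
  have h1 : ContinuousOn (fun p => pd1 f p ^ 2) K :=
    fun p hp => ((continuousAt_pd1 (hf p hp)).pow 2).continuousWithinAt
  have h2 : ContinuousOn (fun p => pd2 f p ^ 2) K :=
    fun p hp => ((continuousAt_pd2 (hf p hp)).pow 2).continuousWithinAt
  exact ⟨h1.integrableOn_compact hK, h2.integrableOn_compact hK⟩

lemma sq_sub_le_mul_setIntegral_pd1_sq (hf : ∀ x ∈ Icc a b, ContDiffAt ℝ 1 f (x, t)) {x y : ℝ}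
    (hx : x ∈ Icc a b) (hy : y ∈ Icc a b) :
    (f (x, t) - f (y, t)) ^ 2 ≤ (b - a) * ∫ s in Icc a b, pd1 f (s, t) ^ 2 :=
  sq_sub_le_mul_setIntegral_sq (g := fun s => f (s, t))
    (fun s hs => hasDerivAt_pd1 ((hf s hs).differentiableAt one_ne_zero))
    (fun s hs => (ContinuousAt.comp (f := fun s => (s, t)) (continuousAt_pd1 (hf s hs))
      (by fun_prop)).continuousWithinAt) hx hy

lemma sq_sub_le_mul_setIntegral_pd2_sq (hf : ∀ y ∈ Icc a b, ContDiffAt ℝ 1 f (s, y)) {x y : ℝ}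
    (hx : x ∈ Icc a b) (hy : y ∈ Icc a b) :
    (f (s, x) - f (s, y)) ^ 2 ≤ (b - a) * ∫ t in Icc a b, pd2 f (s, t) ^ 2 :=
  sq_sub_le_mul_setIntegral_sq (g := fun t => f (s, t))
    (fun t ht => hasDerivAt_pd2 ((hf t ht).differentiableAt one_ne_zero))
    (fun t ht => (ContinuousAt.comp (f := fun t => (s, t)) (continuousAt_pd2 (hf t ht))
      (by fun_prop)).continuousWithinAt) hx hy

lemma exists_setIntegral_pd2_sq_le (hac : a < c) (hcb : c ≤ b)
    (hf : ∀ p ∈ Icc a b ×ˢ Icc a c, ContDiffAt ℝ 1 f p) :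
    ∃ s ∈ Icc a c, (c - a) * ∫ y in Icc a c, pd2 f (s, y) ^ 2 ≤
      ∫ p in Icc a b ×ˢ Icc a c, pd2 f p ^ 2 := by
  have hi := (integrableOn_pd_sq (isCompact_Icc.prod isCompact_Icc) hf).2
  have hsub : Icc a c ×ˢ Icc a c ⊆ Icc a b ×ˢ Icc a c :=
    prod_mono (Icc_subset_Icc_right hcb) subset_rfl
  have hi' := hi.mono_set hsub
  obtain ⟨s, hs, h⟩ := exists_le_setAverage (μ := volume) (s := Icc a c) (by simp [hac])
    (by simp) (integrableOn_setIntegral_snd hi')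
  refine ⟨s, hs, ?_⟩
  rw [setAverage_eq, ← setIntegral_prod _ hi', volume_real_Icc_of_le hac.le, smul_eq_mul,
    inv_mul_eq_div, le_div_iff₀' (sub_pos.2 hac)] at h
  exact h.trans (setIntegral_mono_set hi (ae_of_all _ fun _ => sq_nonneg _) hsub.eventuallyLE)

-- Go from `(s, t)` to `(x, y)` along the vertical line through `s`, then horizontally.
lemma setIntegral_sub_sq_le_of_setIntegral_pd2_sq_le (hac : a < c) (hcb : c ≤ b)
    (hf : ∀ p ∈ Icc a b ×ˢ Icc a c, ContDiffAt ℝ 1 f p) (hs : s ∈ Icc a c) (ht : t ∈ Icc a c)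
    (h : (c - a) * ∫ y in Icc a c, pd2 f (s, y) ^ 2 ≤ ∫ p in Icc a b ×ˢ Icc a c, pd2 f p ^ 2) :
    ∫ p in Icc a b ×ˢ Icc a c, (f p - f (s, t)) ^ 2 ≤
      2 * (b - a) ^ 2 * ∫ p in Icc a b ×ˢ Icc a c, gradSq2 f p := by
  have hK : IsCompact (Icc a b ×ˢ Icc a c) := isCompact_Icc.prod isCompact_Icc
  obtain ⟨hi1, hi2⟩ := integrableOn_pd_sq hK hf
  set G := ∫ p in Icc a b ×ˢ Icc a c, pd2 f p ^ 2
  have hs' : s ∈ Icc a b := ⟨hs.1, hs.2.trans hcb⟩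
  have hi0 : IntegrableOn (fun p => (f p - f (s, t)) ^ 2) (Icc a b ×ˢ Icc a c) :=
    ContinuousOn.integrableOn_compact hK fun p hp =>
      (((hf p hp).continuousAt.sub continuousAt_const).pow 2).continuousWithinAt
  have hiA := (integrableOn_setIntegral_fst hi1).const_mul (2 * (b - a))
  have hiG : IntegrableOn (fun _ : ℝ => 2 * G) (Icc a c) :=
    integrableOn_const measure_Icc_lt_top.ne
  have hiAG : IntegrableOn (fun y => 2 * (b - a) * (∫ x in Icc a b, pd1 f (x, y) ^ 2) + 2 * G)
      (Icc a c) := hiA.add hiG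
  have hpt : ∀ x ∈ Icc a b, ∀ y ∈ Icc a c, (f (x, y) - f (s, t)) ^ 2 ≤
      2 * (b - a) * (∫ x in Icc a b, pd1 f (x, y) ^ 2) + 2 * G := by
    intro x hx y hy
    have hhor := sq_sub_le_mul_setIntegral_pd1_sq (fun x hx => hf (x, y) ⟨hx, hy⟩) hx hs'
    have hver := sq_sub_le_mul_setIntegral_pd2_sq (fun y hy => hf (s, y) ⟨hs', hy⟩) hy ht
    have htri := add_sq_le (a := f (x, y) - f (s, y)) (b := f (s, y) - f (s, t))
    rw [sub_add_sub_cancel] at htri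
    linarith
  calc ∫ p in Icc a b ×ˢ Icc a c, (f p - f (s, t)) ^ 2
      ≤ (b - a) * (2 * (b - a) * (∫ p in Icc a b ×ˢ Icc a c, pd1 f p ^ 2) + (c - a) * (2 * G)) := by
        have hle := setIntegral_prod_le_of_le_snd measurableSet_Icc measurableSet_Icc
          measure_Icc_lt_top.ne hi0 hiAG hpt
        rwa [volume_real_Icc_of_le (hac.le.trans hcb), integral_add hiA hiG, integral_const_mul,
          ← setIntegral_prod_symm _ hi1, setIntegral_const, volume_real_Icc_of_le hac.le,
          smul_eq_mul] at hle
    _ ≤ (b - a) * (2 * (b - a) * (∫ p in Icc a b ×ˢ Icc a c, pd1 f p ^ 2) + (b - a) * (2 * G)) := by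
        have hle : c - a ≤ b - a := by linarith
        exact mul_le_mul_of_nonneg_left (add_le_add_right (mul_le_mul_of_nonneg_right hle
          (mul_nonneg zero_le_two (setIntegral_sq_nonneg _ _))) _) (by linarith)
    _ = 2 * (b - a) ^ 2 * ∫ p in Icc a b ×ˢ Icc a c, gradSq2 f p := by
        simp only [gradSq2_eq_add]
        rw [integral_add hi1 hi2]
        ring

lemma setIntegral_union_le {α : Type*} [MeasurableSpace α] {μ : Measure α} {f : α → ℝ}
    {s t : Set α} (hs : IntegrableOn f s μ) (ht : IntegrableOn f t μ) (h0 : ∀ x, 0 ≤ f x) :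
    ∫ x in s ∪ t, f x ∂μ ≤ (∫ x in s, f x ∂μ) + ∫ x in t, f x ∂μ := by
  rw [← integral_add_measure hs ht]
  exact integral_mono_measure (Measure.restrict_union_le s t) (ae_of_all _ h0)
    (Integrable.add_measure hs ht)

lemma exists_setIntegral_lShape_sub_sq_le (hac : a < c) (hcb : c ≤ b)
    (hf : ∀ p ∈ lShape a b c, ContDiffAt ℝ 1 f p) :
    ∃ k, ∫ p in lShape a b c, (f p - k) ^ 2 ≤
      4 * (b - a) ^ 2 * ∫ p in lShape a b c, gradSq2 f p := by
  have hf' : ∀ p ∈ Icc a b ×ˢ Icc a c, ContDiffAt ℝ 1 (fun q : ℝ × ℝ => f q.swap) p :=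
    fun p hp => (hf p.swap (.inr hp.symm)).comp p (contDiffAt_snd.prodMk contDiffAt_fst)
  obtain ⟨s, hs, hsf⟩ := exists_setIntegral_pd2_sq_le hac hcb fun p hp => hf p (.inl hp)
  obtain ⟨t, ht, htf⟩ := exists_setIntegral_pd2_sq_le hac hcb hf'
  have hle := setIntegral_sub_sq_le_of_setIntegral_pd2_sq_le hac hcb
    (fun p hp => hf p (.inl hp)) hs ht hsf
  have hle' := setIntegral_sub_sq_le_of_setIntegral_pd2_sq_le hac hcb hf' ht hs htf
  rw [setIntegral_congr_fun (measurableSet_Icc.prod measurableSet_Icc)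
    (g := fun p => gradSq2 f p.swap) fun p hp => gradSq2_comp_swap
      ((hf p.swap (.inr hp.symm)).differentiableAt one_ne_zero)] at hle'
  simp only [Prod.swap_prod_mk, Measure.volume_eq_prod] at hle'
  rw [setIntegral_prod_swap _ _ fun p => (f p - f (s, t)) ^ 2, setIntegral_prod_swap,
    ← Measure.volume_eq_prod] at hle'
  have hK := isCompact_lShape a b c
  have hi : IntegrableOn (fun p => (f p - f (s, t)) ^ 2) (lShape a b c) :=
    ContinuousOn.integrableOn_compact hK fun p hp =>
      (((hf p hp).continuousAt.sub continuousAt_const).pow 2).continuousWithinAt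
  have hig : IntegrableOn (gradSq2 f) (lShape a b c) :=
    (integrableOn_pd_sq hK hf).1.add (integrableOn_pd_sq hK hf).2
  have hmono {T : Set (ℝ × ℝ)} (hT : T ⊆ lShape a b c) :
      ∫ p in T, gradSq2 f p ≤ ∫ p in lShape a b c, gradSq2 f p :=
    setIntegral_mono_set hig (ae_of_all _ fun p => gradSq2_nonneg f p) hT.eventuallyLE
  have hb := sq_nonneg (b - a)
  refine ⟨f (s, t), (setIntegral_union_le (hi.mono_set subset_union_left)
    (hi.mono_set subset_union_right) fun p => sq_nonneg _).trans ?_⟩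
  linarith [mul_le_mul_of_nonneg_left (hmono subset_union_left) hb,
    mul_le_mul_of_nonneg_left (hmono subset_union_right) hb]

end Poincare

/-! ### Smallness of the mass near the boundary -/

section Edge

variable {R δ a b : ℝ} {w : ℝ × ℝ → ℝ} {X : Set ℝ}

lemma setIntegral_inter_fst_preimage_sq_le {T : Set ℝ} (hab : a ≤ b) (hT : MeasurableSet T)
    (hX : MeasurableSet X) (hXf : volume X ≠ ⊤) (hw : ContDiff ℝ 1 w) (hw0 : ∀ y ∈ T, w (a, y) = 0)
    (hi : IntegrableOn (fun p => w p ^ 2) (Ioo a b ×ˢ T))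
    (hi1 : IntegrableOn (fun p => pd1 w p ^ 2) (Ioo a b ×ˢ T)) :
    ∫ p in (Ioo a b ×ˢ T) ∩ Prod.fst ⁻¹' X, w p ^ 2 ≤
      volume.real X * ((b - a) * ∫ p in Ioo a b ×ˢ T, pd1 w p ^ 2) := by
  have hset : (Ioo a b ×ˢ T) ∩ Prod.fst ⁻¹' X = (Ioo a b ∩ X) ×ˢ T := by
    rw [← prod_univ, prod_inter_prod, inter_univ]
  have hpt : ∀ x ∈ Ioo a b ∩ X, ∀ y ∈ T,
      w (x, y) ^ 2 ≤ (b - a) * ∫ x in Ioo a b, pd1 w (x, y) ^ 2 := fun x hx y hy => by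
    have hosc := sq_sub_le_mul_setIntegral_pd1_sq (t := y) (fun _ _ => hw.contDiffAt)
      (Ioo_subset_Icc_self hx.1) (left_mem_Icc.2 hab)
    rwa [hw0 y hy, sub_zero, integral_Icc_eq_integral_Ioo] at hosc
  have hfin : volume (Ioo a b ∩ X) ≠ ⊤ := measure_ne_top_of_subset inter_subset_right hXf
  have hle := setIntegral_prod_le_of_le_snd (measurableSet_Ioo.inter hX) hT hfin
    (hi.mono_set (prod_mono inter_subset_left subset_rfl))
    ((integrableOn_setIntegral_fst hi1).const_mul _) hpt
  rw [integral_const_mul, ← setIntegral_prod_symm _ hi1] at hle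
  rw [hset]
  refine hle.trans (mul_le_mul_of_nonneg_right (measureReal_mono inter_subset_right hXf) ?_)
  exact mul_nonneg (sub_nonneg.2 hab) (setIntegral_sq_nonneg _ _)

lemma setIntegral_gamR_inter_fst_preimage_sq_le (hR : 0 < R) (hX : MeasurableSet X)
    (hXf : volume X ≠ ⊤) (hw : ContDiff ℝ 1 w) (hw0 : ∀ y ∈ Ioo (-1) R, w (-1, y) = 0) :
    ∫ p in GamR R ∩ Prod.fst ⁻¹' X, w p ^ 2 ≤
      volume.real X * ((R + 1) * ∫ p in GamR R, pd1 w p ^ 2) := by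
  have hi : IntegrableOn (fun p => w p ^ 2) (GamR R) :=
    integrableOn_gamR_of_continuousOn hR (hw.continuous.pow 2).continuousOn
  have hi1 : IntegrableOn (fun p => pd1 w p ^ 2) (GamR R) :=
    integrableOn_gamR_of_continuousOn hR ((continuous_pd1 hw).pow 2).continuousOn
  have hmX : MeasurableSet (Prod.fst ⁻¹' X : Set (ℝ × ℝ)) := measurable_fst hX
  rw [← setIntegral_indicator hmX, setIntegral_gamR_eq_add hR (hi.indicator hmX),
    setIntegral_gamR_eq_add hR hi1, setIntegral_indicator hmX, setIntegral_indicator hmX]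
  rw [gamR_eq_disjoint_union hR] at hi hi1
  have hlong := setIntegral_inter_fst_preimage_sq_le (b := R) (by linarith) measurableSet_Ioo hX hXf
    hw (fun y hy => hw0 y ⟨hy.1, hy.2.trans hR⟩) (hi.mono_set subset_union_left)
    (hi1.mono_set subset_union_left)
  have hshort := setIntegral_inter_fst_preimage_sq_le (b := 0) (by norm_num) measurableSet_Ico hX
    hXf hw (fun y hy => hw0 y ⟨by linarith [hy.1], hy.2⟩) (hi.mono_set subset_union_right)
    (hi1.mono_set subset_union_right)
  refine (add_le_add hlong hshort).trans ?_
  have hnn : 0 ≤ volume.real X * (R * ∫ p in Ioo (-1) 0 ×ˢ Ico 0 R, pd1 w p ^ 2) :=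
    mul_nonneg measureReal_nonneg (mul_nonneg hR.le (setIntegral_sq_nonneg _ _))
  linarith

lemma setIntegral_gamR_inter_snd_preimage_sq_le {X : Set ℝ} (hR : 0 < R) (hX : MeasurableSet X)
    (hXf : volume X ≠ ⊤) (hw : ContDiff ℝ 1 w) (hw0 : ∀ x ∈ Ioo (-1) R, w (x, -1) = 0) :
    ∫ p in GamR R ∩ Prod.snd ⁻¹' X, w p ^ 2 ≤
      volume.real X * ((R + 1) * ∫ p in GamR R, pd2 w p ^ 2) := by
  have hws : ContDiff ℝ 1 fun p : ℝ × ℝ => w p.swap := hw.comp (contDiff_snd.prodMk contDiff_fst)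
  have hle := setIntegral_gamR_inter_fst_preimage_sq_le hR hX hXf hws hw0
  simp only [pd1_comp_swap (hw.differentiable one_ne_zero _)] at hle
  have hswap : GamR R ∩ Prod.fst ⁻¹' X = Prod.swap ⁻¹' (GamR R ∩ Prod.snd ⁻¹' X) := by
    rw [preimage_inter, preimage_swap_gamR]
    rfl
  rwa [setIntegral_gamR_comp_swap fun p => pd2 w p ^ 2, hswap,
    setIntegral_preimage_swap fun p => w p ^ 2] at hle

/-- The part of `Γ_R` at distance at least `δ` from the sides of the two rectangles
that make up `Γ_R`. -/
def core (R δ : ℝ) : Set (ℝ × ℝ) := lShape (-1 + δ) (R - δ) (-δ)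

lemma isCompact_core (R δ : ℝ) : IsCompact (core R δ) := isCompact_lShape _ _ _

lemma core_subset_gamR (hR : 0 < R) (hδ : 0 < δ) : core R δ ⊆ GamR R := by
  rw [gamR_eq_union hR, core, lShape]
  rintro ⟨a, b⟩
  simp only [mem_union, mem_prod, mem_Ioo, mem_Icc]
  grind

lemma setIntegral_gamR_diff_core_sq_le (hR : 0 < R) (hδ : 0 < δ) (hw : ContDiff ℝ 1 w)
    (hw1 : ∀ y ∈ Ioo (-1) R, w (-1, y) = 0) (hw2 : ∀ x ∈ Ioo (-1) R, w (x, -1) = 0) :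
    ∫ p in GamR R \ core R δ, w p ^ 2 ≤ 3 * δ * (R + 1) * ∫ p in GamR R, gradSq2 w p := by
  set X := Icc (-1) (-1 + δ) ∪ Icc (-δ) 0 ∪ Icc (R - δ) R
  have hX : IsCompact X := (isCompact_Icc.union isCompact_Icc).union isCompact_Icc
  have hvol : volume.real X ≤ 3 * δ := by
    refine (measureReal_union_le _ _).trans
      ((add_le_add_left (measureReal_union_le _ _) _).trans ?_)
    rw [volume_real_Icc_of_le, volume_real_Icc_of_le, volume_real_Icc_of_le] <;> linarith
  have hsub : GamR R \ core R δ ⊆ GamR R ∩ Prod.fst ⁻¹' X ∪ GamR R ∩ Prod.snd ⁻¹' X := by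
    rw [gamR_eq_union hR, core, lShape]
    rintro ⟨a, b⟩
    simp only [X, mem_union, mem_inter_iff, mem_preimage, Set.mem_sdiff, mem_prod, mem_Ioo, mem_Icc]
    grind
  have hi : IntegrableOn (fun p => w p ^ 2) (GamR R) :=
    integrableOn_gamR_of_continuousOn hR (hw.continuous.pow 2).continuousOn
  have hi1 : IntegrableOn (fun p => pd1 w p ^ 2) (GamR R) :=
    integrableOn_gamR_of_continuousOn hR ((continuous_pd1 hw).pow 2).continuousOn
  have hi2 : IntegrableOn (fun p => pd2 w p ^ 2) (GamR R) :=
    integrableOn_gamR_of_continuousOn hR ((continuous_pd2 hw).pow 2).continuousOn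
  have hle1 :=
    setIntegral_gamR_inter_fst_preimage_sq_le hR hX.measurableSet hX.measure_ne_top hw hw1
  have hle2 :=
    setIntegral_gamR_inter_snd_preimage_sq_le hR hX.measurableSet hX.measure_ne_top hw hw2
  have hgrad : ∫ p in GamR R, gradSq2 w p =
      (∫ p in GamR R, pd1 w p ^ 2) + ∫ p in GamR R, pd2 w p ^ 2 := integral_add hi1 hi2
  have hiU := (hi.mono_set (inter_subset_left (t := Prod.fst ⁻¹' X))).union
    (hi.mono_set (inter_subset_left (t := Prod.snd ⁻¹' X)))
  calc ∫ p in GamR R \ core R δ, w p ^ 2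
      ≤ ∫ p in GamR R ∩ Prod.fst ⁻¹' X ∪ GamR R ∩ Prod.snd ⁻¹' X, w p ^ 2 :=
        setIntegral_mono_set hiU (ae_of_all _ fun p => sq_nonneg (w p)) hsub.eventuallyLE
    _ ≤ (∫ p in GamR R ∩ Prod.fst ⁻¹' X, w p ^ 2) + ∫ p in GamR R ∩ Prod.snd ⁻¹' X, w p ^ 2 :=
        setIntegral_union_le (hi.mono_set inter_subset_left) (hi.mono_set inter_subset_left)
          fun p => sq_nonneg (w p)
    _ ≤ volume.real X * ((R + 1) * ∫ p in GamR R, gradSq2 w p) := by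
        rw [hgrad, mul_add, mul_add]
        exact add_le_add hle1 hle2
    _ ≤ 3 * δ * ((R + 1) * ∫ p in GamR R, gradSq2 w p) :=
        mul_le_mul_of_nonneg_right hvol
          (mul_nonneg (by linarith) (setIntegral_gradSq2_nonneg w _))
    _ = 3 * δ * (R + 1) * ∫ p in GamR R, gradSq2 w p := by ring

end Edge

/-! ### Almost-minimisers are almost parallel to the eigenfunction -/

section SquareIntegrable

variable {α : Type*} [MeasurableSpace α] {μ : Measure α} {s t : Set α} {u v : α → ℝ} {k θ : ℝ}

lemma integral_sub_two_mul_add_sq_mul {A B C : α → ℝ} (hA : Integrable A μ) (hB : Integrable B μ)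
    (hC : Integrable C μ) (k : ℝ) :
    ∫ x, (A x - 2 * k * B x + k ^ 2 * C x) ∂μ =
      (∫ x, A x ∂μ) - 2 * k * (∫ x, B x ∂μ) + k ^ 2 * ∫ x, C x ∂μ := by
  have hsub : Integrable (fun x => A x - 2 * k * B x) μ := hA.sub (hB.const_mul _)
  rw [integral_add hsub (hC.const_mul _), integral_sub hA (hB.const_mul _), integral_const_mul,
    integral_const_mul]

lemma integral_sub_const_mul_sq (hu : Integrable (fun x => u x ^ 2) μ)
    (hv : Integrable (fun x => v x ^ 2) μ) (huv : Integrable (fun x => u x * v x) μ) (k : ℝ) :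
    ∫ x, (u x - k * v x) ^ 2 ∂μ =
      (∫ x, u x ^ 2 ∂μ) - 2 * k * (∫ x, u x * v x ∂μ) + k ^ 2 * ∫ x, v x ^ 2 ∂μ := by
  rw [← integral_sub_two_mul_add_sq_mul hu huv hv]
  congr with x
  ring

lemma abs_integral_mul_le (hu : Integrable (fun x => u x ^ 2) μ)
    (hv : Integrable (fun x => v x ^ 2) μ) (huv : Integrable (fun x => u x * v x) μ) :
    |∫ x, u x * v x ∂μ| ≤ ((∫ x, u x ^ 2 ∂μ) + ∫ x, v x ^ 2 ∂μ) / 2 := by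
  rw [← integral_add hu hv, ← integral_div]
  refine abs_integral_le_integral_abs.trans
    (integral_mono huv.abs ((hu.add hv).div_const 2) fun x => ?_)
  change |u x * v x| ≤ (u x ^ 2 + v x ^ 2) / 2
  rw [abs_mul, ← sq_abs (u x), ← sq_abs (v x)]
  linarith [two_mul_le_add_sq |u x| |v x|]

-- Minimising the square over the multiple `k` turns closeness into a lower bound for the
-- inner product.
lemma integral_sq_mul_sub_le_sq_integral_mul (hu : Integrable (fun x => u x ^ 2) μ)
    (hv : Integrable (fun x => v x ^ 2) μ) (huv : Integrable (fun x => u x * v x) μ)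
    (hk : ∫ x, (u x - k * v x) ^ 2 ∂μ ≤ θ) :
    (∫ x, v x ^ 2 ∂μ) * ((∫ x, u x ^ 2 ∂μ) - θ) ≤ (∫ x, u x * v x ∂μ) ^ 2 := by
  rw [integral_sub_const_mul_sq hu hv huv] at hk
  have hv0 : 0 ≤ ∫ x, v x ^ 2 ∂μ := integral_nonneg fun x => sq_nonneg (v x)
  nlinarith [sq_nonneg ((∫ x, u x * v x ∂μ) - k * ∫ x, v x ^ 2 ∂μ),
    mul_le_mul_of_nonneg_left hk hv0]

lemma one_sub_le_abs_setIntegral_mul (ht : MeasurableSet t) (hts : t ⊆ s)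
    (hu : IntegrableOn (fun x => u x ^ 2) s μ) (hv : IntegrableOn (fun x => v x ^ 2) s μ)
    (huv : IntegrableOn (fun x => u x * v x) s μ) (hu1 : ∫ x in s, u x ^ 2 ∂μ = 1)
    (hv1 : ∫ x in s, v x ^ 2 ∂μ = 1) (hθ : θ ≤ 1 / 4) (hk : ∫ x in t, (u x - k * v x) ^ 2 ∂μ ≤ θ)
    (hut : ∫ x in s \ t, u x ^ 2 ∂μ ≤ θ) (hvt : ∫ x in s \ t, v x ^ 2 ∂μ ≤ θ) :
    1 - 3 * θ ≤ |∫ x in s, u x * v x ∂μ| := by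
  have hinner : 1 - 2 * θ ≤ |∫ x in t, u x * v x ∂μ| := by
    have hsplit := integral_sq_mul_sub_le_sq_integral_mul (hu.mono_set hts) (hv.mono_set hts)
      (huv.mono_set hts) hk
    rw [setIntegral_sdiff ht hu hts, hu1] at hut
    have hvt' : 0 ≤ ∫ x in s \ t, v x ^ 2 ∂μ := integral_nonneg fun x => sq_nonneg (v x)
    rw [setIntegral_sdiff ht hv hts, hv1] at hvt hvt'
    have hprod : (1 - θ) * (1 - 2 * θ) ≤ (∫ x in t, v x ^ 2 ∂μ) * ((∫ x in t, u x ^ 2 ∂μ) - θ) :=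
      mul_le_mul (by linarith) (by linarith) (by linarith) (by linarith)
    exact (le_abs_self _).trans (sq_le_sq.1 (by nlinarith [hvt'.trans hvt]))
  have hrem : |∫ x in s \ t, u x * v x ∂μ| ≤ θ :=
    (abs_integral_mul_le (hu.mono_set sdiff_subset) (hv.mono_set sdiff_subset)
      (huv.mono_set sdiff_subset)).trans (by linarith)
  have htri := abs_sub (∫ x in s, u x * v x ∂μ) (∫ x in s \ t, u x * v x ∂μ)
  rw [setIntegral_sdiff ht huv hts, sub_sub_cancel, ← setIntegral_sdiff ht huv hts] at htri
  linarith

end SquareIntegrable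

section Concentration

variable {R δ : ℝ} {v : ℝ × ℝ → ℝ}

lemma aecover_core (hR : 0 < R) :
    AECover (volume.restrict (GamR R)) (𝓝[>] 0) fun δ : ℝ => core R δ where
  measurableSet δ := (isCompact_core R δ).measurableSet
  ae_eventually_mem := by
    filter_upwards [ae_restrict_mem (measurableSet_gamR hR)] with ⟨a, b⟩ hp
    have ev {x : ℝ} (hx : 0 < x) : ∀ᶠ δ in 𝓝[>] (0 : ℝ), δ < x :=
      eventually_nhdsWithin_of_eventually_nhds (eventually_lt_nhds hx)
    rw [gamR_eq_union hR] at hp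
    rcases hp with ⟨ha, hb⟩ | ⟨ha, hb⟩
    · filter_upwards [ev (neg_lt_iff_pos_add.1 ha.1), ev (neg_pos.2 ha.2),
        ev (neg_lt_iff_pos_add.1 hb.1), ev (sub_pos.2 hb.2)] with δ h1 h2 h3 h4
      right
      constructor <;> constructor <;> linarith
    · filter_upwards [ev (neg_lt_iff_pos_add.1 ha.1), ev (sub_pos.2 ha.2),
        ev (neg_lt_iff_pos_add.1 hb.1), ev (neg_pos.2 hb.2)] with δ h1 h2 h3 h4
      left
      constructor <;> constructor <;> linarith

namespace IsFirstEF

lemma exists_bounds_core (hv : IsFirstEF R v) (hR : 0 < R) (hδ : 0 < δ) :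
    ∃ m M, 0 < m ∧ ∀ p ∈ core R δ, v p ∈ Icc m M := by
  have hsub := core_subset_gamR hR hδ
  have hcont : ContinuousOn v (core R δ) := hv.continuousOn.mono (hsub.trans subset_closure)
  obtain ⟨m, hm, hmv⟩ := (isCompact_core R δ).exists_forall_le' hcont fun p hp => hv.pos (hsub hp)
  obtain ⟨M, hM⟩ := (isCompact_core R δ).bddAbove_image hcont
  exact ⟨m, M, hm, fun p hp => ⟨hmv p hp, hM (mem_image_of_mem v hp)⟩⟩

lemma setIntegral_core_gradSq2_div_le (hv : IsFirstEF R v) (hR : 0 < R) (hδ : 0 < δ) {m : ℝ}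
    (hm : 0 < m) (hmv : ∀ p ∈ core R δ, m ≤ v p) {w : ℝ × ℝ → ℝ} (hw : ContDiff ℝ 1 w)
    (hw0 : VanishesNearDirB R w) :
    ∫ p in core R δ, gradSq2 (fun q => w q / v q) p ≤
      (m ^ 2)⁻¹ * ((∫ p in GamR R, gradSq2 w p) - lamR R * ∫ p in GamR R, w p ^ 2) := by
  obtain ⟨hi, hle⟩ := hv.picone hR hw hw0
  have hsub := core_subset_gamR hR hδ
  calc ∫ p in core R δ, gradSq2 (fun q => w q / v q) p
      ≤ ∫ p in core R δ, (m ^ 2)⁻¹ * (v p ^ 2 * gradSq2 (fun q => w q / v q) p) := by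
        refine integral_mono_of_nonneg (ae_of_all _ fun p => gradSq2_nonneg _ p)
          ((hi.mono_set hsub).const_mul _) ?_
        filter_upwards [ae_restrict_mem (isCompact_core R δ).measurableSet] with p hp
        have hmp := pow_le_pow_left₀ hm.le (hmv p hp) 2
        rw [← mul_assoc]
        refine le_mul_of_one_le_left (gradSq2_nonneg _ p) ?_
        rwa [inv_mul_eq_div, one_le_div (by positivity)]
    _ = (m ^ 2)⁻¹ * ∫ p in core R δ, v p ^ 2 * gradSq2 (fun q => w q / v q) p :=
        integral_const_mul _ _
    _ ≤ (m ^ 2)⁻¹ * ((∫ p in GamR R, gradSq2 w p) - lamR R * ∫ p in GamR R, w p ^ 2) := by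
        refine mul_le_mul_of_nonneg_left (le_trans ?_ hle) (by positivity)
        exact setIntegral_mono_set hi
          (ae_of_all _ fun p => mul_nonneg (sq_nonneg _) (gradSq2_nonneg _ p)) hsub.eventuallyLE

-- The Poincaré inequality is applied to `w / v`, whose weighted energy Picone's identity controls.
lemma exists_setIntegral_core_sub_mul_sq_le (hv : IsFirstEF R v) (hR : 0 < R) (hδ : 0 < δ)
    (hδ' : δ < 1 / 2) :
    ∃ C, 0 < C ∧ ∀ w, ContDiff ℝ 1 w → VanishesNearDirB R w →
      ∃ k, ∫ p in core R δ, (w p - k * v p) ^ 2 ≤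
        C * ((∫ p in GamR R, gradSq2 w p) - lamR R * ∫ p in GamR R, w p ^ 2) := by
  obtain ⟨m, M, hm, hmM⟩ := hv.exists_bounds_core hR hδ
  have hsub := core_subset_gamR hR hδ
  set L := R - δ - (-1 + δ)
  refine ⟨(M ^ 2 + 1) * (4 * L ^ 2 * (m ^ 2)⁻¹), ?_, fun w hw hw0 => ?_⟩
  · have : 0 < L := show 0 < R - δ - (-1 + δ) by linarith
    positivity
  have hpos : ∀ p ∈ core R δ, 0 < v p := fun p hp => hv.pos (hsub hp)
  have hf : ∀ p ∈ core R δ, ContDiffAt ℝ 1 (fun q => w q / v q) p := fun p hp =>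
    hw.contDiffAt.div (hv.contDiffAt_one (.inl (hsub hp))) (hpos p hp).ne'
  obtain ⟨k, hk⟩ := exists_setIntegral_lShape_sub_sq_le (by linarith) (by linarith) hf
  have hi : IntegrableOn (fun p => (w p / v p - k) ^ 2) (core R δ) :=
    ContinuousOn.integrableOn_compact (isCompact_core R δ) fun p hp =>
      (((hf p hp).continuousAt.sub continuousAt_const).pow 2).continuousWithinAt
  refine ⟨k, ?_⟩
  calc ∫ p in core R δ, (w p - k * v p) ^ 2
      ≤ ∫ p in core R δ, (M ^ 2 + 1) * (w p / v p - k) ^ 2 := by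
        refine integral_mono_of_nonneg (ae_of_all _ fun p => sq_nonneg _) (hi.const_mul _) ?_
        filter_upwards [ae_restrict_mem (isCompact_core R δ).measurableSet] with p hp
        have hvp := hpos p hp
        have hvM := pow_le_pow_left₀ hvp.le (hmM p hp).2 2
        calc (w p - k * v p) ^ 2 = v p ^ 2 * (w p / v p - k) ^ 2 := by field_simp
          _ ≤ (M ^ 2 + 1) * (w p / v p - k) ^ 2 :=
            mul_le_mul_of_nonneg_right (by linarith) (sq_nonneg _)
    _ = (M ^ 2 + 1) * ∫ p in core R δ, (w p / v p - k) ^ 2 := integral_const_mul _ _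
    _ ≤ (M ^ 2 + 1) * (4 * L ^ 2 * ((m ^ 2)⁻¹ *
          ((∫ p in GamR R, gradSq2 w p) - lamR R * ∫ p in GamR R, w p ^ 2))) := by
        refine mul_le_mul_of_nonneg_left (hk.trans ?_) (by positivity)
        exact mul_le_mul_of_nonneg_left
          (hv.setIntegral_core_gradSq2_div_le hR hδ hm (fun p hp => (hmM p hp).1) hw hw0)
          (by positivity)
    _ = _ := by ring

lemma exists_core_edge_small (hv : IsFirstEF R v) (hR : 0 < R) {θ : ℝ} (hθ : 0 < θ) :
    ∃ δ, 0 < δ ∧ δ < 1 / 2 ∧ ∫ p in GamR R \ core R δ, v p ^ 2 ≤ θ ∧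
      3 * δ * (R + 1) * (lamR R + 1) ≤ θ := by
  have hcover := (aecover_core hR).integral_tendsto_of_countably_generated (hv.integrableOn_sq hR)
  rw [hv.setIntegral_sq] at hcover
  have hedge : Tendsto (fun δ : ℝ => 3 * δ * (R + 1) * (lamR R + 1)) (𝓝[>] 0) (𝓝 0) := by
    refine tendsto_nhdsWithin_of_tendsto_nhds (Continuous.tendsto' (by fun_prop) _ _ (by simp))
  obtain ⟨δ, hmass, hδθ, hδ', hδ⟩ := ((hcover.eventually_const_lt (sub_lt_self 1 hθ)).and
    ((hedge.eventually_lt_const hθ).and ((eventually_nhdsWithin_of_eventually_nhds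
      (eventually_lt_nhds one_half_pos)).and eventually_mem_nhdsWithin))).exists
  refine ⟨δ, hδ, hδ', ?_, hδθ.le⟩
  have hsub := core_subset_gamR hR hδ
  rw [Measure.restrict_restrict (isCompact_core R δ).measurableSet,
    inter_eq_left.2 hsub] at hmass
  rw [setIntegral_sdiff (isCompact_core R δ).measurableSet (hv.integrableOn_sq hR) hsub,
    hv.setIntegral_sq]
  linarith

lemma exists_one_sub_le_abs_setIntegral_mul (hv : IsFirstEF R v) (hR : 0 < R) {η : ℝ}
    (hη : 0 < η) :
    ∃ γ, 0 < γ ∧ ∀ w, ContDiff ℝ 1 w → VanishesNearDirB R w → ∫ p in GamR R, w p ^ 2 = 1 →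
      ∫ p in GamR R, gradSq2 w p ≤ lamR R + γ → 1 - η ≤ |∫ p in GamR R, w p * v p| := by
  set θ := min (1 / 4) (η / 3)
  have hθ : 0 < θ := lt_min (by norm_num) (by linarith)
  obtain ⟨δ, hδ, hδ', hvδ, hwδ⟩ := hv.exists_core_edge_small hR hθ
  obtain ⟨C, hC, hclose⟩ := hv.exists_setIntegral_core_sub_mul_sq_le hR hδ hδ'
  refine ⟨min 1 (θ / C), lt_min one_pos (div_pos hθ hC), fun w hw hw0 hw1 hwγ => ?_⟩
  obtain ⟨k, hk⟩ := hclose w hw hw0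
  have hkθ : ∫ p in core R δ, (w p - k * v p) ^ 2 ≤ θ := by
    refine hk.trans ?_
    rw [hw1, mul_one, ← le_div_iff₀' hC]
    linarith [min_le_right 1 (θ / C)]
  have hzero {a b : ℝ} (hp : min a b = -1) (ha : a < R) (hb : b < R) : w (a, b) = 0 :=
    hw0.eq_zero_of_mem_dirB hR ((mk_mem_dirB_iff hR).2 ⟨.inl hp, ha, hb⟩)
  have hwedge : ∫ p in GamR R \ core R δ, w p ^ 2 ≤ θ := by
    refine (setIntegral_gamR_diff_core_sq_le hR hδ hw
      (fun y hy => hzero (min_eq_left hy.1.le) (by linarith) hy.2)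
      fun x hx => hzero (min_eq_right hx.1.le) hx.2 (by linarith)).trans (le_trans ?_ hwδ)
    exact mul_le_mul_of_nonneg_left (by linarith [min_le_left 1 (θ / C)]) (by positivity)
  have hiw : IntegrableOn (fun p => w p ^ 2) (GamR R) :=
    integrableOn_gamR_of_continuousOn hR (hw.continuous.pow 2).continuousOn
  have hiwv : IntegrableOn (fun p => w p * v p) (GamR R) :=
    integrableOn_gamR_of_continuousOn hR (hw.continuous.continuousOn.mul hv.continuousOn)
  have h := one_sub_le_abs_setIntegral_mul (isCompact_core R δ).measurableSet
    (core_subset_gamR hR hδ) hiw (hv.integrableOn_sq hR) hiwv hw1 hv.setIntegral_sq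
    (min_le_left _ _) hkθ hwedge hvδ
  linarith [min_le_right (1 / 4) (η / 3)]

end IsFirstEF

end Concentration

/-! ### The first variation of the energy under stretching -/

section FirstVariation

variable {R s θ : ℝ} {u v w : ℝ × ℝ → ℝ} {p : ℝ × ℝ}

/-- The rate `κ_R(x) = 2 max(x, 0) / R²` at which the arms of the guide are stretched at the point
`x`; it is the derivative in `x` of the displacement `max(x, 0)² / R²`, which moves the end `x = R`
of the arm by `1`. -/
def stretchRate (R x : ℝ) : ℝ := 2 * max x 0 / R ^ 2

lemma continuous_stretchRate (R : ℝ) : Continuous (stretchRate R) := by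
  unfold stretchRate
  fun_prop

lemma stretchRate_of_nonpos (R : ℝ) {x : ℝ} (hx : x ≤ 0) : stretchRate R x = 0 := by
  rw [stretchRate, max_eq_right hx, mul_zero, zero_div]

lemma stretchRate_nonneg (R x : ℝ) : 0 ≤ stretchRate R x := by
  unfold stretchRate
  positivity

lemma stretchRate_le (hR : 0 < R) {x : ℝ} (hx : x ≤ R) : stretchRate R x ≤ 2 / R := by
  rw [stretchRate, div_le_div_iff₀ (by positivity) hR]
  nlinarith [max_le hx hR.le]

lemma stretchRate_add_le (hR : 0 < R) (hp : p ∈ GamR R) :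
    stretchRate R p.1 + stretchRate R p.2 ≤ 4 / R := by
  have h1 := stretchRate_le hR (fst_lt_and_snd_lt_of_mem_gamR hR hp).1.le
  have h2 := stretchRate_le hR (fst_lt_and_snd_lt_of_mem_gamR hR hp).2.le
  rw [show (4 : ℝ) / R = 2 / R + 2 / R by ring]
  linarith

/-- The density of the derivative in `h`, at `h = 0`, of the energy `∫ (|∇u|² - λ_R u²)` pulled back
to `Γ_R` by the stretching of the arms with rate `κ_R`. -/
def firstVariation (R : ℝ) (u : ℝ × ℝ → ℝ) (p : ℝ × ℝ) : ℝ :=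
  (stretchRate R p.2 - stretchRate R p.1) * (pd1 u p ^ 2 - pd2 u p ^ 2)
    - lamR R * ((stretchRate R p.1 + stretchRate R p.2) * u p ^ 2)

lemma continuousAt_firstVariation (hu : ContDiffAt ℝ 1 u p) :
    ContinuousAt (firstVariation R u) p := by
  have hκ1 : Continuous fun p : ℝ × ℝ => stretchRate R p.1 :=
    (continuous_stretchRate R).comp continuous_fst
  have hκ2 : Continuous fun p : ℝ × ℝ => stretchRate R p.2 :=
    (continuous_stretchRate R).comp continuous_snd
  exact ((hκ2.sub hκ1).continuousAt.mul
    (((continuousAt_pd1 hu).pow 2).sub ((continuousAt_pd2 hu).pow 2))).sub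
      (continuousAt_const.mul ((hκ1.add hκ2).continuousAt.mul (hu.continuousAt.pow 2)))

lemma abs_mul_sub_le_mul_add {κ₁ κ₂ K x y z l : ℝ} (hκ₁ : 0 ≤ κ₁) (hκ₂ : 0 ≤ κ₂)
    (hK : κ₁ + κ₂ ≤ K) (hl : 0 ≤ l) :
    |(κ₂ - κ₁) * (x - y) - l * ((κ₁ + κ₂) * z)| ≤ K * (|x| + |y| + l * |z|) := by
  have hdiff : |κ₂ - κ₁| ≤ K := abs_le.2 ⟨by linarith, by linarith⟩
  calc |(κ₂ - κ₁) * (x - y) - l * ((κ₁ + κ₂) * z)|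
      ≤ |κ₂ - κ₁| * |x - y| + l * ((κ₁ + κ₂) * |z|) := by
        refine (abs_sub _ _).trans_eq ?_
        rw [abs_mul, abs_mul, abs_mul, abs_of_nonneg hl, abs_of_nonneg (add_nonneg hκ₁ hκ₂)]
    _ ≤ K * (|x| + |y|) + l * (K * |z|) := by
        have hK0 : 0 ≤ K := (add_nonneg hκ₁ hκ₂).trans hK
        gcongr
        exact abs_sub x y
    _ = K * (|x| + |y| + l * |z|) := by ring

lemma abs_firstVariation_le (hR : 0 < R) (hp : p ∈ GamR R) :
    |firstVariation R u p| ≤ 4 / R * (gradSq2 u p + lamR R * u p ^ 2) := by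
  have hle := abs_mul_sub_le_mul_add (x := pd1 u p ^ 2) (y := pd2 u p ^ 2) (z := u p ^ 2)
    (stretchRate_nonneg R p.1) (stretchRate_nonneg R p.2) (stretchRate_add_le hR hp) (lamR_nonneg R)
  simp only [abs_sq, ← gradSq2_eq_add] at hle
  exact hle

lemma integrableOn_firstVariation (hR : 0 < R) (hC : ∀ p ∈ GamR R, ContDiffAt ℝ 1 u p)
    (hg : IntegrableOn (gradSq2 u) (GamR R)) (hu : IntegrableOn (fun p => u p ^ 2) (GamR R)) :
    IntegrableOn (firstVariation R u) (GamR R) := by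
  refine Integrable.mono' ((hg.add (hu.const_mul (lamR R))).const_mul (4 / R))
    (ContinuousOn.aestronglyMeasurable (fun p hp =>
      (continuousAt_firstVariation (hC p hp)).continuousWithinAt) (measurableSet_gamR hR)) ?_
  filter_upwards [ae_restrict_mem (measurableSet_gamR hR)] with p hp
  exact abs_firstVariation_le hR hp

lemma abs_sq_sub_sq_le (hs : s ^ 2 = 1) (hθ : 0 < θ) (a b : ℝ) :
    |a ^ 2 - b ^ 2| ≤ (1 + θ⁻¹) * (a - s * b) ^ 2 + θ * b ^ 2 := by
  set z := a - s * b
  have hsq : a ^ 2 - b ^ 2 = z ^ 2 + 2 * (z * (s * b)) := by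
    linear_combination b ^ 2 * hs
  have hamgm (t : ℝ) (ht : t ^ 2 = 1) : 2 * (t * (z * (s * b))) ≤ θ⁻¹ * z ^ 2 + θ * b ^ 2 := by
    have hnn : 0 ≤ θ⁻¹ * (z - θ * (t * (s * b))) ^ 2 := by positivity
    have hexp : θ⁻¹ * (z - θ * (t * (s * b))) ^ 2 =
        θ⁻¹ * z ^ 2 - 2 * (t * (z * (s * b))) + θ * b ^ 2 := by
      field_simp
      linear_combination θ ^ 2 * b ^ 2 * (s ^ 2 * ht + hs)
    linarith
  rw [hsq, abs_le]
  constructor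
  · linarith [hamgm (-1) (by norm_num), sq_nonneg z]
  · linarith [hamgm 1 (by norm_num)]

lemma pd1_sub_const_mul (hw : DifferentiableAt ℝ w p) (hv : DifferentiableAt ℝ v p) (s : ℝ) :
    pd1 (fun q => w q - s * v q) p = pd1 w p - s * pd1 v p := by
  rw [pd1, fderiv_fun_sub hw (hv.const_mul s), fderiv_const_mul hv]
  rfl

lemma pd2_sub_const_mul (hw : DifferentiableAt ℝ w p) (hv : DifferentiableAt ℝ v p) (s : ℝ) :
    pd2 (fun q => w q - s * v q) p = pd2 w p - s * pd2 v p := by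
  rw [pd2, fderiv_fun_sub hw (hv.const_mul s), fderiv_const_mul hv]
  rfl

lemma gradSq2_sub_const_mul (hw : DifferentiableAt ℝ w p) (hv : DifferentiableAt ℝ v p) (s : ℝ) :
    gradSq2 (fun q => w q - s * v q) p =
      gradSq2 w p - 2 * s * (pd1 w p * pd1 v p + pd2 w p * pd2 v p) + s ^ 2 * gradSq2 v p := by
  rw [gradSq2_eq_add, pd1_sub_const_mul hw hv, pd2_sub_const_mul hw hv, gradSq2_eq_add,
    gradSq2_eq_add]
  ring

lemma abs_firstVariation_sub_le (hR : 0 < R) (hs : s ^ 2 = 1) (hθ : 0 < θ) (hp : p ∈ GamR R)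
    (hw : DifferentiableAt ℝ w p) (hv : DifferentiableAt ℝ v p) :
    |firstVariation R w p - firstVariation R v p| ≤
      4 / R * ((1 + θ⁻¹) * (gradSq2 (fun q => w q - s * v q) p + lamR R * (w p - s * v p) ^ 2) +
        θ * (gradSq2 v p + lamR R * v p ^ 2)) := by
  have hl := lamR_nonneg R
  rw [gradSq2_eq_add, pd1_sub_const_mul hw hv, pd2_sub_const_mul hw hv, gradSq2_eq_add]
  calc |firstVariation R w p - firstVariation R v p|
      = |(stretchRate R p.2 - stretchRate R p.1) *
            ((pd1 w p ^ 2 - pd1 v p ^ 2) - (pd2 w p ^ 2 - pd2 v p ^ 2)) -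
          lamR R * ((stretchRate R p.1 + stretchRate R p.2) * (w p ^ 2 - v p ^ 2))| := by
        rw [firstVariation, firstVariation]
        ring_nf
    _ ≤ 4 / R * (|pd1 w p ^ 2 - pd1 v p ^ 2| + |pd2 w p ^ 2 - pd2 v p ^ 2| +
          lamR R * |w p ^ 2 - v p ^ 2|) :=
        abs_mul_sub_le_mul_add (stretchRate_nonneg R p.1) (stretchRate_nonneg R p.2)
          (stretchRate_add_le hR hp) hl
    _ ≤ 4 / R * (((1 + θ⁻¹) * (pd1 w p - s * pd1 v p) ^ 2 + θ * pd1 v p ^ 2) +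
          ((1 + θ⁻¹) * (pd2 w p - s * pd2 v p) ^ 2 + θ * pd2 v p ^ 2) +
          lamR R * ((1 + θ⁻¹) * (w p - s * v p) ^ 2 + θ * v p ^ 2)) := by
        gcongr <;> exact abs_sq_sub_sq_le hs hθ _ _
    _ = _ := by ring

namespace IsFirstEF

lemma integrableOn_firstVariation (hv : IsFirstEF R v) (hR : 0 < R) :
    IntegrableOn (firstVariation R v) (GamR R) :=
  _root_.integrableOn_firstVariation hR (fun _ hp => hv.contDiffAt_one (.inl hp))
    (hv.integrableOn_gradSq2_and_le hR).1 (hv.integrableOn_sq hR)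

lemma setIntegral_gradSq2_sub_mul_le (hv : IsFirstEF R v) (hR : 0 < R) (hw : ContDiff ℝ 1 w)
    (hw0 : VanishesNearDirB R w) (hs : s ^ 2 = 1) :
    IntegrableOn (gradSq2 fun q => w q - s * v q) (GamR R) ∧
    ∫ p in GamR R, gradSq2 (fun q => w q - s * v q) p ≤
      (∫ p in GamR R, gradSq2 w p) - 2 * lamR R * (s * ∫ p in GamR R, w p * v p) + lamR R := by
  obtain ⟨hgv, hgvle⟩ := hv.integrableOn_gradSq2_and_le hR
  obtain ⟨hx, hxeq⟩ := hv.weak_formulation hR hw0 fun _ _ => hw.contDiffAt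
  have hgw := integrableOn_gradSq2 hR hw
  have heq : EqOn (gradSq2 fun q => w q - s * v q) (fun p => gradSq2 w p -
      2 * s * (pd1 w p * pd1 v p + pd2 w p * pd2 v p) + s ^ 2 * gradSq2 v p) (GamR R) :=
    fun p hp => gradSq2_sub_const_mul (hw.differentiable one_ne_zero p)
      (hv.differentiableAt (.inl hp)) s
  refine ⟨IntegrableOn.congr_fun ((hgw.sub (hx.const_mul _)).add (hgv.const_mul _)) heq.symm
    (measurableSet_gamR hR), ?_⟩
  rw [setIntegral_congr_fun (measurableSet_gamR hR) heq,
    integral_sub_two_mul_add_sq_mul hgw hx hgv, hxeq, hs]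
  linarith

lemma exists_sq_eq_one_mul_eq_abs (x : ℝ) : ∃ s : ℝ, s ^ 2 = 1 ∧ s * x = |x| := by
  rcases abs_choice x with h | h
  · exact ⟨1, by norm_num, by rw [h, one_mul]⟩
  · exact ⟨-1, by norm_num, by rw [h, neg_one_mul]⟩

lemma exists_setIntegral_gradSq2_sub_add_le (hv : IsFirstEF R v) (hR : 0 < R) {ε : ℝ}
    (hε : 0 < ε) :
    ∃ γ, 0 < γ ∧ ∀ w, ContDiff ℝ 1 w → VanishesNearDirB R w → ∫ p in GamR R, w p ^ 2 = 1 →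
      ∫ p in GamR R, gradSq2 w p ≤ lamR R + γ →
      ∃ s : ℝ, s ^ 2 = 1 ∧
        IntegrableOn (fun p => gradSq2 (fun q => w q - s * v q) p + lamR R * (w p - s * v p) ^ 2)
          (GamR R) ∧
        ∫ p in GamR R, (gradSq2 (fun q => w q - s * v q) p + lamR R * (w p - s * v p) ^ 2) ≤ ε := by
  have hl := lamR_nonneg R
  set η := ε / (8 * (lamR R + 1))
  have hη : 0 < η := by positivity
  have hηε : 4 * lamR R * η ≤ ε / 2 := by
    have hηeq : 4 * (lamR R + 1) * η = ε / 2 := by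
      simp only [η]
      field_simp
      norm_num
    linarith
  obtain ⟨γ, hγ, hconc⟩ := hv.exists_one_sub_le_abs_setIntegral_mul hR hη
  refine ⟨min γ (ε / 2), lt_min hγ (half_pos hε), fun w hw hw0 hw1 hwγ => ?_⟩
  set P := ∫ p in GamR R, w p * v p
  have hP : 1 - η ≤ |P| := hconc w hw hw0 hw1 (by linarith [min_le_left γ (ε / 2)])
  obtain ⟨s, hs, hsP⟩ := exists_sq_eq_one_mul_eq_abs P
  obtain ⟨hig, hgle⟩ := hv.setIntegral_gradSq2_sub_mul_le hR hw hw0 hs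
  have hiw : IntegrableOn (fun p => w p ^ 2) (GamR R) :=
    integrableOn_gamR_of_continuousOn hR (hw.continuous.pow 2).continuousOn
  have hiwv : IntegrableOn (fun p => w p * v p) (GamR R) :=
    integrableOn_gamR_of_continuousOn hR (hw.continuous.continuousOn.mul hv.continuousOn)
  have hi : IntegrableOn (fun p => lamR R * (w p - s * v p) ^ 2) (GamR R) :=
    integrableOn_gamR_of_continuousOn hR (continuousOn_const.mul
      ((hw.continuous.continuousOn.sub (continuousOn_const.mul hv.continuousOn)).pow 2))
  refine ⟨s, hs, hig.add hi, ?_⟩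
  rw [integral_add hig hi, integral_const_mul,
    integral_sub_const_mul_sq hiw (hv.integrableOn_sq hR) hiwv, hw1, hv.setIntegral_sq, hs]
  rw [hsP] at hgle
  have hlP := mul_le_mul_of_nonneg_left hP (mul_nonneg zero_le_four hl)
  calc _ ≤ (lamR R + ε / 2) - 2 * lamR R * |P| + lamR R + lamR R * (2 - 2 * (s * P)) := by
        linarith [min_le_right γ (ε / 2)]
    _ ≤ ε := by
        rw [hsP]
        linarith

lemma abs_setIntegral_firstVariation_sub_le (hv : IsFirstEF R v) (hR : 0 < R) (hθ : 0 < θ)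
    (hs : s ^ 2 = 1) (hw : ContDiff ℝ 1 w)
    (hi : IntegrableOn (fun p => gradSq2 (fun q => w q - s * v q) p + lamR R * (w p - s * v p) ^ 2)
      (GamR R)) :
    |(∫ p in GamR R, firstVariation R w p) - ∫ p in GamR R, firstVariation R v p| ≤
      4 / R * ((1 + θ⁻¹) * (∫ p in GamR R,
        (gradSq2 (fun q => w q - s * v q) p + lamR R * (w p - s * v p) ^ 2)) +
        θ * (2 * lamR R)) := by
  obtain ⟨hgv, hgvle⟩ := hv.integrableOn_gradSq2_and_le hR
  have hv2 : IntegrableOn (fun p => lamR R * v p ^ 2) (GamR R) :=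
    (hv.integrableOn_sq hR).const_mul _
  have hvle : ∫ p in GamR R, (gradSq2 v p + lamR R * v p ^ 2) ≤ 2 * lamR R := by
    rw [integral_add hgv hv2, integral_const_mul, hv.setIntegral_sq]
    linarith
  have hiFw := _root_.integrableOn_firstVariation hR (fun _ _ => hw.contDiffAt)
    (integrableOn_gradSq2 hR hw)
    (integrableOn_gamR_of_continuousOn hR (hw.continuous.pow 2).continuousOn)
  have hiFv := hv.integrableOn_firstVariation hR
  have hi1 := hi.const_mul (1 + θ⁻¹)
  have hi2 : IntegrableOn (fun p => θ * (gradSq2 v p + lamR R * v p ^ 2)) (GamR R) :=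
    (hgv.add hv2).const_mul θ
  have hsum : IntegrableOn (fun p => (1 + θ⁻¹) * (gradSq2 (fun q => w q - s * v q) p +
      lamR R * (w p - s * v p) ^ 2) + θ * (gradSq2 v p + lamR R * v p ^ 2)) (GamR R) := hi1.add hi2
  rw [← integral_sub hiFw hiFv]
  calc |∫ p in GamR R, (firstVariation R w p - firstVariation R v p)|
      ≤ ∫ p in GamR R, |firstVariation R w p - firstVariation R v p| :=
        abs_integral_le_integral_abs
    _ ≤ ∫ p in GamR R, 4 / R * ((1 + θ⁻¹) * (gradSq2 (fun q => w q - s * v q) p +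
          lamR R * (w p - s * v p) ^ 2) + θ * (gradSq2 v p + lamR R * v p ^ 2)) :=
        setIntegral_mono_on (hiFw.sub hiFv).abs (hsum.const_mul _)
          (measurableSet_gamR hR) fun p hp => abs_firstVariation_sub_le hR hs hθ hp
            (hw.differentiable one_ne_zero p) (hv.differentiableAt (.inl hp))
    _ = 4 / R * ((1 + θ⁻¹) * (∫ p in GamR R, (gradSq2 (fun q => w q - s * v q) p +
          lamR R * (w p - s * v p) ^ 2)) +
          θ * ∫ p in GamR R, (gradSq2 v p + lamR R * v p ^ 2)) := by
        rw [integral_const_mul, integral_add hi1 hi2, integral_const_mul, integral_const_mul]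
    _ ≤ _ := by gcongr

lemma exists_abs_setIntegral_firstVariation_sub_le (hv : IsFirstEF R v) (hR : 0 < R) {ε : ℝ}
    (hε : 0 < ε) :
    ∃ γ, 0 < γ ∧ ∀ w, ContDiff ℝ 1 w → VanishesNearDirB R w → ∫ p in GamR R, w p ^ 2 = 1 →
      ∫ p in GamR R, gradSq2 w p ≤ lamR R + γ →
      |(∫ p in GamR R, firstVariation R w p) - ∫ p in GamR R, firstVariation R v p| ≤ ε := by
  have hl := lamR_nonneg R
  set θ := ε * R / (16 * (lamR R + 1)) with hθdef
  have hθ : 0 < θ := by positivity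
  set σ := ε * R / (8 * (1 + θ⁻¹)) with hσdef
  have hσ : 0 < σ := by positivity
  obtain ⟨γ, hγ, hclose⟩ := hv.exists_setIntegral_gradSq2_sub_add_le hR hσ
  refine ⟨γ, hγ, fun w hw hw0 hw1 hwγ => ?_⟩
  obtain ⟨s, hs, hi, hz⟩ := hclose w hw hw0 hw1 hwγ
  refine (hv.abs_setIntegral_firstVariation_sub_le hR hθ hs hw hi).trans ?_
  calc _ ≤ 4 / R * ((1 + θ⁻¹) * σ + θ * (2 * (lamR R + 1))) := by
        gcongr
        linarith
    _ = ε := by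
        rw [hσdef, hθdef]
        field_simp
        norm_num

end IsFirstEF

end FirstVariation

/-! ### Stretching the arms of the guide -/

section Stretch

variable {R h x : ℝ} {p : ℝ × ℝ} {u : ℝ × ℝ → ℝ}

/-- The map `φ(x) = x + h max(x, 0)² / R²` of the line, which fixes `(-∞, 0]` and sends `R` to
`R + h`. The displacement is written as the integral of `stretchRate R`. -/
def stretchMap (R h x : ℝ) : ℝ := x + h * ∫ t in (0 : ℝ)..x, stretchRate R t

lemma hasDerivAt_stretchMap (R h x : ℝ) :
    HasDerivAt (stretchMap R h) (1 + h * stretchRate R x) x :=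
  (hasDerivAt_id x).add
    (((continuous_stretchRate R).integral_hasStrictDerivAt 0 x).hasDerivAt.const_mul h)

lemma contDiff_stretchMap (R h : ℝ) : ContDiff ℝ 1 (stretchMap R h) := by
  have hderiv : deriv (stretchMap R h) = fun x => 1 + h * stretchRate R x :=
    funext fun x => (hasDerivAt_stretchMap R h x).deriv
  refine contDiff_one_iff_deriv.2 ⟨fun x => (hasDerivAt_stretchMap R h x).differentiableAt, ?_⟩
  rw [hderiv]
  exact continuous_const.add (continuous_const.mul (continuous_stretchRate R))

lemma stretchMap_of_nonpos (R h : ℝ) (hx : x ≤ 0) : stretchMap R h x = x := by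
  have hzero : ∫ t in (0 : ℝ)..x, stretchRate R t = 0 := by
    rw [intervalIntegral.integral_congr (g := fun _ => (0 : ℝ)), intervalIntegral.integral_zero]
    intro t ht
    rw [uIcc_of_ge hx] at ht
    exact stretchRate_of_nonpos R ht.2
  rw [stretchMap, hzero, mul_zero, add_zero]

lemma stretchMap_self (hR : 0 < R) (h : ℝ) : stretchMap R h R = R + h := by
  have hone : ∫ t in (0 : ℝ)..R, stretchRate R t = 1 := by
    rw [intervalIntegral.integral_congr (g := fun t => 2 / R ^ 2 * t),
      intervalIntegral.integral_const_mul, integral_id]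
    · field_simp
      norm_num
    · intro t ht
      rw [uIcc_of_le hR.le] at ht
      simp only [stretchRate, max_eq_left ht.1]
      ring
  rw [stretchMap, hone, mul_one]

lemma abs_mul_stretchRate_le (hR : 0 < R) (hh : |h| ≤ R / 4) (hx : x ≤ R) :
    |h * stretchRate R x| ≤ 1 / 2 := by
  rw [abs_mul, abs_of_nonneg (stretchRate_nonneg R x)]
  calc |h| * stretchRate R x ≤ R / 4 * (2 / R) :=
        mul_le_mul hh (stretchRate_le hR hx) (stretchRate_nonneg R x) (by linarith)
    _ = 1 / 2 := by
        field_simp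
        norm_num

lemma strictMonoOn_stretchMap (hR : 0 < R) (hh : |h| ≤ R / 4) :
    StrictMonoOn (stretchMap R h) (Iic R) := by
  refine strictMonoOn_of_deriv_pos (convex_Iic R)
    (contDiff_stretchMap R h).continuous.continuousOn fun x hx => ?_
  rw [interior_Iic] at hx
  rw [(hasDerivAt_stretchMap R h x).deriv]
  linarith [(abs_le.1 (abs_mul_stretchRate_le hR hh hx.le)).1]

lemma stretchMap_image_Ioo_right (hR : 0 < R) (hh : |h| ≤ R / 4) :
    stretchMap R h '' Ioo (-1) R = Ioo (-1) (R + h) := by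
  have hle : -1 ≤ R := by linarith
  have hmono := (strictMonoOn_stretchMap hR hh).mono (Icc_subset_Iic_self (a := -1))
  have hends : Ioo (stretchMap R h (-1)) (stretchMap R h R) = Ioo (-1) (R + h) := by
    rw [stretchMap_of_nonpos R h (by norm_num), stretchMap_self hR]
  rw [← hends]
  refine Subset.antisymm ?_
    (intermediate_value_Ioo hle (contDiff_stretchMap R h).continuous.continuousOn)
  rintro _ ⟨x, hx, rfl⟩
  exact ⟨hmono (left_mem_Icc.2 hle) (Ioo_subset_Icc_self hx) hx.1,
    hmono (Ioo_subset_Icc_self hx) (right_mem_Icc.2 hle) hx.2⟩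

lemma stretchMap_image_Ioo_zero (R h : ℝ) : stretchMap R h '' Ioo (-1) 0 = Ioo (-1) 0 :=
  (image_congr fun _ hx => stretchMap_of_nonpos R h hx.2.le).trans (image_id _)

/-- The map `Φ = φ × φ` of the plane, which sends `Γ_R` onto `Γ_{R+h}`. -/
def stretch (R h : ℝ) : ℝ × ℝ → ℝ × ℝ := Prod.map (stretchMap R h) (stretchMap R h)

lemma stretch_image_gamR (hR : 0 < R) (hh : |h| ≤ R / 4) :
    stretch R h '' GamR R = GamR (R + h) := by
  have hRh : 0 < R + h := by linarith [(abs_le.1 hh).1]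
  rw [stretch, gamR_eq_union hR, gamR_eq_union hRh, image_union, prodMap_image_prod,
    prodMap_image_prod, stretchMap_image_Ioo_right hR hh, stretchMap_image_Ioo_zero]

lemma injOn_stretch (hR : 0 < R) (hh : |h| ≤ R / 4) : InjOn (stretch R h) (GamR R) := by
  intro p hp q hq hpq
  have hinj := (strictMonoOn_stretchMap hR hh).injOn
  have hpR := fst_lt_and_snd_lt_of_mem_gamR hR hp
  have hqR := fst_lt_and_snd_lt_of_mem_gamR hR hq
  exact Prod.ext (hinj hpR.1.le hqR.1.le (congrArg Prod.fst hpq))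
    (hinj hpR.2.le hqR.2.le (congrArg Prod.snd hpq))

lemma contDiff_stretch (R h : ℝ) : ContDiff ℝ 1 (stretch R h) :=
  (contDiff_stretchMap R h).prodMap (contDiff_stretchMap R h)

lemma hasFDerivAt_stretch (R h : ℝ) (p : ℝ × ℝ) :
    HasFDerivAt (stretch R h) (((1 + h * stretchRate R p.1) • ContinuousLinearMap.id ℝ ℝ).prodMap
      ((1 + h * stretchRate R p.2) • ContinuousLinearMap.id ℝ ℝ)) p := by
  refine (HasFDerivAt.prodMap p (hasDerivAt_stretchMap R h p.1).hasFDerivAt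
    (hasDerivAt_stretchMap R h p.2).hasFDerivAt).congr_fderiv ?_
  ext <;> simp

lemma det_prodMap_smul_id (a b : ℝ) :
    ((a • ContinuousLinearMap.id ℝ ℝ).prodMap (b • ContinuousLinearMap.id ℝ ℝ)).det = a * b := by
  refine (LinearMap.det_prodMap (a • LinearMap.id) (b • LinearMap.id)).trans ?_
  simp

lemma stretchRate_mul_stretchRate (hR : 0 < R) (hp : p ∈ GamR R) :
    stretchRate R p.1 * stretchRate R p.2 = 0 := by
  rw [gamR_eq_union hR] at hp
  rcases hp with hp | hp
  · rw [stretchRate_of_nonpos R hp.1.2.le, zero_mul]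
  · rw [stretchRate_of_nonpos R hp.2.2.le, mul_zero]

/-- The Jacobian determinant `(1 + h κ(p₁)) (1 + h κ(p₂))` of `stretch R h` on `Γ_R`, where one of
the two rates vanishes. -/
def stretchJacobian (R h : ℝ) (p : ℝ × ℝ) : ℝ := 1 + h * (stretchRate R p.1 + stretchRate R p.2)

lemma continuous_stretchJacobian (R h : ℝ) : Continuous (stretchJacobian R h) := by
  have := continuous_stretchRate R
  unfold stretchJacobian
  fun_prop

lemma stretchJacobian_eq_mul (hR : 0 < R) (hp : p ∈ GamR R) :
    stretchJacobian R h p = (1 + h * stretchRate R p.1) * (1 + h * stretchRate R p.2) := by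
  unfold stretchJacobian
  linear_combination -h ^ 2 * stretchRate_mul_stretchRate hR hp

lemma abs_stretchJacobian_sub_one_le (hR : 0 < R) (hh : |h| ≤ R / 4) (hp : p ∈ GamR R) :
    |stretchJacobian R h p - 1| ≤ 1 / 2 := by
  have hpR := fst_lt_and_snd_lt_of_mem_gamR hR hp
  rw [stretchJacobian, add_sub_cancel_left]
  rcases mul_eq_zero.1 (stretchRate_mul_stretchRate hR hp) with h0 | h0
  · rw [h0, zero_add]
    exact abs_mul_stretchRate_le hR hh hpR.2.le
  · rw [h0, add_zero]
    exact abs_mul_stretchRate_le hR hh hpR.1.le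

lemma setIntegral_gamR_add (hR : 0 < R) (hh : |h| ≤ R / 4) (g : ℝ × ℝ → ℝ) :
    ∫ p in GamR (R + h), g p = ∫ p in GamR R, stretchJacobian R h p * g (stretch R h p) := by
  rw [← stretch_image_gamR hR hh, integral_image_eq_integral_abs_det_fderiv_smul volume
    (measurableSet_gamR hR) (fun p _ => (hasFDerivAt_stretch R h p).hasFDerivWithinAt)
    (injOn_stretch hR hh)]
  refine setIntegral_congr_fun (measurableSet_gamR hR) fun p hp => ?_
  have hJ := (abs_le.1 (abs_stretchJacobian_sub_one_le hR hh hp)).1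
  simp only [det_prodMap_smul_id, smul_eq_mul]
  rw [← stretchJacobian_eq_mul hR hp, abs_of_nonneg (by linarith)]

lemma AdmR.comp_stretch (hR : 0 < R) (hh : |h| ≤ R / 4) (hu : AdmR (R + h) u) :
    AdmR R (u ∘ stretch R h) := by
  have hRh : 0 < R + h := by linarith [(abs_le.1 hh).1]
  refine ⟨hu.1.comp (contDiff_stretch R h), fun p hp => hu.2 _ ?_⟩
  obtain ⟨a, b⟩ := p
  obtain ⟨hmin, ha, hb⟩ := (mk_mem_dirB_iff hR).1 hp
  have hmono := strictMonoOn_stretchMap hR hh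
  refine (mk_mem_dirB_iff hRh).2 ⟨?_, ?_, ?_⟩
  · rw [← hmono.monotoneOn.map_min ha.le hb.le]
    rcases hmin with h | h
    · exact .inl (by rw [h, stretchMap_of_nonpos _ _ (by norm_num)])
    · exact .inr (by rw [h, stretchMap_of_nonpos _ _ le_rfl])
  · exact (hmono ha.le self_mem_Iic ha).trans_eq (stretchMap_self hR h)
  · exact (hmono hb.le self_mem_Iic hb).trans_eq (stretchMap_self hR h)

lemma pd1_comp_stretch (hu : DifferentiableAt ℝ u (stretch R h p)) :
    pd1 (u ∘ stretch R h) p = (1 + h * stretchRate R p.1) * pd1 u (stretch R h p) := by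
  rw [pd1, pd1, (hu.hasFDerivAt.comp p (hasFDerivAt_stretch R h p)).fderiv]
  refine (congrArg (fderiv ℝ u (stretch R h p)) ?_).trans
    ((fderiv ℝ u (stretch R h p)).map_smul (1 + h * stretchRate R p.1) (1, 0))
  simp

lemma pd2_comp_stretch (hu : DifferentiableAt ℝ u (stretch R h p)) :
    pd2 (u ∘ stretch R h) p = (1 + h * stretchRate R p.2) * pd2 u (stretch R h p) := by
  rw [pd2, pd2, (hu.hasFDerivAt.comp p (hasFDerivAt_stretch R h p)).fderiv]
  refine (congrArg (fderiv ℝ u (stretch R h p)) ?_).trans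
    ((fderiv ℝ u (stretch R h p)).map_smul (1 + h * stretchRate R p.2) (0, 1))
  simp

lemma gradSq2_comp_stretch_add_le (hR : 0 < R) (hh : |h| ≤ R / 4) (hp : p ∈ GamR R)
    (hu : DifferentiableAt ℝ u (stretch R h p)) :
    gradSq2 (u ∘ stretch R h) p + h * ((stretchRate R p.2 - stretchRate R p.1) *
      (pd1 (u ∘ stretch R h) p ^ 2 - pd2 (u ∘ stretch R h) p ^ 2)) ≤
        stretchJacobian R h p * gradSq2 u (stretch R h p) := by
  have hpR := fst_lt_and_snd_lt_of_mem_gamR hR hp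
  have h1 := abs_le.1 (abs_mul_stretchRate_le hR hh hpR.1.le)
  have h2 := abs_le.1 (abs_mul_stretchRate_le hR hh hpR.2.le)
  rw [stretchJacobian, gradSq2_eq_add, gradSq2_eq_add, pd1_comp_stretch hu, pd2_comp_stretch hu]
  -- with `t = h κ` for the nonzero rate, the difference of the two sides is `t² (1 + t) (∂u)²`
  rcases mul_eq_zero.1 (stretchRate_mul_stretchRate hR hp) with h0 | h0
  · rw [h0]
    have hrest : 0 ≤ (h * stretchRate R p.2) ^ 2 * (1 + h * stretchRate R p.2) *
        pd2 u (stretch R h p) ^ 2 := by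
      have : 0 ≤ 1 + h * stretchRate R p.2 := by linarith
      positivity
    linarith
  · rw [h0]
    have hrest : 0 ≤ (h * stretchRate R p.1) ^ 2 * (1 + h * stretchRate R p.1) *
        pd1 u (stretch R h p) ^ 2 := by
      have : 0 ≤ 1 + h * stretchRate R p.1 := by linarith
      positivity
    linarith

end Stretch

/-! ### The first-order lower bound -/

section LowerBound

variable {R h η : ℝ} {u v w : ℝ × ℝ → ℝ}

/-- The derivative at `h = 0` of the energy over `Γ_{R+h}` of the function that `stretch R h` pulls
back to `w`. -/
def energyRate (R : ℝ) (w : ℝ × ℝ → ℝ) : ℝ :=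
  ∫ p in GamR R, (stretchRate R p.2 - stretchRate R p.1) * (pd1 w p ^ 2 - pd2 w p ^ 2)

/-- The derivative at `h = 0` of the squared `L²` norm over `Γ_{R+h}` of the function that
`stretch R h` pulls back to `w`. -/
def massRate (R : ℝ) (w : ℝ × ℝ → ℝ) : ℝ :=
  ∫ p in GamR R, (stretchRate R p.1 + stretchRate R p.2) * w p ^ 2

lemma integrableOn_energyRate (hR : 0 < R) (hw : ContDiff ℝ 1 w) : IntegrableOn (fun p =>
    (stretchRate R p.2 - stretchRate R p.1) * (pd1 w p ^ 2 - pd2 w p ^ 2)) (GamR R) := by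
  have := continuous_stretchRate R
  have := continuous_pd1 hw
  have := continuous_pd2 hw
  exact integrableOn_gamR_of_continuousOn hR (by fun_prop)

lemma integrableOn_massRate (hR : 0 < R) (hw : Continuous w) :
    IntegrableOn (fun p => (stretchRate R p.1 + stretchRate R p.2) * w p ^ 2) (GamR R) := by
  have := continuous_stretchRate R
  exact integrableOn_gamR_of_continuousOn hR (by fun_prop)

lemma setIntegral_firstVariation (hR : 0 < R) (hw : ContDiff ℝ 1 w) :
    ∫ p in GamR R, firstVariation R w p = energyRate R w - lamR R * massRate R w := by
  rw [energyRate, massRate, ← integral_const_mul, ← integral_sub (integrableOn_energyRate hR hw)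
    ((integrableOn_massRate hR hw.continuous).const_mul _)]
  rfl

lemma abs_mul_energyRate_le (hR : 0 < R) (h : ℝ) (hw : ContDiff ℝ 1 w) :
    |h * energyRate R w| ≤ |h| * (4 / R) * ∫ p in GamR R, gradSq2 w p := by
  rw [abs_mul, mul_assoc, ← integral_const_mul]
  refine mul_le_mul_of_nonneg_left (abs_integral_le_integral_abs.trans (setIntegral_mono_on
    (integrableOn_energyRate hR hw).abs ((integrableOn_gradSq2 hR hw).const_mul _)
    (measurableSet_gamR hR) fun p hp => ?_)) (abs_nonneg h)
  have hle := abs_mul_sub_le_mul_add (x := pd1 w p ^ 2) (y := pd2 w p ^ 2) (z := 0) (l := 0)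
    (stretchRate_nonneg R p.1) (stretchRate_nonneg R p.2) (stretchRate_add_le hR hp) le_rfl
  simpa only [abs_sq, ← gradSq2_eq_add, zero_mul, sub_zero, add_zero] using hle

lemma abs_mul_massRate_le (hR : 0 < R) (h : ℝ) (hw : Continuous w) :
    |h * massRate R w| ≤ |h| * (4 / R) * ∫ p in GamR R, w p ^ 2 := by
  have hnonneg : 0 ≤ massRate R w := integral_nonneg fun p => mul_nonneg
    (add_nonneg (stretchRate_nonneg R p.1) (stretchRate_nonneg R p.2)) (sq_nonneg (w p))
  rw [abs_mul, abs_of_nonneg hnonneg, mul_assoc, ← integral_const_mul]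
  exact mul_le_mul_of_nonneg_left (setIntegral_mono_on (integrableOn_massRate hR hw)
    (integrableOn_gamR_of_continuousOn hR (by fun_prop)) (measurableSet_gamR hR)
    fun p hp => mul_le_mul_of_nonneg_right (stretchRate_add_le hR hp) (sq_nonneg _)) (abs_nonneg h)

lemma setIntegral_gradSq2_comp_stretch_add_le (hR : 0 < R) (hh : |h| ≤ R / 4)
    (hu : ContDiff ℝ 1 u) :
    (∫ p in GamR R, gradSq2 (u ∘ stretch R h) p) + h * energyRate R (u ∘ stretch R h) ≤
      ∫ p in GamR (R + h), gradSq2 u p := by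
  have hw : ContDiff ℝ 1 (u ∘ stretch R h) := hu.comp (contDiff_stretch R h)
  have hi := integrableOn_gradSq2 hR hw
  have hir := (integrableOn_energyRate hR hw).const_mul h
  rw [setIntegral_gamR_add hR hh, energyRate, ← integral_const_mul, ← integral_add hi hir]
  exact setIntegral_mono_on (hi.add hir) (integrableOn_gamR_of_continuousOn hR
    ((continuous_stretchJacobian R h).mul
      ((continuous_gradSq2 hu).comp (contDiff_stretch R h).continuous)).continuousOn)
    (measurableSet_gamR hR) fun p hp =>
      gradSq2_comp_stretch_add_le hR hh hp (hu.differentiable one_ne_zero _)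

lemma setIntegral_sq_gamR_add (hR : 0 < R) (hh : |h| ≤ R / 4) (hu : Continuous u) :
    ∫ p in GamR (R + h), u p ^ 2 =
      (∫ p in GamR R, (u ∘ stretch R h) p ^ 2) + h * massRate R (u ∘ stretch R h) := by
  have hw : Continuous (u ∘ stretch R h) := hu.comp (contDiff_stretch R h).continuous
  have hi : IntegrableOn (fun p => (u ∘ stretch R h) p ^ 2) (GamR R) :=
    integrableOn_gamR_of_continuousOn hR (hw.pow 2).continuousOn
  rw [setIntegral_gamR_add hR hh, massRate, ← integral_const_mul,
    ← integral_add hi ((integrableOn_massRate hR hw).const_mul h)]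
  refine integral_congr_ae (ae_of_all _ fun p => ?_)
  simp only [stretchJacobian, Function.comp_apply]
  ring

lemma setIntegral_comp_stretch_sq_pos (hR : 0 < R) (hh : |h| ≤ R / 4) (hu : Continuous u)
    (hpos : 0 < ∫ p in GamR (R + h), u p ^ 2) :
    0 < ∫ p in GamR R, (u ∘ stretch R h) p ^ 2 := by
  have hw : Continuous (u ∘ stretch R h) := hu.comp (contDiff_stretch R h).continuous
  rw [setIntegral_sq_gamR_add hR hh hu] at hpos
  have hrate : h * massRate R (u ∘ stretch R h) ≤
      ∫ p in GamR R, (u ∘ stretch R h) p ^ 2 := by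
    calc h * massRate R (u ∘ stretch R h)
        ≤ |h| * (4 / R) * ∫ p in GamR R, (u ∘ stretch R h) p ^ 2 :=
          (le_abs_self _).trans (abs_mul_massRate_le hR h hw)
      _ ≤ R / 4 * (4 / R) * ∫ p in GamR R, (u ∘ stretch R h) p ^ 2 :=
          mul_le_mul_of_nonneg_right (by gcongr) (setIntegral_sq_nonneg _ _)
      _ = ∫ p in GamR R, (u ∘ stretch R h) p ^ 2 := by
          field_simp
  linarith

lemma gradSq2_mul_const {p : ℝ × ℝ} (hw : DifferentiableAt ℝ w p) (c : ℝ) :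
    gradSq2 (fun q => w q * c) p = c ^ 2 * gradSq2 w p := by
  rw [gradSq2, gradSq2, fderiv_mul_const hw, _root_.smul_apply, _root_.smul_apply, smul_eq_mul,
    smul_eq_mul]
  ring

lemma exists_admR_softThreshold_le (hR : 0 < R) (hη : 0 < η) :
    ∃ u ε, AdmR R u ∧ 0 < ε ∧ 0 < ∫ p in GamR R, softThreshold ε (u p) ^ 2 ∧
      ∫ p in GamR R, gradSq2 (fun q => softThreshold ε (u q)) p ≤
        (lamR R + η) * ∫ p in GamR R, softThreshold ε (u p) ^ 2 := by
  obtain ⟨u, hu, hpos, hle⟩ := exists_admR_gradSq2_le hR (half_pos hη)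
  have hl := lamR_nonneg R
  have hlim : Tendsto (fun ε : ℝ => (lamR R + η) * ((∫ p in GamR R, u p ^ 2) -
      4 * ε * ∫ p in GamR R, |u p|)) (𝓝[>] 0) (𝓝 ((lamR R + η) * ∫ p in GamR R, u p ^ 2)) := by
    refine tendsto_nhdsWithin_of_tendsto_nhds (Continuous.tendsto' (by fun_prop) _ _ ?_)
    rw [mul_zero, zero_mul, sub_zero]
  have hlt : (lamR R + η / 2) * ∫ p in GamR R, u p ^ 2 <
      (lamR R + η) * ∫ p in GamR R, u p ^ 2 :=
    mul_lt_mul_of_pos_right (by linarith) hpos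
  obtain ⟨ε, hεlt, hε⟩ := ((hlim.eventually_const_lt hlt).and self_mem_nhdsWithin).exists
  have hmass := mul_le_mul_of_nonneg_left
    (setIntegral_sq_sub_le_softThreshold_sq hR hε hu.1.continuous.continuousOn)
    (add_nonneg hl hη.le)
  have henergy : ∫ p in GamR R, gradSq2 (fun q => softThreshold ε (u q)) p ≤
      ∫ p in GamR R, gradSq2 u p := by
    refine setIntegral_mono_on (integrableOn_gradSq2 hR ((contDiff_softThreshold ε).comp hu.1))
      (integrableOn_gradSq2 hR hu.1) (measurableSet_gamR hR) fun p _ => ?_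
    rw [gradSq2_softThreshold_comp ε (hu.1.differentiable one_ne_zero p)]
    exact mul_le_of_le_one_left (gradSq2_nonneg u p) (softSlope_sq_le_one ε _)
  refine ⟨u, ε, hu, hε, ?_, by linarith⟩
  have hprod : 0 < (lamR R + η / 2) * ∫ p in GamR R, u p ^ 2 := by positivity
  exact pos_of_mul_pos_right (hprod.trans (hεlt.trans_le hmass)) (add_nonneg hl hη.le)

lemma exists_gradSq2_add_energyRate_le (hR : 0 < R) (hh : |h| ≤ R / 4) (hη : 0 < η) :
    ∃ w, ContDiff ℝ 1 w ∧ VanishesNearDirB R w ∧ ∫ p in GamR R, w p ^ 2 = 1 ∧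
      (∫ p in GamR R, gradSq2 w p) + h * energyRate R w ≤
        (lamR (R + h) + η) * (1 + h * massRate R w) := by
  have hRh : 0 < R + h := by linarith [(abs_le.1 hh).1]
  obtain ⟨u, ε, hu, hε, hpos, hle⟩ := exists_admR_softThreshold_le hRh hη
  set W : ℝ × ℝ → ℝ := fun q => softThreshold ε (u q)
  have hW : ContDiff ℝ 1 W := (contDiff_softThreshold ε).comp hu.1
  set m := ∫ p in GamR R, (W ∘ stretch R h) p ^ 2
  have hm0 : 0 < m := setIntegral_comp_stretch_sq_pos hR hh hW.continuous hpos
  set c := (√m)⁻¹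
  have hc : c ^ 2 * m = 1 := by rw [inv_pow, sq_sqrt hm0.le, inv_mul_cancel₀ hm0.ne']
  set g : ℝ × ℝ → ℝ := fun q => W q * c
  have hg : ContDiff ℝ 1 g := hW.mul contDiff_const
  have hmass : ∫ p in GamR R, (g ∘ stretch R h) p ^ 2 = 1 := by
    simp only [Function.comp_apply, g, mul_pow, integral_mul_const]
    rw [mul_comm]
    exact hc
  have hadm := hu.comp_stretch hR hh
  refine ⟨g ∘ stretch R h, hg.comp (contDiff_stretch R h),
    (vanishesNearDirB_softThreshold hR hε hadm.1.continuous.continuousOn hadm.2).mul_right _,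
    hmass, ?_⟩
  calc _ ≤ ∫ p in GamR (R + h), gradSq2 g p := setIntegral_gradSq2_comp_stretch_add_le hR hh hg
    _ = c ^ 2 * ∫ p in GamR (R + h), gradSq2 W p := by
        rw [← integral_const_mul]
        exact integral_congr_ae (ae_of_all _ fun p =>
          gradSq2_mul_const (hW.differentiable one_ne_zero p) c)
    _ ≤ c ^ 2 * ((lamR (R + h) + η) * ∫ p in GamR (R + h), W p ^ 2) := by gcongr
    _ = (lamR (R + h) + η) * ∫ p in GamR (R + h), g p ^ 2 := by
        simp only [g, mul_pow, integral_mul_const]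
        ring
    _ = (lamR (R + h) + η) * (1 + h * massRate R (g ∘ stretch R h)) := by
        rw [setIntegral_sq_gamR_add hR hh hg.continuous, hmass]

lemma le_add_of_add_mul_le {l x γ μ Q q n : ℝ} (hγ : 0 ≤ γ) (hx : x ≤ 1 / 2)
    (hxγ : x * (2 * l + 2 * γ) ≤ γ / 2) (hl : 0 ≤ l) (hμ : μ ≤ l + γ / 2)
    (hn : |h * n| ≤ x) (hq : |h * q| ≤ x * Q) (hle : Q + h * q ≤ μ * (1 + h * n)) :
    Q ≤ l + γ := by
  have hn' := abs_le.1 hn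
  have hrhs : μ * (1 + h * n) ≤ (l + γ / 2) * (1 + x) :=
    mul_le_mul hμ (by linarith) (by linarith) (by linarith)
  have hQ : Q * (1 - x) ≤ (l + γ) * (1 - x) := by
    linarith [neg_le_of_abs_le hq, mul_nonneg ((abs_nonneg _).trans hn) hγ]
  exact le_of_mul_le_mul_right hQ (by linarith)

lemma add_mul_sub_le_of_add_mul_le {l x δ μ q n D : ℝ} (hx : x ≤ 1 / 2) (hn : |h * n| ≤ x)
    (hδ : |q - l * n - D| ≤ δ) (hle : l + h * q ≤ μ * (1 + h * n)) :
    l + h * D - 2 * |h| * (δ + |D| * x) ≤ μ := by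
  have hn' := abs_le.1 hn
  have hclose : -(|h| * δ) ≤ h * (q - l * n - D) := by
    refine (neg_le_neg ?_).trans (neg_abs_le _)
    rw [abs_mul]
    gcongr
  have hsecond : h * D * (h * n) ≤ |h| * (|D| * x) := by
    calc h * D * (h * n) ≤ |h * D * (h * n)| := le_abs_self _
      _ = |h| * (|D| * |h * n|) := by rw [abs_mul, abs_mul, mul_assoc]
      _ ≤ |h| * (|D| * x) := by gcongr
  have herr : 0 ≤ |h| * (δ + |D| * x) :=
    mul_nonneg (abs_nonneg h) (add_nonneg ((abs_nonneg _).trans hδ)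
      (mul_nonneg (abs_nonneg D) ((abs_nonneg _).trans hn)))
  have hhalf : |h| * (δ + |D| * x) ≤ 2 * |h| * (δ + |D| * x) * (1 + h * n) := by
    linarith [mul_le_mul_of_nonneg_left (show 1 / 2 ≤ 1 + h * n by linarith) herr]
  refine le_of_mul_le_mul_right (a := 1 + h * n) ?_ (by linarith)
  linarith

lemma eventually_abs_mul_le (c : ℝ) {ε : ℝ} (hε : 0 < ε) : ∀ᶠ h in 𝓝 (0 : ℝ), |h| * c ≤ ε := by
  have hlim : Tendsto (fun h : ℝ => |h| * c) (𝓝 0) (𝓝 0) :=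
    Continuous.tendsto' (by fun_prop) _ _ (by rw [abs_zero, zero_mul])
  exact hlim.eventually_le_const hε

lemma IsFirstEF.eventually_add_mul_sub_le (hv : IsFirstEF R v) (hR : 0 < R) {F : Filter ℝ}
    (hF : F ≤ 𝓝 0) (husc : ∀ γ, 0 < γ → ∀ᶠ h in F, lamR (R + h) ≤ lamR R + γ) {ε : ℝ}
    (hε : 0 < ε) :
    ∀ᶠ h in F, lamR R + h * (∫ p in GamR R, firstVariation R v p) - ε * |h| ≤ lamR (R + h) := by
  have hl := lamR_nonneg R
  set D := ∫ p in GamR R, firstVariation R v p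
  obtain ⟨γ, hγ, hconc⟩ := hv.exists_abs_setIntegral_firstVariation_sub_le hR
    (ε := ε / 8) (by positivity)
  have hsmall (c : ℝ) {δ : ℝ} (hδ : 0 < δ) : ∀ᶠ h in F, |h| * c ≤ δ :=
    hF (eventually_abs_mul_le c hδ)
  filter_upwards [husc (γ / 4) (by positivity),
    hsmall 1 (δ := min (min (R / 8) (ε / 4)) (min (γ / 4) 1)) (by positivity),
    hsmall (4 / R * (2 * lamR R + 2 * γ)) (half_pos hγ),
    hsmall (4 / R * |D|) (δ := ε / 8) (by positivity)] with h hlam hh hhγ hhD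
  rw [mul_one, le_min_iff, le_min_iff, le_min_iff] at hh
  obtain ⟨⟨hhR, hhε⟩, hhγ', hh1⟩ := hh
  rcases eq_or_ne h 0 with rfl | hne
  · simp
  obtain ⟨w, hw, hw0, hw1, hle⟩ := exists_gradSq2_add_energyRate_le (R := R) (h := h)
    (η := |h| * |h|) hR (by linarith) (by positivity)
  have hx : |h| * (4 / R) ≤ 1 / 2 := by
    calc |h| * (4 / R) ≤ R / 8 * (4 / R) := by gcongr
      _ = 1 / 2 := by
        field_simp
        norm_num
  have hmass := abs_mul_massRate_le hR h hw.continuous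
  have hlow := (hw0.admR hR hw).lamR_mul_le
  rw [hw1, mul_one] at hmass hlow
  have hhh : |h| * |h| ≤ |h| := mul_le_of_le_one_right (abs_nonneg h) hh1
  have hgrad : ∫ p in GamR R, gradSq2 w p ≤ lamR R + γ :=
    le_add_of_add_mul_le hγ.le hx (by rwa [mul_assoc]) hl (by linarith) hmass
      (abs_mul_energyRate_le hR h hw) hle
  have hδ := hconc w hw hw0 hw1 hgrad
  rw [setIntegral_firstVariation hR hw] at hδ
  have hfinal := add_mul_sub_le_of_add_mul_le hx hmass hδ ((add_le_add_left hlow _).trans hle)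
  have herr : 2 * (ε / 8 + |D| * (|h| * (4 / R))) + |h| ≤ ε := by linarith
  linarith [mul_le_mul_of_nonneg_left herr (abs_nonneg h)]

end LowerBound

/-! ### End strips -/

section EndStrips

variable {r R a b : ℝ} {f : ℝ × ℝ → ℝ}

/-- The part of the guide `Γ_R` lying beyond `Γ_r`: one rectangle of length `R - r` at the end of
each arm. -/
def endStrips (r R : ℝ) : Set (ℝ × ℝ) := Ico r R ×ˢ II ∪ II ×ˢ Ico r R

lemma measurableSet_endStrips : MeasurableSet (endStrips r R) :=
  (measurableSet_Ico.prod measurableSet_Ioo).union (measurableSet_Ioo.prod measurableSet_Ico)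

lemma gamR_eq_union_endStrips (hr : 0 < r) (h : r ≤ R) : GamR R = GamR r ∪ endStrips r R := by
  rw [gamR_eq_union (hr.trans_le h), gamR_eq_union hr]
  ext ⟨a, b⟩
  simp only [endStrips, II, mem_union, mem_prod, mem_Ioo, mem_Ico]
  grind (splits := 40)

lemma endStrips_subset_gamR (hr : 0 < r) (h : r ≤ R) : endStrips r R ⊆ GamR R :=
  subset_union_right.trans (gamR_eq_union_endStrips hr h).ge

lemma disjoint_gamR_endStrips (hr : 0 < r) : Disjoint (GamR r) (endStrips r R) := by
  refine disjoint_left.2 fun p hp hS => ?_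
  obtain ⟨h1, h2⟩ := fst_lt_and_snd_lt_of_mem_gamR hr hp
  rcases hS with hS | hS
  · exact h1.not_ge hS.1.1
  · exact h2.not_ge hS.2.1

lemma setIntegral_gamR_eq_add_endStrips (hr : 0 < r) (h : r ≤ R) (hf : IntegrableOn f (GamR R)) :
    ∫ p in GamR R, f p = (∫ p in GamR r, f p) + ∫ p in endStrips r R, f p := by
  rw [gamR_eq_union_endStrips hr h] at hf ⊢
  exact setIntegral_union (disjoint_gamR_endStrips hr) measurableSet_endStrips
    (hf.mono_set subset_union_left) (hf.mono_set subset_union_right)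

lemma integrableOn_endStrips_iff :
    IntegrableOn f (endStrips r R) ↔
      IntegrableOn f (Ico r R ×ˢ II) ∧ IntegrableOn (fun p => f p.swap) (Ico r R ×ˢ II) := by
  rw [endStrips, integrableOn_union, ← preimage_swap_prod II, integrableOn_preimage_swap_iff]

lemma setIntegral_endStrips (hr : 0 < r) (hf : IntegrableOn f (endStrips r R)) :
    ∫ p in endStrips r R, f p = ∫ p in Ico r R ×ˢ II, (f p + f p.swap) := by
  obtain ⟨h1, h2⟩ := integrableOn_endStrips_iff.1 hf
  have hdisj : Disjoint (Ico r R ×ˢ II) (II ×ˢ Ico r R) :=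
    disjoint_left.2 fun p h1 h2 => (h2.1.2.trans hr).not_ge h1.1.1
  rw [integral_add h1 h2, ← preimage_swap_prod II, setIntegral_preimage_swap f, endStrips,
    setIntegral_union hdisj (measurableSet_Ioo.prod measurableSet_Ico) h1
      (hf.mono_set subset_union_right), preimage_swap_prod]

lemma setIntegral_prod_snd (s t : Set ℝ) (g : ℝ → ℝ) :
    ∫ p in s ×ˢ t, g p.2 = volume.real s * ∫ y in t, g y := by
  rw [Measure.volume_eq_prod, ← Measure.prod_restrict, integral_fun_snd, smul_eq_mul,
    measureReal_restrict_apply_univ]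

lemma integrableOn_prod_snd {s t : Set ℝ} {g : ℝ → ℝ} (hs : volume s ≠ ⊤)
    (hg : IntegrableOn g t) : IntegrableOn (fun p : ℝ × ℝ => g p.2) (s ×ˢ t) := by
  have : IsFiniteMeasure (volume.restrict s) := isFiniteMeasure_restrict.2 hs
  rw [IntegrableOn, Measure.volume_eq_prod, ← Measure.prod_restrict]
  exact hg.integrable.comp_snd (volume.restrict s)

lemma setIntegral_endStrips_of_eqOn {g₁ g₂ : ℝ → ℝ} (hr : 0 < r) (h : r ≤ R)
    (hf₁ : ∀ p ∈ Ico r R ×ˢ II, f p = g₁ p.2) (hf₂ : ∀ p ∈ Ico r R ×ˢ II, f p.swap = g₂ p.2)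
    (hg₁ : IntegrableOn g₁ II) (hg₂ : IntegrableOn g₂ II) :
    IntegrableOn f (endStrips r R) ∧
      ∫ p in endStrips r R, f p = (R - r) * ∫ t in II, (g₁ t + g₂ t) := by
  have hmeas : MeasurableSet (Ico r R ×ˢ II) := measurableSet_Ico.prod measurableSet_Ioo
  have hfin : volume (Ico r R) ≠ ⊤ := measure_Ico_lt_top.ne
  have hi : IntegrableOn f (endStrips r R) := integrableOn_endStrips_iff.2
    ⟨(integrableOn_prod_snd hfin hg₁).congr_fun (fun p hp => (hf₁ p hp).symm) hmeas,
      (integrableOn_prod_snd hfin hg₂).congr_fun (fun p hp => (hf₂ p hp).symm) hmeas⟩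
  refine ⟨hi, ?_⟩
  rw [setIntegral_endStrips hr hi, ← Real.volume_real_Ico_of_le h,
    ← setIntegral_prod_snd _ _ fun t => g₁ t + g₂ t]
  exact setIntegral_congr_fun hmeas fun p hp => congrArg₂ (· + ·) (hf₁ p hp) (hf₂ p hp)

lemma eventually_abs_setIntegral_sub_le (hr : r < R)
    (hf : ContinuousOn f (Icc r R ×ˢ Icc a b)) {δ : ℝ} (hδ : 0 < δ) :
    ∀ᶠ h in 𝓝[<] (0 : ℝ), |(∫ p in Ico (R + h) R ×ˢ Ioo a b, f p) -
      |h| * ∫ t in Ioo a b, f (R, t)| ≤ δ * |h| := by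
  have hK : IsCompact (Icc r R ×ˢ Icc a b) := isCompact_Icc.prod isCompact_Icc
  set m := volume.real (Ioo a b)
  have hm : 0 < m + 1 := add_pos_of_nonneg_of_pos measureReal_nonneg one_pos
  obtain ⟨τ, hτ, hclose⟩ := Metric.uniformContinuousOn_iff_le.1
    (hK.uniformContinuousOn_of_continuous hf) (δ / (m + 1)) (div_pos hδ hm)
  filter_upwards [Ioo_mem_nhdsLT (show max (-τ) (r - R) < 0 from
    max_lt (neg_lt_zero.2 hτ) (sub_neg.2 hr))] with h ⟨hh, hneg⟩
  obtain ⟨hhτ, hhr⟩ := max_lt_iff.1 hh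
  have hlen : volume.real (Ico (R + h) R) = |h| := by
    rw [Real.volume_real_Ico_of_le (by linarith), abs_of_neg hneg]
    ring
  have hsub : Ico (R + h) R ×ˢ Ioo a b ⊆ Icc r R ×ˢ Icc a b :=
    prod_mono (fun x hx => ⟨by linarith [hx.1], hx.2.le⟩) Ioo_subset_Icc_self
  have hend : IntegrableOn (fun t => f (R, t)) (Ioo a b) := by
    refine ContinuousOn.integrableOn_Icc ?_ |>.mono_set Ioo_subset_Icc_self
    exact hf.comp (by fun_prop) fun t ht => ⟨right_mem_Icc.2 hr.le, ht⟩
  have hend' := integrableOn_prod_snd (s := Ico (R + h) R) measure_Ico_lt_top.ne hend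
  rw [← hlen, ← setIntegral_prod_snd _ _ fun t => f (R, t),
    ← integral_sub ((hf.integrableOn_compact hK).mono_set hsub) hend', hlen, ← Real.norm_eq_abs]
  refine (norm_setIntegral_le_of_norm_le_const (C := δ / (m + 1)) ?_ ?_).trans ?_
  · exact ((Metric.isBounded_Ico _ _).prod (Metric.isBounded_Ioo a b)).measure_lt_top
  · rintro ⟨x, t⟩ hp
    refine hclose _ (hsub hp) _ ⟨right_mem_Icc.2 hr.le, (hsub hp).2⟩ ?_
    rw [Prod.dist_eq, dist_self, max_eq_left dist_nonneg, Real.dist_eq, abs_le]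
    constructor <;> linarith [hp.1.1, hp.1.2]
  · rw [Measure.volume_eq_prod, measureReal_prod_prod, hlen, div_mul_eq_mul_div, div_le_iff₀ hm]
    have hδh : 0 ≤ δ * |h| := mul_nonneg hδ.le (abs_nonneg h)
    linarith

end EndStrips

/-! ### Exhaustion of an interval -/

section Exhaustion

variable {a b : ℝ} {f : ℝ → ℝ}

lemma aecover_Ioo_add_sub {ι : Type*} {l : Filter ι} {η : ι → ℝ} (hη : Tendsto η l (𝓝 0)) :
    AECover (volume.restrict (Ioo a b)) l fun i => Ioo (a + η i) (b - η i) :=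
  aecover_Ioo_of_Ioo (by simpa only [add_zero] using hη.const_add a)
    (by simpa only [sub_zero] using hη.const_sub b)

lemma setIntegral_restrict_Ioo {η : ℝ} (hη : 0 < η) :
    ∫ t in Ioo (a + η) (b - η), f t ∂volume.restrict (Ioo a b) =
      ∫ t in Ioo (a + η) (b - η), f t := by
  rw [Measure.restrict_restrict_of_subset (Ioo_subset_Ioo (by linarith) (by linarith))]

lemma integrableOn_Ioo_of_setIntegral_le (hf : ContinuousOn f (Ioo a b)) (h0 : ∀ t, 0 ≤ f t)
    {C : ℝ} (hC : ∀ η, 0 < η → ∫ t in Ioo (a + η) (b - η), f t ≤ C) : IntegrableOn f (Ioo a b) := by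
  obtain ⟨η, -, hη, hlim⟩ := exists_seq_strictAnti_tendsto (0 : ℝ)
  refine (aecover_Ioo_add_sub hlim).integrable_of_integral_bounded_of_nonneg_ae C (fun n => ?_)
    (.of_forall h0) (.of_forall fun n => ?_)
  · have hsub : Icc (a + η n) (b - η n) ⊆ Ioo a b :=
      Icc_subset_Ioo (by linarith [hη n]) (by linarith [hη n])
    exact ((hf.mono hsub).integrableOn_Icc.mono_set Ioo_subset_Icc_self).mono_measure
      Measure.restrict_le_self
  · rw [setIntegral_restrict_Ioo (hη n)]
    exact hC _ (hη n)

lemma tendsto_setIntegral_Ioo_add_sub (hf : IntegrableOn f (Ioo a b)) :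
    Tendsto (fun η => ∫ t in Ioo (a + η) (b - η), f t) (𝓝[>] 0) (𝓝 (∫ t in Ioo a b, f t)) := by
  have hcov : AECover (volume.restrict (Ioo a b)) (𝓝[>] 0) fun η => Ioo (a + η) (b - η) :=
    aecover_Ioo_add_sub nhdsWithin_le_nhds
  refine (hcov.integral_tendsto_of_countably_generated hf).congr' ?_
  filter_upwards [self_mem_nhdsWithin] with η hη using setIntegral_restrict_Ioo hη

end Exhaustion

/-! ### Upper bound for shorter guides -/

section ShorterGuides

variable {r R : ℝ} {v : ℝ × ℝ → ℝ}

/-- The mass `∫_{Σ_R} |v|²` of `v` on the Neumann boundary. -/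
def neumannMass (R : ℝ) (v : ℝ × ℝ → ℝ) : ℝ := ∫ t in II, (v (R, t) ^ 2 + v (t, R) ^ 2)

/-- The tangential energy `∫_{Σ_R} |∂_τ v|²` of `v` on the Neumann boundary. It is `0`, as the
Bochner integral of a non-integrable function, unless `∂_τ v` is square integrable. -/
def tangentialEnergy (R : ℝ) (v : ℝ × ℝ → ℝ) : ℝ := ∫ t in II, (pd2 v (R, t) ^ 2 + pd1 v (t, R) ^ 2)

lemma neumannMass_nonneg (R : ℝ) (v : ℝ × ℝ → ℝ) : 0 ≤ neumannMass R v :=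
  integral_nonneg fun _ => add_nonneg (sq_nonneg _) (sq_nonneg _)

lemma gamR_union_sigSeg_subset_gamR (hr : 0 < r) (h : r < R) : GamR r ∪ SigSeg r ⊆ GamR R := by
  refine union_subset (gamR_subset_gamR hr h.le) ?_
  rw [gamR_eq_union_endStrips hr h.le]
  rintro ⟨a, b⟩ (⟨ha : a = r, hb⟩ | ⟨ha, hb : b = r⟩)
  · exact .inr (.inl ⟨⟨ha.ge, ha.trans_lt h⟩, hb⟩)
  · exact .inr (.inr ⟨ha, hb.ge, hb.trans_lt h⟩)

lemma dirB_subset_dirB (hr : 0 < r) (h : r ≤ R) : DirB r ⊆ DirB R := by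
  rintro ⟨a, b⟩ hp
  rw [mk_mem_dirB_iff hr] at hp
  exact (mk_mem_dirB_iff (hr.trans_le h)).2 ⟨hp.1, hp.2.1.trans_le h, hp.2.2.trans_le h⟩

lemma le_add_of_mul_one_sub_le {x l γ s : ℝ} (hl : 0 ≤ l) (hγ : 0 < γ) (hs : s * (l + γ) < γ)
    (h : x * (1 - s) ≤ l) : x ≤ l + γ := by
  have hs1 : 0 < 1 - s := by
    by_contra hcon
    nlinarith
  by_contra! hx
  linarith [mul_lt_mul_of_pos_right hx hs1]

namespace IsFirstEF

lemma lamR_mul_one_sub_le (hv : IsFirstEF R v) (hr : 0 < r) (h : r < R) :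
    lamR r * (1 - ∫ p in endStrips r R, v p ^ 2) ≤
      lamR R - ∫ p in endStrips r R, gradSq2 v p := by
  have hR := hr.trans h
  have hsub := gamR_subset_gamR hr h.le
  obtain ⟨hgrad, henergy⟩ := hv.integrableOn_gradSq2_and_le hR
  have hle : lamR r * ∫ p in GamR r, v p ^ 2 ≤ ∫ p in GamR r, gradSq2 v p :=
    lamR_mul_le_of_contDiffAt hr
      (fun p hp => hv.contDiffAt_one (.inl (gamR_union_sigSeg_subset_gamR hr h hp)))
      (hv.continuousOn.mono (closure_mono hsub))
      (fun p hp => hv.eq_zero p (dirB_subset_dirB hr h.le hp)) (hgrad.mono_set hsub)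
  rw [setIntegral_gamR_eq_add_endStrips hr h.le hgrad] at henergy
  have hmass := hv.setIntegral_sq
  rw [setIntegral_gamR_eq_add_endStrips hr h.le (hv.integrableOn_sq hR)] at hmass
  rw [← hmass, add_sub_cancel_right]
  linarith

lemma eventually_lamR_add_mul_one_sub_le (hv : IsFirstEF R v) (hR : 0 < R) :
    ∀ᶠ h in 𝓝[<] (0 : ℝ), lamR (R + h) * (1 - ∫ p in endStrips (R + h) R, v p ^ 2) ≤
      lamR R - ∫ p in endStrips (R + h) R, gradSq2 v p := by
  filter_upwards [Ioo_mem_nhdsLT (neg_lt_zero.2 hR)] with h hh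
  exact hv.lamR_mul_one_sub_le (by linarith [hh.1]) (by linarith [hh.2])

lemma continuousOn_sq_add_sq_swap (hv : IsFirstEF R v) (hR : 0 < R) :
    ContinuousOn (fun p => v p ^ 2 + v p.swap ^ 2) (Icc 0 R ×ˢ Icc (-1) 0) := by
  have hcont := hv.continuousOn
  rw [closure_gamR hR] at hcont
  refine .add (.pow (hcont.mono fun p hp => ?_) 2)
    (.pow (hcont.comp continuous_swap.continuousOn fun p hp => ?_) 2)
  · exact .inr ⟨⟨by linarith [hp.1.1], hp.1.2⟩, hp.2⟩
  · exact .inl ⟨hp.2, ⟨by linarith [hp.1.1, p.snd_swap], hp.1.2⟩⟩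

lemma eventually_setIntegral_endStrips_sq_le (hv : IsFirstEF R v) (hR : 0 < R) {δ : ℝ}
    (hδ : 0 < δ) : ∀ᶠ h in 𝓝[<] (0 : ℝ),
      ∫ p in endStrips (R + h) R, v p ^ 2 ≤ |h| * (neumannMass R v + δ) := by
  filter_upwards [eventually_abs_setIntegral_sub_le hR (hv.continuousOn_sq_add_sq_swap hR) hδ,
    Ioo_mem_nhdsLT (neg_lt_zero.2 hR)] with h hclose hh
  have hr : 0 < R + h := by linarith [hh.1]
  rw [setIntegral_endStrips hr ((hv.integrableOn_sq hR).mono_set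
    (endStrips_subset_gamR hr (by linarith [hh.2])))]
  have hle := (abs_le.1 hclose).2
  simp only [Prod.swap_prod_mk] at hle
  rw [mul_add, neumannMass, mul_comm _ δ]
  exact sub_le_iff_le_add'.1 hle

lemma continuousOn_pd2_sq_add_pd1_sq_swap (hv : IsFirstEF R v) (hR : 0 < R) {a b : ℝ}
    (ha : -1 < a) (hb : b < 0) :
    ContinuousOn (fun p => pd2 v p ^ 2 + pd1 v p.swap ^ 2) (Icc (R / 2) R ×ˢ Icc a b) := by
  have hsub : Icc (R / 2) R ×ˢ Icc a b ⊆ GamR R ∪ SigSeg R := by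
    rintro ⟨x, t⟩ ⟨⟨hx, hxR⟩, hat, htb⟩
    have ht : t ∈ II := ⟨ha.trans_le hat, htb.trans_lt hb⟩
    rcases hxR.lt_or_eq with h | h
    · exact .inl (endStrips_subset_gamR (half_pos hR) (half_le_self hR.le) (.inl ⟨⟨hx, h⟩, ht⟩))
    · exact .inr (.inl ⟨h, ht⟩)
  have hswap : Icc (R / 2) R ×ˢ Icc a b ⊆ Prod.swap ⁻¹' (GamR R ∪ SigSeg R) := fun p hp => by
    rw [preimage_union, preimage_swap_gamR]
    exact (hsub hp).imp id fun h => h.symm.imp And.symm And.symm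
  exact ((hv.continuousOn_pd2.mono hsub).pow 2).add
    ((hv.continuousOn_pd1.comp continuous_swap.continuousOn hswap).pow 2)

/-- Only the tangential energy over compact subintervals of the end sections enters, because `∇v`
is not known to be continuous up to the corners. -/
lemma eventually_le_setIntegral_endStrips_gradSq2 (hv : IsFirstEF R v) (hR : 0 < R) {a b δ : ℝ}
    (ha : -1 < a) (hb : b < 0) (hδ : 0 < δ) : ∀ᶠ h in 𝓝[<] (0 : ℝ),
      |h| * ((∫ t in Ioo a b, (pd2 v (R, t) ^ 2 + pd1 v (t, R) ^ 2)) - δ) ≤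
        ∫ p in endStrips (R + h) R, gradSq2 v p := by
  filter_upwards [eventually_abs_setIntegral_sub_le (half_lt_self hR)
    (hv.continuousOn_pd2_sq_add_pd1_sq_swap hR ha hb) hδ,
    Ioo_mem_nhdsLT (neg_lt_zero.2 hR)] with h hclose hh
  have hr : 0 < R + h := by linarith [hh.1]
  have hgrad : IntegrableOn (gradSq2 v) (endStrips (R + h) R) :=
    (hv.integrableOn_gradSq2_and_le hR).1.mono_set (endStrips_subset_gamR hr (by linarith [hh.2]))
  have hsum : IntegrableOn (fun p => gradSq2 v p + gradSq2 v p.swap) (Ico (R + h) R ×ˢ II) :=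
    (integrableOn_endStrips_iff.1 hgrad).1.add (integrableOn_endStrips_iff.1 hgrad).2
  have hsub : Ico (R + h) R ×ˢ Ioo a b ⊆ Ico (R + h) R ×ˢ II :=
    prod_mono_right (Ioo_subset_Ioo ha.le hb.le)
  have hle := (abs_le.1 hclose).1
  simp only [Prod.swap_prod_mk] at hle
  calc |h| * ((∫ t in Ioo a b, (pd2 v (R, t) ^ 2 + pd1 v (t, R) ^ 2)) - δ)
      ≤ ∫ p in Ico (R + h) R ×ˢ Ioo a b, (pd2 v p ^ 2 + pd1 v p.swap ^ 2) := by linarith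
    _ ≤ ∫ p in Ico (R + h) R ×ˢ Ioo a b, (gradSq2 v p + gradSq2 v p.swap) :=
        integral_mono_of_nonneg (.of_forall fun _ => by positivity) (hsum.mono_set hsub)
          (.of_forall fun p => add_le_add (le_add_of_nonneg_left (sq_nonneg _))
            (le_add_of_nonneg_right (sq_nonneg _)))
    _ ≤ ∫ p in Ico (R + h) R ×ˢ II, (gradSq2 v p + gradSq2 v p.swap) :=
        setIntegral_mono_set hsum
          (.of_forall fun p => add_nonneg (gradSq2_nonneg v p) (gradSq2_nonneg v p.swap))
          (LE.le.eventuallyLE hsub)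
    _ = ∫ p in endStrips (R + h) R, gradSq2 v p := (setIntegral_endStrips hr hgrad).symm

lemma eventually_nhdsLT_lamR_le_add (hv : IsFirstEF R v) (hR : 0 < R) {γ : ℝ} (hγ : 0 < γ) :
    ∀ᶠ h in 𝓝[<] (0 : ℝ), lamR (R + h) ≤ lamR R + γ := by
  have hl := lamR_nonneg R
  filter_upwards [hv.eventually_lamR_add_mul_one_sub_le hR,
    hv.eventually_setIntegral_endStrips_sq_le hR one_pos,
    nhdsWithin_le_nhds (eventually_abs_mul_le ((neumannMass R v + 1) * (lamR R + γ))
      (half_pos hγ))] with h hle hmass hsmall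
  refine le_add_of_mul_one_sub_le hl hγ ?_
    (hle.trans (sub_le_self _ (setIntegral_gradSq2_nonneg v _)))
  calc _ ≤ |h| * (neumannMass R v + 1) * (lamR R + γ) := by gcongr
    _ ≤ γ / 2 := by rwa [mul_assoc]
    _ < γ := half_lt_self hγ

lemma eventually_nhdsLT_lamR_add_mul_le (hv : IsFirstEF R v) (hR : 0 < R) {a b δ : ℝ}
    (ha : -1 < a) (hb : b < 0) (hδ : 0 < δ) : ∀ᶠ h in 𝓝[<] (0 : ℝ),
      lamR (R + h) + |h| * ((∫ t in Ioo a b, (pd2 v (R, t) ^ 2 + pd1 v (t, R) ^ 2)) - δ) ≤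
        lamR R + |h| * ((lamR R + δ) * (neumannMass R v + δ)) := by
  have hl := lamR_nonneg R
  filter_upwards [hv.eventually_lamR_add_mul_one_sub_le hR,
    hv.eventually_setIntegral_endStrips_sq_le hR hδ,
    hv.eventually_le_setIntegral_endStrips_gradSq2 hR ha hb hδ,
    hv.eventually_nhdsLT_lamR_le_add hR hδ] with h hle hmass henergy husc
  have hprod : lamR (R + h) * ∫ p in endStrips (R + h) R, v p ^ 2 ≤
      (lamR R + δ) * (|h| * (neumannMass R v + δ)) :=
    mul_le_mul husc hmass (setIntegral_sq_nonneg v _) (by linarith)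
  linarith

lemma continuousOn_pd2_right (hv : IsFirstEF R v) : ContinuousOn (fun t => pd2 v (R, t)) II :=
  hv.continuousOn_pd2.comp (f := fun t : ℝ => (R, t)) (by fun_prop)
    fun _ ht => .inr (.inl ⟨rfl, ht⟩)

lemma continuousOn_pd1_left (hv : IsFirstEF R v) : ContinuousOn (fun t => pd1 v (t, R)) II :=
  hv.continuousOn_pd1.comp (f := fun t : ℝ => (t, R)) (by fun_prop)
    fun _ ht => .inr (.inr ⟨ht, rfl⟩)

/-- Otherwise shortening the guide would decrease the eigenvalue faster than linearly, contradicting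
`IsFirstEF.eventually_add_mul_sub_le`. -/
lemma integrableOn_pd2_sq_add_pd1_sq (hv : IsFirstEF R v) (hR : 0 < R) :
    IntegrableOn (fun t => pd2 v (R, t) ^ 2 + pd1 v (t, R) ^ 2) II := by
  have hlow := hv.eventually_add_mul_sub_le hR nhdsWithin_le_nhds
    (fun γ hγ => hv.eventually_nhdsLT_lamR_le_add hR hγ) one_pos
  set D := ∫ p in GamR R, firstVariation R v p
  set K := (lamR R + 1) * (neumannMass R v + 1)
  refine integrableOn_Ioo_of_setIntegral_le (C := K + |D| + 2) ?_ (fun t => by positivity)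
    fun η hη => ?_
  · exact (hv.continuousOn_pd2_right.pow 2).add (hv.continuousOn_pd1_left.pow 2)
  obtain ⟨h, hl, hu, hneg : h < 0⟩ := (hlow.and ((hv.eventually_nhdsLT_lamR_add_mul_le hR
    (a := -1 + η) (b := 0 - η) (by linarith) (by linarith) one_pos).and
    self_mem_nhdsWithin)).exists
  have hD : -(h * D) ≤ |h| * |D| := (neg_le_abs _).trans_eq (abs_mul h D)
  have hmul : |h| * (∫ t in Ioo (-1 + η) (0 - η), (pd2 v (R, t) ^ 2 + pd1 v (t, R) ^ 2)) ≤
      |h| * (K + |D| + 2) := by linarith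
  exact le_of_mul_le_mul_left hmul (abs_pos.2 hneg.ne)

lemma integrableOn_pd2_right_sq (hv : IsFirstEF R v) (hR : 0 < R) :
    IntegrableOn (fun t => pd2 v (R, t) ^ 2) II :=
  (hv.integrableOn_pd2_sq_add_pd1_sq hR).mono'
    ((hv.continuousOn_pd2_right.pow 2).aestronglyMeasurable measurableSet_Ioo)
    (.of_forall fun t => by
      rw [Real.norm_of_nonneg (sq_nonneg _)]
      exact le_add_of_nonneg_right (sq_nonneg _))

lemma integrableOn_pd1_left_sq (hv : IsFirstEF R v) (hR : 0 < R) :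
    IntegrableOn (fun t => pd1 v (t, R) ^ 2) II :=
  (hv.integrableOn_pd2_sq_add_pd1_sq hR).mono'
    ((hv.continuousOn_pd1_left.pow 2).aestronglyMeasurable measurableSet_Ioo)
    (.of_forall fun t => by
      rw [Real.norm_of_nonneg (sq_nonneg _)]
      exact le_add_of_nonneg_left (sq_nonneg _))

lemma eventually_nhdsLT_lamR_le (hv : IsFirstEF R v) (hR : 0 < R) {ε : ℝ} (hε : 0 < ε) :
    ∀ᶠ h in 𝓝[<] (0 : ℝ), lamR (R + h) ≤
      lamR R + h * (tangentialEnergy R v - lamR R * neumannMass R v) + ε * |h| := by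
  set M := neumannMass R v
  have hlim : Tendsto (fun δ : ℝ => (lamR R + δ) * (M + δ) + 2 * δ) (𝓝[>] 0)
      (𝓝 (lamR R * M)) :=
    tendsto_nhdsWithin_of_tendsto_nhds (Continuous.tendsto' (by fun_prop) _ _ (by ring))
  obtain ⟨δ, hδε, hδ : 0 < δ⟩ := ((hlim.eventually_le_const
    (lt_add_of_pos_right (lamR R * M) hε)).and self_mem_nhdsWithin).exists
  obtain ⟨η, hT, hη : 0 < η⟩ := (((tendsto_setIntegral_Ioo_add_sub
    (hv.integrableOn_pd2_sq_add_pd1_sq hR)).eventually_const_le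
      (sub_lt_self (tangentialEnergy R v) hδ)).and self_mem_nhdsWithin).exists
  filter_upwards [hv.eventually_nhdsLT_lamR_add_mul_le hR (a := -1 + η) (b := 0 - η)
    (by linarith) (by linarith) hδ, self_mem_nhdsWithin] with h hle hneg
  have habs : |h| = -h := abs_of_neg hneg
  have hgain := mul_le_mul_of_nonneg_left (sub_le_sub_right hT δ) (abs_nonneg h)
  have hloss := mul_le_mul_of_nonneg_left hδε (abs_nonneg h)
  rw [habs] at hle hgain hloss ⊢
  linarith

end IsFirstEF

end ShorterGuides

/-! ### Upper bound for longer guides -/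

lemma hasFDerivAt_comp_of_lipschitzWith {𝕜 E F G : Type*} [NontriviallyNormedField 𝕜]
    [NormedAddCommGroup E] [NormedSpace 𝕜 E] [NormedAddCommGroup F] [NormedSpace 𝕜 F]
    [NormedAddCommGroup G] [NormedSpace 𝕜 G] {f : F → G} {P : E → F} {A : F →L[𝕜] G}
    {B : E →L[𝕜] G} {K : NNReal} {p : E} (hf : HasFDerivAt f A (P p)) (hP : LipschitzWith K P)
    (hA : HasFDerivAt (fun x => A (P x)) B p) : HasFDerivAt (fun x => f (P x)) B p := by
  have hbig : (fun x => P x - P p) =O[𝓝 p] fun x => x - p :=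
    .of_bound K (.of_forall fun x => by
      simpa only [dist_eq_norm] using hP.dist_le_mul x p)
  rw [hasFDerivAt_iff_isLittleO] at hf hA ⊢
  refine (((hf.comp_tendsto hP.continuous.continuousAt).trans_isBigO hbig).add hA).congr_left
    fun x => ?_
  simp only [Function.comp_apply, map_sub]
  abel

lemma hasDerivAt_min_mul {a R c : ℝ} (h : a < R ∨ c = 0) :
    HasDerivAt (fun s => min s R * c) c a := by
  rcases h with h | rfl
  · have heq : (fun s => min s R * c) =ᶠ[𝓝 a] fun s => s * c := by
      filter_upwards [Iio_mem_nhds h] with s hs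
      rw [min_eq_left hs.le]
    exact (hasDerivAt_mul_const c).congr_of_eventuallyEq heq
  · simpa only [mul_zero] using hasDerivAt_const a (0 : ℝ)

section LongerGuides

variable {R S : ℝ} {v : ℝ × ℝ → ℝ} {p : ℝ × ℝ}

/-- The retraction of the guide `Γ` onto its truncation `Γ_R ∪ Σ_R`, constant along the arms beyond
the truncation. Composing with it extends a function on `Γ_R` by constants along the arms. -/
def armProj (R : ℝ) (p : ℝ × ℝ) : ℝ × ℝ := (min p.1 R, min p.2 R)

lemma lipschitzWith_armProj (R : ℝ) : LipschitzWith 1 (armProj R) :=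
  max_self (1 : NNReal) ▸
    (LipschitzWith.prod_fst.min_const R).prodMk (LipschitzWith.prod_snd.min_const R)

lemma continuous_armProj (R : ℝ) : Continuous (armProj R) := (lipschitzWith_armProj R).continuous

lemma isOpen_gam : IsOpen Gam :=
  (isOpen_lt continuous_const (continuous_fst.min continuous_snd)).inter
    (isOpen_lt (continuous_fst.min continuous_snd) continuous_const)

lemma gamR_union_sigSeg_subset_gam (hR : 0 < R) : GamR R ∪ SigSeg R ⊆ Gam := by
  refine union_subset inter_subset_left ?_
  rintro ⟨a, b⟩ h
  rw [mk_mem_sigSeg_iff] at h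
  simp only [Gam, mem_ofPred_eq]
  grind

lemma armProj_mem_gamR_union_sigSeg (hR : 0 < R) (hp : p ∈ Gam) :
    armProj R p ∈ GamR R ∪ SigSeg R := by
  obtain ⟨a, b⟩ := p
  simp only [Gam, mem_ofPred_eq] at hp
  simp only [armProj, gamR_eq_union hR, mem_union, mk_mem_sigSeg_iff, mem_prod, mem_Ioo]
  grind (splits := 40)

lemma armProj_mem_closure_gamR (hR : 0 < R) (hS : R ≤ S) (hp : p ∈ closure (GamR S)) :
    armProj R p ∈ closure (GamR R) := by
  rw [closure_gamR (hR.trans_le hS)] at hp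
  simp only [closure_gamR hR, armProj, mem_union, mem_prod, mem_Icc] at hp ⊢
  grind (splits := 40)

lemma armProj_notMem_of_mem_dirB (hR : 0 < R) (hS : R ≤ S) (hp : p ∈ DirB S) :
    armProj R p ∉ GamR R ∪ SigSeg R := by
  obtain ⟨a, b⟩ := p
  rw [mk_mem_dirB_iff (hR.trans_le hS)] at hp
  simp only [armProj, gamR_eq_union hR, mem_union, mk_mem_sigSeg_iff, mem_prod, mem_Ioo]
  grind (splits := 60)

lemma armProj_eq_self (hR : 0 < R) (hp : p ∈ GamR R) : armProj R p = p := by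
  obtain ⟨h1, h2⟩ := fst_lt_and_snd_lt_of_mem_gamR hR hp
  rw [armProj, min_eq_left h1.le, min_eq_left h2.le]

lemma armProj_of_mem_Ico_prod (hR : 0 < R) (hp : p ∈ Ico R S ×ˢ II) :
    armProj R p = (R, p.2) := by
  rw [armProj, min_eq_right hp.1.1, min_eq_left (hp.2.2.trans hR).le]

lemma armProj_swap_of_mem_Ico_prod (hR : 0 < R) (hp : p ∈ Ico R S ×ˢ II) :
    armProj R p.swap = (p.2, R) := by
  rw [armProj, Prod.fst_swap, Prod.snd_swap, min_eq_right hp.1.1, min_eq_left (hp.2.2.trans hR).le]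

lemma swap_mem_endStrips (hp : p ∈ Ico R S ×ˢ II) : p.swap ∈ endStrips R S :=
  .inr ⟨hp.2, hp.1⟩

lemma integrableOn_gamR_of_endStrips {f : ℝ × ℝ → ℝ} (hR : 0 < R) (h : R ≤ S)
    (hf : IntegrableOn f (GamR R)) (hf' : IntegrableOn f (endStrips R S)) :
    IntegrableOn f (GamR S) :=
  gamR_eq_union_endStrips hR h ▸ hf.union hf'

namespace IsFirstEF

lemma fst_lt_or_pd1_armProj_eq_zero (hv : IsFirstEF R v) (hR : 0 < R) (hp : p ∈ Gam) :
    p.1 < R ∨ pd1 v (armProj R p) = 0 := by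
  refine or_iff_not_imp_left.2 fun h => ?_
  have hp2 : p.2 ∈ II := by
    simp only [Gam, mem_ofPred_eq, II, mem_Ioo] at hp ⊢
    grind
  rw [armProj_of_mem_Ico_prod (S := p.1 + 1) hR ⟨⟨not_lt.1 h, lt_add_one _⟩, hp2⟩]
  exact hv.pd1_eq_zero _ hp2

lemma snd_lt_or_pd2_armProj_eq_zero (hv : IsFirstEF R v) (hR : 0 < R) (hp : p ∈ Gam) :
    p.2 < R ∨ pd2 v (armProj R p) = 0 := by
  refine or_iff_not_imp_left.2 fun h => ?_
  have hp1 : p.1 ∈ II := by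
    simp only [Gam, mem_ofPred_eq, II, mem_Ioo] at hp ⊢
    grind
  rw [← p.swap_swap, armProj_swap_of_mem_Ico_prod (S := p.2 + 1) hR
    ⟨⟨not_lt.1 h, lt_add_one _⟩, hp1⟩]
  exact hv.pd2_eq_zero _ hp1

/-- The Neumann condition makes the extension by constants differentiable across `Σ_R`. -/
lemma hasFDerivAt_comp_armProj (hv : IsFirstEF R v) (hR : 0 < R) (hp : p ∈ Gam) :
    HasFDerivAt (fun x => v (armProj R x)) (fderiv ℝ v (armProj R p)) p := by
  set A := fderiv ℝ v (armProj R p)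
  have hA (x : ℝ × ℝ) : A x = x.1 * A (1, 0) + x.2 * A (0, 1) := by
    rw [← smul_eq_mul, ← smul_eq_mul, ← map_smul, ← map_smul, ← map_add]
    simp
  refine hasFDerivAt_comp_of_lipschitzWith
    (hv.differentiableAt (armProj_mem_gamR_union_sigSeg hR hp)).hasFDerivAt
    (lipschitzWith_armProj R) ?_
  have h1 := (hasDerivAt_min_mul (hv.fst_lt_or_pd1_armProj_eq_zero hR hp)).comp_hasFDerivAt p
    (hasFDerivAt_fst (𝕜 := ℝ) (E := ℝ) (F := ℝ))
  have h2 := (hasDerivAt_min_mul (hv.snd_lt_or_pd2_armProj_eq_zero hR hp)).comp_hasFDerivAt p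
    (hasFDerivAt_snd (𝕜 := ℝ) (E := ℝ) (F := ℝ))
  refine ((h1.add h2).congr_of_eventuallyEq (.of_forall fun x => hA (armProj R x))).congr_fderiv
    (ContinuousLinearMap.ext fun x => ?_)
  rw [hA x, mul_comm x.1, mul_comm x.2]
  rfl

lemma contDiffAt_comp_armProj (hv : IsFirstEF R v) (hR : 0 < R) (hp : p ∈ Gam) :
    ContDiffAt ℝ 1 (fun x => v (armProj R x)) p := by
  refine contDiffAt_one_iff.2 ⟨fun x => fderiv ℝ v (armProj R x), Gam, isOpen_gam.mem_nhds hp,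
    fun x hx => ?_, fun x hx => hv.hasFDerivAt_comp_armProj hR hx⟩
  have hcont := (hv.contDiffAt_one (armProj_mem_gamR_union_sigSeg hR hx)).continuousAt_fderiv
    one_ne_zero
  exact (hcont.comp (continuous_armProj R).continuousAt).continuousWithinAt

lemma gradSq2_comp_armProj (hv : IsFirstEF R v) (hR : 0 < R) (hp : p ∈ Gam) :
    gradSq2 (fun x => v (armProj R x)) p = gradSq2 v (armProj R p) := by
  rw [gradSq2, (hv.hasFDerivAt_comp_armProj hR hp).fderiv, gradSq2]

lemma continuousOn_comp_armProj (hv : IsFirstEF R v) (hR : 0 < R) (hS : R ≤ S) :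
    ContinuousOn (fun x => v (armProj R x)) (closure (GamR S)) :=
  hv.continuousOn.comp (continuous_armProj R).continuousOn
    fun _ hp => armProj_mem_closure_gamR hR hS hp

lemma comp_armProj_eq_zero (hv : IsFirstEF R v) (hR : 0 < R) (hS : R ≤ S) (hp : p ∈ DirB S) :
    v (armProj R p) = 0 :=
  eq_zero_of_mem_closure_gamR hR hv.continuousOn hv.eq_zero
    (armProj_mem_closure_gamR hR hS (dirB_subset_closure_gamR hp))
    (armProj_notMem_of_mem_dirB hR hS hp)

lemma integrableOn_right_sq (hv : IsFirstEF R v) (hR : 0 < R) :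
    IntegrableOn (fun t => v (R, t) ^ 2) II := by
  have hcont : ContinuousOn (fun t => v (R, t)) (Icc (-1) 0) :=
    hv.continuousOn.comp (f := fun t : ℝ => (R, t)) (by fun_prop) fun t ht => by
      rw [closure_gamR hR]
      exact .inr ⟨⟨by linarith, le_rfl⟩, ht⟩
  exact (hcont.pow 2).integrableOn_Icc.mono_set Ioo_subset_Icc_self

lemma integrableOn_left_sq (hv : IsFirstEF R v) (hR : 0 < R) :
    IntegrableOn (fun t => v (t, R) ^ 2) II := by
  have hcont : ContinuousOn (fun t => v (t, R)) (Icc (-1) 0) :=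
    hv.continuousOn.comp (f := fun t : ℝ => (t, R)) (by fun_prop) fun t ht => by
      rw [closure_gamR hR]
      exact .inl ⟨ht, ⟨by linarith, le_rfl⟩⟩
  exact (hcont.pow 2).integrableOn_Icc.mono_set Ioo_subset_Icc_self

lemma setIntegral_comp_armProj_sq (hv : IsFirstEF R v) (hR : 0 < R) (hS : R ≤ S) :
    ∫ p in GamR S, v (armProj R p) ^ 2 = 1 + (S - R) * neumannMass R v := by
  have hstrips := (setIntegral_endStrips_of_eqOn (f := fun p => v (armProj R p) ^ 2) hR hS
    (fun p hp => by rw [armProj_of_mem_Ico_prod hR hp])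
    (fun p hp => by rw [armProj_swap_of_mem_Ico_prod hR hp])
    (hv.integrableOn_right_sq hR) (hv.integrableOn_left_sq hR)).2
  have hi : IntegrableOn (fun p => v (armProj R p) ^ 2) (GamR S) :=
    integrableOn_gamR_of_continuousOn (hR.trans_le hS) ((hv.continuousOn_comp_armProj hR hS).pow 2)
  rw [setIntegral_gamR_eq_add_endStrips hR hS hi, hstrips, ← hv.setIntegral_sq, neumannMass]
  congr 1
  exact setIntegral_congr_fun (measurableSet_gamR hR) fun p hp => by
    rw [armProj_eq_self hR hp]

lemma integrableOn_gradSq2_comp_armProj_and_le (hv : IsFirstEF R v) (hR : 0 < R) (hS : R ≤ S) :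
    IntegrableOn (gradSq2 fun p => v (armProj R p)) (GamR S) ∧
      ∫ p in GamR S, gradSq2 (fun p => v (armProj R p)) p ≤
        lamR R + (S - R) * tangentialEnergy R v := by
  obtain ⟨hi, henergy⟩ := hv.integrableOn_gradSq2_and_le hR
  have hgam : endStrips R S ⊆ Gam := (endStrips_subset_gamR hR hS).trans inter_subset_left
  have heq : EqOn (gradSq2 fun p => v (armProj R p)) (gradSq2 v) (GamR R) := fun p hp => by
    rw [hv.gradSq2_comp_armProj hR hp.1, armProj_eq_self hR hp]
  obtain ⟨hstrips, hstrips_eq⟩ :=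
    setIntegral_endStrips_of_eqOn (f := gradSq2 fun p => v (armProj R p)) hR hS
      (fun p hp => by
        rw [hv.gradSq2_comp_armProj hR (hgam (.inl hp)), armProj_of_mem_Ico_prod hR hp,
          gradSq2_eq_add, hv.pd1_eq_zero _ hp.2, zero_pow two_ne_zero, zero_add])
      (fun p hp => by
        rw [hv.gradSq2_comp_armProj hR (hgam (swap_mem_endStrips hp)),
          armProj_swap_of_mem_Ico_prod hR hp, gradSq2_eq_add, hv.pd2_eq_zero _ hp.2,
          zero_pow two_ne_zero, add_zero])
      (hv.integrableOn_pd2_right_sq hR) (hv.integrableOn_pd1_left_sq hR)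
  have hS_int := integrableOn_gamR_of_endStrips hR hS
    (hi.congr_fun heq.symm (measurableSet_gamR hR)) hstrips
  refine ⟨hS_int, ?_⟩
  rw [setIntegral_gamR_eq_add_endStrips hR hS hS_int,
    setIntegral_congr_fun (measurableSet_gamR hR) heq, hstrips_eq]
  exact add_le_add_left henergy _

lemma lamR_mul_one_add_le (hv : IsFirstEF R v) (hR : 0 < R) (hS : R ≤ S) :
    lamR S * (1 + (S - R) * neumannMass R v) ≤ lamR R + (S - R) * tangentialEnergy R v := by
  have hS0 := hR.trans_le hS
  obtain ⟨hi, hle⟩ := hv.integrableOn_gradSq2_comp_armProj_and_le hR hS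
  rw [← hv.setIntegral_comp_armProj_sq hR hS]
  exact (lamR_mul_le_of_contDiffAt hS0
    (fun p hp => hv.contDiffAt_comp_armProj hR (gamR_union_sigSeg_subset_gam hS0 hp))
    (hv.continuousOn_comp_armProj hR hS) (fun p hp => hv.comp_armProj_eq_zero hR hS hp) hi).trans
    hle

lemma eventually_nhdsGT_lamR_le (hv : IsFirstEF R v) (hR : 0 < R) {ε : ℝ} (hε : 0 < ε) :
    ∀ᶠ h in 𝓝[>] (0 : ℝ), lamR (R + h) ≤
      lamR R + h * (tangentialEnergy R v - lamR R * neumannMass R v) + ε * |h| := by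
  have hM := neumannMass_nonneg R v
  set E := tangentialEnergy R v - lamR R * neumannMass R v with hE
  filter_upwards [nhdsWithin_le_nhds (eventually_abs_mul_le (-(neumannMass R v * (E + ε))) hε),
    self_mem_nhdsWithin] with h hsmall (hpos : 0 < h)
  have hle := hv.lamR_mul_one_add_le hR (le_add_of_nonneg_right hpos.le : R ≤ R + h)
  rw [abs_of_pos hpos] at hsmall ⊢
  rw [add_sub_cancel_left] at hle
  refine le_of_mul_le_mul_right (hle.trans ?_) (by positivity : 0 < 1 + h * neumannMass R v)
  have hT : tangentialEnergy R v = E + lamR R * neumannMass R v := by rw [hE, sub_add_cancel]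
  rw [hT]
  linarith [mul_le_mul_of_nonneg_left hsmall hpos.le]

end IsFirstEF

end LongerGuides

/-! ### The derivative -/

lemma le_of_eventually_le {l : Filter ℝ} [l.NeBot] {a b : ℝ} {s : ℝ → ℝ}
    (hl : ∀ᶠ h in l, 0 < s h)
    (hab : ∀ ε, 0 < ε → ∀ᶠ h in l, s h * a - ε * s h ≤ s h * b + ε * s h) : a ≤ b := by
  refine le_of_forall_pos_le_add fun ε hε => ?_
  obtain ⟨h, hle, hpos⟩ := ((hab (ε / 2) (half_pos hε)).and hl).exists
  exact le_of_mul_le_mul_left (by linarith) hpos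

section OneSided

variable {f : ℝ → ℝ} {x D E : ℝ}

/-- The bounds for `h > 0` give `D ≤ E`, those for `h < 0` give `E ≤ D`. -/
lemma eq_of_eventually_le_of_eventually_le
    (hlow : ∀ ε, 0 < ε → ∀ᶠ h in 𝓝 0, f x + h * D - ε * |h| ≤ f (x + h))
    (hupp : ∀ ε, 0 < ε → ∀ᶠ h in 𝓝 0, f (x + h) ≤ f x + h * E + ε * |h|) : D = E := by
  have hsq (ε : ℝ) (hε : 0 < ε) : ∀ᶠ h in 𝓝 (0 : ℝ), h * D - ε * |h| ≤ h * E + ε * |h| := by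
    filter_upwards [hlow ε hε, hupp ε hε] with h h1 h2
    linarith
  refine le_antisymm (le_of_eventually_le (l := 𝓝[>] 0) (s := id) self_mem_nhdsWithin
    fun ε hε => ?_) (le_of_eventually_le (l := 𝓝[<] 0) (s := Neg.neg)
      (eventually_nhdsWithin_of_forall fun h hh => neg_pos.2 hh) fun ε hε => ?_)
  · filter_upwards [nhdsWithin_le_nhds (hsq ε hε), self_mem_nhdsWithin] with h hh hpos
    rwa [abs_of_pos hpos] at hh
  · filter_upwards [nhdsWithin_le_nhds (hsq ε hε), self_mem_nhdsWithin] with h hh hneg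
    rw [abs_of_neg hneg] at hh
    linarith

lemma hasDerivAt_of_eventually_le_of_eventually_le
    (hlow : ∀ ε, 0 < ε → ∀ᶠ h in 𝓝 0, f x + h * D - ε * |h| ≤ f (x + h))
    (hupp : ∀ ε, 0 < ε → ∀ᶠ h in 𝓝 0, f (x + h) ≤ f x + h * E + ε * |h|) : HasDerivAt f E x := by
  obtain rfl := eq_of_eventually_le_of_eventually_le hlow hupp
  rw [hasDerivAt_iff_isLittleO_nhds_zero, Asymptotics.isLittleO_iff]
  intro ε hε
  filter_upwards [hlow ε hε, hupp ε hε] with h h1 h2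
  rw [Real.norm_eq_abs, Real.norm_eq_abs, smul_eq_mul, abs_le]
  constructor <;> linarith

end OneSided

namespace IsFirstEF

variable {R : ℝ} {v : ℝ × ℝ → ℝ}

lemma eventually_lamR_le (hv : IsFirstEF R v) (hR : 0 < R) {ε : ℝ} (hε : 0 < ε) :
    ∀ᶠ h in 𝓝 (0 : ℝ), lamR (R + h) ≤
      lamR R + h * (tangentialEnergy R v - lamR R * neumannMass R v) + ε * |h| := by
  rw [← nhdsNE_sup_pure, ← nhdsLT_sup_nhdsGT, eventually_sup, eventually_sup]
  refine ⟨⟨hv.eventually_nhdsLT_lamR_le hR hε, hv.eventually_nhdsGT_lamR_le hR hε⟩, ?_⟩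
  simp

lemma eventually_lamR_le_add (hv : IsFirstEF R v) (hR : 0 < R) {γ : ℝ} (hγ : 0 < γ) :
    ∀ᶠ h in 𝓝 (0 : ℝ), lamR (R + h) ≤ lamR R + γ := by
  set E := tangentialEnergy R v - lamR R * neumannMass R v
  filter_upwards [hv.eventually_lamR_le hR one_pos, eventually_abs_mul_le (|E| + 1) hγ]
    with h hle hsmall
  have hE : h * E ≤ |h| * |E| := (le_abs_self _).trans_eq (abs_mul h E)
  linarith

lemma setIntegral_add_setIntegral_eq (hv : IsFirstEF R v) (hR : 0 < R) :
    (∫ t in II, (pd2 v (R, t) ^ 2 - lamR R * v (R, t) ^ 2)) +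
      ∫ t in II, (pd1 v (t, R) ^ 2 - lamR R * v (t, R) ^ 2) =
    tangentialEnergy R v - lamR R * neumannMass R v := by
  have hT₁ := hv.integrableOn_pd2_right_sq hR
  have hT₂ := hv.integrableOn_pd1_left_sq hR
  have hM₁ := hv.integrableOn_right_sq hR
  have hM₂ := hv.integrableOn_left_sq hR
  rw [tangentialEnergy, neumannMass, integral_sub hT₁ (hM₁.const_mul _),
    integral_sub hT₂ (hM₂.const_mul _), integral_const_mul, integral_const_mul,
    integral_add hT₁ hT₂, integral_add hM₁ hM₂]
  ring

end IsFirstEF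

/-- Proposition 2.6, Dauge–Helffer type formula: for every `R > 0`,
`R ↦ λ₁(Γ_R)` is differentiable at `R` with derivative
`∂_R λ_R = ∫_{Σ_R} (|∂_τ v_R|² − λ_R |v_R|²) dτ`, where `v_R` is the positive
normalized first eigenfunction on `Γ_R` and the tangential derivative is `∂₂` on
`Σ_R¹ = {R}×I` and `∂₁` on `Σ_R² = I×{R}`. -/
theorem lamR_hasDerivAt :
    ∀ R : ℝ, 0 < R → ∀ v : ℝ × ℝ → ℝ, IsFirstEF R v →
      HasDerivAt lamR
        ((∫ t in II, ((pd2 v (R, t)) ^ 2 - lamR R * (v (R, t)) ^ 2)) +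
          ∫ t in II, ((pd1 v (t, R)) ^ 2 - lamR R * (v (t, R)) ^ 2)) R := by
  intro R hR v hv
  rw [hv.setIntegral_add_setIntegral_eq hR]
  have hlower (ε : ℝ) (hε : 0 < ε) : ∀ᶠ h in 𝓝 0,
      lamR R + h * (∫ p in GamR R, firstVariation R v p) - ε * |h| ≤ lamR (R + h) :=
    hv.eventually_add_mul_sub_le hR le_rfl (fun γ hγ => hv.eventually_lamR_le_add hR hγ) hε
  exact hasDerivAt_of_eventually_le_of_eventually_le hlower
    fun ε hε => hv.eventually_lamR_le hR hε
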